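/- arXiv:2209.05742 — 15 statements merged into one kernel-verified Lean document; each statement's English description precedes it below -/
import Mathlib

section
/- Every continuous game possesses a mixed strategy Nash equilibrium: there exists a mixed strategy profile σ = (σ_p)_{p∈P} such that for every player p and every pure strategy s_p ∈ S_p, U_p(δ_{s_p}, σ_{−p}) ≤ U_p(σ), where (δ_{s_p}, σ_{−p}) is the profile obtained from σ by replacing σ_p with the Dirac measure at s_p. -/
open MeasureTheory

def ScDom {X I α : Type*} [LinearOrder α] (ρ : I → X → α) (B : Finset X) : Prop :=
  ∀ y, ∃ i, ∀ b ∈ B, ρ i y ≤ ρ i b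

lemma sc_room {X I : Type*} [DecidableEq X] [Fintype I] [DecidableEq I]
    (B : Finset X) (hB : B.card = Fintype.card I) (c : X → I) (i₀ : I)
    (hc : B.image c ≠ Finset.univ) :
    Even ((B.filter fun b => (B.erase b).image c = Finset.univ.erase i₀).card) := by
  classical
  by_cases hne : ∃ b₀ ∈ B, (B.erase b₀).image c = Finset.univ.erase i₀
  swap
  · have : (B.filter fun b => (B.erase b).image c = Finset.univ.erase i₀) = ∅ := by
      apply Finset.filter_eq_empty_iff.2
      intro b hb h
      exact hne ⟨b, hb, h⟩
    simp [this]
  obtain ⟨b₀, hb₀, h₀⟩ := hne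
  have hinj : Set.InjOn c (B.erase b₀) := by
    apply Finset.card_image_iff.1
    rw [h₀, Finset.card_erase_of_mem hb₀, Finset.card_erase_of_mem (Finset.mem_univ _), hB,
      Finset.card_univ]
  have hcb : c b₀ ≠ i₀ := by
    intro h
    apply hc
    rw [← Finset.insert_erase hb₀, Finset.image_insert, h₀, h,
      Finset.insert_erase (Finset.mem_univ _)]
  have h1 : c b₀ ∈ (B.erase b₀).image c := by
    rw [h₀]; simp [hcb]
  obtain ⟨b₁, hb₁, h1⟩ := Finset.mem_image.1 h1
  have hb₁' := Finset.mem_erase.1 hb₁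
  have key : (B.filter fun b => (B.erase b).image c = Finset.univ.erase i₀) = {b₀, b₁} := by
    ext b
    simp only [Finset.mem_filter, Finset.mem_insert, Finset.mem_singleton]
    constructor
    · rintro ⟨hb, h⟩
      by_contra! hcon
      have hbe : b ∈ B.erase b₀ := Finset.mem_erase.2 ⟨hcon.1, hb⟩
      have : c b ∈ (B.erase b).image c := by
        rw [h, ← h₀]; exact Finset.mem_image_of_mem _ hbe
      obtain ⟨b', hb', hcb'⟩ := Finset.mem_image.1 this
      have hb'' := Finset.mem_erase.1 hb'
      by_cases hb0 : b' = b₀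
      · subst hb0
        exact hcon.2 (hinj hbe hb₁ (by rw [h1, hcb']))
      · exact hb''.1 (hinj (Finset.mem_coe.2 (Finset.mem_erase.2 ⟨hb0, hb''.2⟩)) hbe hcb')
    · rintro (rfl | rfl)
      · exact ⟨hb₀, h₀⟩
      · refine ⟨hb₁'.2, ?_⟩
        rw [← h₀]
        ext i
        simp only [Finset.mem_image, Finset.mem_erase]
        constructor
        · rintro ⟨a, ⟨ha, haB⟩, rfl⟩
          by_cases h : a = b₀
          · subst h; exact ⟨b, ⟨hb₁'.1, hb₁'.2⟩, h1⟩
          · exact ⟨a, ⟨h, haB⟩, rfl⟩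
        · rintro ⟨a, ⟨ha, haB⟩, rfl⟩
          by_cases h : a = b
          · subst h; exact ⟨b₀, ⟨fun h => ha h.symm, hb₀⟩, h1.symm⟩
          · exact ⟨a, ⟨h, haB⟩, rfl⟩
  rw [key, Finset.card_pair (Ne.symm hb₁'.1)]
  exact even_two

lemma sc_door {X I α : Type*} [Fintype X] [DecidableEq X] [Fintype I] [DecidableEq I]
    [LinearOrder α] (ρ : I → X → α) (hρ : ∀ i, Function.Injective (ρ i))
    (D : Finset X) (hD : D.card + 1 = Fintype.card I) (hDn : D.Nonempty)
    (hM : ∀ i, ∃ y, ∀ l, l ≠ i → ∃ b ∈ D, ρ l b < ρ l y)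
    [DecidablePred fun z => z ∉ D ∧ ScDom ρ (insert z D)] :
    Even ((Finset.univ.filter fun z => z ∉ D ∧ ScDom ρ (insert z D)).card) := by
  classical
  by_cases hdom : ScDom ρ D
  swap
  · have : (Finset.univ.filter fun z => z ∉ D ∧ ScDom ρ (insert z D)) = ∅ := by
      apply Finset.filter_eq_empty_iff.2
      rintro z - ⟨_, h⟩
      apply hdom
      intro y
      obtain ⟨i, hi⟩ := h y
      exact ⟨i, fun b hb => hi b (Finset.mem_insert_of_mem hb)⟩
    simp [this]
  have hm : ∀ i, ∃ m ∈ D, ∀ b ∈ D, ρ i m ≤ ρ i b := fun i => D.exists_min_image (ρ i) hDn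
  choose m hmD hmin using hm
  have hdom' : ∀ y, ∃ i, ρ i y ≤ ρ i (m i) := by
    intro y
    obtain ⟨i, hi⟩ := hdom y
    exact ⟨i, hi _ (hmD i)⟩
  have hsurj : ∀ d ∈ D, ∃ i, m i = d := by
    intro d hd
    obtain ⟨i, hi⟩ := hdom' d
    exact ⟨i, hρ i (le_antisymm (hmin i d hd) hi)⟩
  have hpair : ∃ i j, i ≠ j ∧ m i = m j := by
    obtain ⟨i, -, j, -, hij, h⟩ := Finset.exists_ne_map_eq_of_card_lt_of_maps_to
      (s := (Finset.univ : Finset I)) (t := D) (by rw [Finset.card_univ]; omega)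
      (f := m) (fun i _ => hmD i)
    exact ⟨i, j, hij, h⟩
  obtain ⟨i, j, hij, hmij⟩ := hpair
  let M : I → X → Prop := fun k z => ∀ l, l ≠ k → ρ l (m l) < ρ l z
  let Z : I → X → Prop := fun k z => M k z ∧ ∀ y, M k y → ρ k y ≤ ρ k z
  have hZex : ∀ k, ∃ z, Z k z := by
    intro k
    obtain ⟨y, hy⟩ := hM k
    have hne : (Finset.univ.filter (M k)).Nonempty := by
      refine ⟨y, Finset.mem_filter.2 ⟨Finset.mem_univ _, fun l hl => ?_⟩⟩
      obtain ⟨b, hb, hlt⟩ := hy l hl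
      exact lt_of_le_of_lt (hmin l b hb) hlt
    obtain ⟨z, hz, hmax⟩ := Finset.exists_max_image _ (ρ k) hne
    exact ⟨z, (Finset.mem_filter.1 hz).2,
      fun y hy => hmax y (Finset.mem_filter.2 ⟨Finset.mem_univ _, hy⟩)⟩
  have hZun : ∀ k z z', Z k z → Z k z' → z = z' := fun k z z' h h' =>
    hρ k (le_antisymm (h'.2 z h.1) (h.2 z' h'.1))
  have hMle : ∀ k z, M k z → ρ k z ≤ ρ k (m k) := by
    intro k z hz
    obtain ⟨l, hl⟩ := hdom' z
    by_cases h : l = k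
    · subst h; exact hl
    · exact absurd hl (not_le.2 (hz l h))
  have hback : ∀ k k', k ≠ k' → m k = m k' → ∀ z, Z k z → z ∉ D ∧ ScDom ρ (insert z D) := by
    intro k k' hkk hmk z hz
    constructor
    · intro hzD
      obtain ⟨l, hl⟩ := hsurj z hzD
      by_cases h : l = k
      · subst h
        have := hz.1 k' (Ne.symm hkk)
        rw [← hmk, hl] at this
        exact lt_irrefl _ this
      · have := hz.1 l h
        rw [hl] at this
        exact lt_irrefl _ this
    · intro y
      by_cases hy : M k y
      · refine ⟨k, fun b hb => ?_⟩
        rcases Finset.mem_insert.1 hb with rfl | hb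
        · exact hz.2 y hy
        · exact (hMle k y hy).trans (hmin k b hb)
      · simp only [M, not_forall, not_lt] at hy
        obtain ⟨l, hl, hle⟩ := hy
        refine ⟨l, fun b hb => ?_⟩
        rcases Finset.mem_insert.1 hb with rfl | hb
        · exact hle.trans (hz.1 l hl).le
        · exact hle.trans (hmin l b hb)
  obtain ⟨zi, hzi⟩ := hZex i
  obtain ⟨zj, hzj⟩ := hZex j
  have hne : zi ≠ zj := by
    rintro rfl
    obtain ⟨l, hl⟩ := hdom' zi
    by_cases h : l = i
    · exact absurd hl (not_le.2 (hzj.1 l (h ▸ hij)))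
    · exact absurd hl (not_le.2 (hzi.1 l h))
  have key : (Finset.univ.filter fun z => z ∉ D ∧ ScDom ρ (insert z D)) = {zi, zj} := by
    ext z
    simp only [Finset.mem_filter, Finset.mem_univ, true_and, Finset.mem_insert,
      Finset.mem_singleton]
    constructor
    swap
    · rintro (rfl | rfl)
      · exact hback i j hij hmij _ hzi
      · exact hback j i hij.symm hmij.symm _ hzj
    rintro ⟨hzD, hB⟩
    choose κ hκ using hB
    have hκinj : Set.InjOn κ (insert z D : Finset X) := by
      intro a ha b hb hab
      have h1 := hκ a b hb
      have h2 := hκ b a ha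
      rw [← hab] at h2
      exact hρ _ (le_antisymm h1 h2)
    have himg : (insert z D).image κ = Finset.univ := by
      apply Finset.eq_univ_of_card
      rw [Finset.card_image_iff.2 hκinj, Finset.card_insert_of_notMem hzD, hD]
    have hl : ∀ l, l ≠ κ z → m l ∈ D ∧ κ (m l) = l ∧ ρ l (m l) < ρ l z := by
      intro l hl
      have : l ∈ (insert z D).image κ := by rw [himg]; exact Finset.mem_univ _
      obtain ⟨b, hb, rfl⟩ := Finset.mem_image.1 this
      have hbz : b ≠ z := by rintro rfl; exact hl rfl
      have hbD : b ∈ D := (Finset.mem_insert.1 hb).resolve_left hbz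
      have hbm : m (κ b) = b := hρ (κ b) (le_antisymm (hmin _ b hbD)
        (hκ b _ (Finset.mem_insert_of_mem (hmD _))))
      refine ⟨hmD _, by rw [hbm], ?_⟩
      rw [hbm]
      exact lt_of_le_of_ne (hκ b z (Finset.mem_insert_self _ _)) fun h => hbz (hρ _ h)
    have hZz : Z (κ z) z := by
      refine ⟨fun l h => (hl l h).2.2, fun y hy => ?_⟩
      by_cases h : κ y = κ z
      · have := hκ y z (Finset.mem_insert_self _ _)
        rwa [h] at this
      · exact absurd (hκ y (m (κ y)) (Finset.mem_insert_of_mem (hmD _))) (not_le.2 (hy _ h))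
    by_cases h1 : i = κ z
    · left; rw [← h1] at hZz; exact hZun i _ _ hZz hzi
    by_cases h2 : j = κ z
    · right; rw [← h2] at hZz; exact hZun j _ _ hZz hzj
    exfalso
    apply hij
    rw [← (hl i h1).2.1, ← (hl j h2).2.1, hmij]
  rw [key, Finset.card_pair hne]
  exact even_two

lemma sc_count {X I α : Type*} [Fintype X] [DecidableEq X] [Fintype I] [DecidableEq I]
    [LinearOrder α] (ρ : I → X → α) (hρ : ∀ i, Function.Injective (ρ i)) (c : X → I) (i₀ : I)
    (D₀ : Finset X) (hD₀ : D₀.card + 1 = Fintype.card I)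
    (hD₀c : D₀.image c = Finset.univ.erase i₀)
    (hD₀1 : ∃! z, z ∉ D₀ ∧ ScDom ρ (insert z D₀))
    (hother : ∀ D : Finset X, D.card + 1 = Fintype.card I → D.image c = Finset.univ.erase i₀ →
      D ≠ D₀ → D.Nonempty ∧ ∀ i, ∃ y, ∀ l, l ≠ i → ∃ b ∈ D, ρ l b < ρ l y) :
    ∃ B : Finset X, B.card = Fintype.card I ∧ ScDom ρ B ∧ B.image c = Finset.univ := by
  classical
  by_contra! hcon
  let Ds : Finset (Finset X) := Finset.univ.filter fun D =>
    D.card + 1 = Fintype.card I ∧ D.image c = Finset.univ.erase i₀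
  let Bs : Finset (Finset X) := Finset.univ.filter fun B =>
    B.card = Fintype.card I ∧ ScDom ρ B
  let Q1 := Ds.sigma fun D => Finset.univ.filter fun z => z ∉ D ∧ ScDom ρ (insert z D)
  let Q2 := Bs.sigma fun B => B.filter fun b => (B.erase b).image c = Finset.univ.erase i₀
  have h12 : Q1.card = Q2.card := by
    apply Finset.card_nbij' (fun p => ⟨insert p.2 p.1, p.2⟩) (fun p => ⟨p.1.erase p.2, p.2⟩)
    · rintro ⟨D, z⟩ h
      simp only [Q1, Q2, Ds, Bs, Finset.coe_sigma, Set.mem_sigma_iff, Finset.mem_coe,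
        Finset.mem_filter, Finset.mem_univ, true_and] at h ⊢
      obtain ⟨⟨h1, h2⟩, h3, h4⟩ := h
      refine ⟨⟨by rw [Finset.card_insert_of_notMem h3, h1], h4⟩, Finset.mem_insert_self _ _, ?_⟩
      rw [Finset.erase_insert h3, h2]
    · rintro ⟨B, b⟩ h
      simp only [Q1, Q2, Ds, Bs, Finset.coe_sigma, Set.mem_sigma_iff, Finset.mem_coe,
        Finset.mem_filter, Finset.mem_univ, true_and] at h ⊢
      obtain ⟨⟨h1, h2⟩, h3, h4⟩ := h
      refine ⟨⟨by rw [Finset.card_erase_add_one h3, h1], h4⟩, Finset.notMem_erase _ _, ?_⟩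
      rw [Finset.insert_erase h3]
      exact h2
    · rintro ⟨D, z⟩ h
      simp only [Q1, Ds, Finset.coe_sigma, Set.mem_sigma_iff, Finset.mem_coe,
        Finset.mem_filter, Finset.mem_univ, true_and] at h
      simp [Finset.erase_insert h.2.1]
    · rintro ⟨B, b⟩ h
      simp only [Q2, Bs, Finset.coe_sigma, Set.mem_sigma_iff, Finset.mem_coe,
        Finset.mem_filter, Finset.mem_univ, true_and] at h
      simp [Finset.insert_erase h.2.1]
  have h2 : Even Q2.card := by
    rw [Finset.card_sigma]
    apply Finset.even_sum
    intro B hB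
    have hB := (Finset.mem_filter.1 hB).2
    exact sc_room B hB.1 c i₀ (hcon B hB.1 hB.2)
  have h1 : ¬ Even Q1.card := by
    have hmem : D₀ ∈ Ds := Finset.mem_filter.2 ⟨Finset.mem_univ _, hD₀, hD₀c⟩
    rw [Finset.card_sigma, ← Finset.add_sum_erase _ _ hmem, Nat.even_add]
    have hev : Even (∑ D ∈ Ds.erase D₀,
        (Finset.univ.filter fun z => z ∉ D ∧ ScDom ρ (insert z D)).card) := by
      apply Finset.even_sum
      intro D hD
      obtain ⟨hne, hD⟩ := Finset.mem_erase.1 hD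
      have hD := (Finset.mem_filter.1 hD).2
      obtain ⟨ha, hb⟩ := hother D hD.1 hD.2 hne
      exact sc_door ρ hρ D hD.1 ha hb
    have hone : (Finset.univ.filter fun z => z ∉ D₀ ∧ ScDom ρ (insert z D₀)).card = 1 := by
      obtain ⟨z, hz, hu⟩ := hD₀1
      rw [Finset.card_eq_one]
      refine ⟨z, ?_⟩
      ext y
      simp only [Finset.mem_filter, Finset.mem_univ, true_and, Finset.mem_singleton]
      exact ⟨fun h => hu y h, fun h => h ▸ hz⟩
    rw [hone]
    intro h
    exact absurd (h.2 hev) (by decide)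
  exact h1 (h12 ▸ h2)

lemma sc_scarf {T I : Type*} [Fintype T] [Nonempty T] [Fintype I] [Nonempty I]
    (w : I → T → ℕ) (c : T → I) :
    ∃ (C : Finset I) (x : I → T), (∀ i ∈ C, c (x i) = i) ∧
      ∀ y, ∃ i ∈ C, ∀ j ∈ C, w i y ≤ w i (x j) := by
  classical
  let eT : T → ℕ := fun t => (Fintype.equivFin T t : ℕ)
  have heT : Function.Injective eT := fun a b h =>
    (Fintype.equivFin T).injective (Fin.ext h)
  let eI : I → ℕ := fun t => (Fintype.equivFin I t : ℕ)
  have heI : Function.Injective eI := fun a b h =>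
    (Fintype.equivFin I).injective (Fin.ext h)
  let ρ : I → T ⊕ I → ℕ ×ₗ (ℕ ×ₗ ℕ) := fun i x => Sum.elim
    (fun t => toLex (1, toLex (w i t, eT t)))
    (fun j => toLex (if j = i then 0 else 2, toLex (eI j, 0))) x
  have ρl : ∀ i t, ρ i (Sum.inl t) = toLex (1, toLex (w i t, eT t)) := fun _ _ => rfl
  have ρr : ∀ i j, ρ i (Sum.inr j) = toLex (if j = i then 0 else 2, toLex (eI j, 0)) :=
    fun _ _ => rfl
  have hlr : ∀ i t, ρ i (Sum.inr i) < ρ i (Sum.inl t) := by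
    intro i t; rw [ρl, ρr, Prod.Lex.toLex_lt_toLex]; left; simp
  have hrl : ∀ i j t, j ≠ i → ρ i (Sum.inl t) < ρ i (Sum.inr j) := by
    intro i j t h; rw [ρl, ρr, Prod.Lex.toLex_lt_toLex]; left; simp [h]
  have hrr : ∀ i j, j ≠ i → ρ i (Sum.inr i) < ρ i (Sum.inr j) := by
    intro i j h; rw [ρr, ρr, Prod.Lex.toLex_lt_toLex]; left; simp [h]
  have hmin : ∀ i x, ρ i (Sum.inr i) ≤ ρ i x := by
    rintro i (t | j)
    · exact (hlr i t).le
    · by_cases h : j = i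
      · subst h; exact le_rfl
      · exact (hrr i j h).le
  have hρ : ∀ i, Function.Injective (ρ i) := by
    rintro i (t | j) (t' | j') h
    · simp only [ρl, EmbeddingLike.apply_eq_iff_eq, Prod.mk.injEq] at h
      rw [heT h.2.2]
    · exfalso
      by_cases hj : j' = i
      · subst hj; exact absurd h (hlr _ _).ne'
      · exact absurd h (hrl _ _ _ hj).ne
    · exfalso
      by_cases hj : j = i
      · subst hj; exact absurd h (hlr _ _).ne
      · exact absurd h (hrl _ _ _ hj).ne'
    · simp only [ρr, EmbeddingLike.apply_eq_iff_eq, Prod.mk.injEq] at h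
      rw [heI h.2.1]
  let c' : T ⊕ I → I := Sum.elim c id
  obtain ⟨i₀⟩ := ‹Nonempty I›
  let D₀ : Finset (T ⊕ I) := (Finset.univ.erase i₀).image Sum.inr
  have hD₀ : D₀.card + 1 = Fintype.card I := by
    rw [Finset.card_image_of_injective _ Sum.inr_injective,
      Finset.card_erase_add_one (Finset.mem_univ _), Finset.card_univ]
  have hD₀c : D₀.image c' = Finset.univ.erase i₀ := by
    simp only [D₀, Finset.image_image]
    ext i; simp [c']
  have mem₀l : ∀ t, Sum.inl t ∉ D₀ := by intro t; simp [D₀]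
  have mem₀r : ∀ j, Sum.inr j ∈ D₀ ↔ j ≠ i₀ := by intro t; simp [D₀]
  have hD₀1 : ∃! z, z ∉ D₀ ∧ ScDom ρ (insert z D₀) := by
    have main : ∀ z, (z ∉ D₀ ∧ ScDom ρ (insert z D₀)) ↔
        ∃ t, z = Sum.inl t ∧ ∀ t', ρ i₀ (Sum.inl t') ≤ ρ i₀ (Sum.inl t) := by
      rintro (t | j)
      · simp only [Sum.inl.injEq, exists_eq_left', mem₀l, not_false_eq_true, true_and]
        constructor
        · intro h t'
          obtain ⟨i, hi⟩ := h (Sum.inl t')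
          have : i = i₀ := by
            by_contra hne
            exact absurd (hi (Sum.inr i) (Finset.mem_insert_of_mem ((mem₀r i).2 hne)))
              (not_le.2 (hlr _ _))
          subst this
          exact hi _ (Finset.mem_insert_self _ _)
        · rintro h (t' | j)
          · refine ⟨i₀, fun b hb => ?_⟩
            rcases Finset.mem_insert.1 hb with rfl | hb
            · exact h t'
            · rcases b with b | b
              · exact absurd hb (mem₀l b)
              · exact (hrl _ _ _ ((mem₀r b).1 hb)).le
          · exact ⟨j, fun b _ => hmin j b⟩
      · simp only [reduceCtorEq, false_and, exists_false, iff_false, not_and]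
        intro hj h
        have hj : j = i₀ := by simpa [mem₀r] using hj
        subst hj
        obtain ⟨i, hi⟩ := h (Sum.inl (Classical.arbitrary T))
        refine absurd (hi (Sum.inr i) ?_) (not_le.2 (hlr _ _))
        by_cases h : i = j
        · subst h; exact Finset.mem_insert_self _ _
        · exact Finset.mem_insert_of_mem ((mem₀r i).2 h)
    simp only [main]
    obtain ⟨t, -, ht⟩ := (Finset.univ : Finset T).exists_max_image
      (fun t => ρ i₀ (Sum.inl t)) Finset.univ_nonempty
    refine ⟨Sum.inl t, ⟨t, rfl, fun t' => ht t' (Finset.mem_univ _)⟩, ?_⟩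
    rintro _ ⟨t', rfl, h'⟩
    exact hρ i₀ (le_antisymm (ht t' (Finset.mem_univ _)) (h' t))
  have hother : ∀ D : Finset (T ⊕ I), D.card + 1 = Fintype.card I →
      D.image c' = Finset.univ.erase i₀ →
      D ≠ D₀ → D.Nonempty ∧ ∀ i, ∃ y, ∀ l, l ≠ i → ∃ b ∈ D, ρ l b < ρ l y := by
    intro D hD hDc hne
    have hex : ∃ t, Sum.inl t ∈ D := by
      by_contra! hno
      apply hne
      apply Finset.eq_of_subset_of_card_le _ (by omega)
      rintro (t | j) hx
      · exact absurd hx (hno t)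
      · rw [mem₀r]
        have : c' (Sum.inr j) ∈ D.image c' := Finset.mem_image_of_mem _ hx
        rw [hDc] at this
        exact (Finset.mem_erase.1 this).1
    obtain ⟨t, ht⟩ := hex
    exact ⟨⟨_, ht⟩, fun i => ⟨Sum.inr i, fun l hl => ⟨_, ht, hrl _ _ _ hl.symm⟩⟩⟩
  obtain ⟨B, hBc, hBd, hBi⟩ := sc_count ρ hρ c' i₀ D₀ hD₀ hD₀c hD₀1 hother
  let C : Finset I := Finset.univ.filter fun i => Sum.inr i ∉ B
  have hx : ∀ i, ∃ t, i ∈ C → Sum.inl t ∈ B ∧ c t = i := by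
    intro i
    by_cases hi : i ∈ C
    · have : i ∈ B.image c' := by rw [hBi]; exact Finset.mem_univ _
      obtain ⟨b, hb, hbi⟩ := Finset.mem_image.1 this
      rcases b with t | j
      · exact ⟨t, fun _ => ⟨hb, hbi⟩⟩
      · have hj : j = i := hbi
        subst hj
        exact absurd hb (Finset.mem_filter.1 hi).2
    · exact ⟨Classical.arbitrary T, fun h => absurd h hi⟩
  choose x hx using hx
  refine ⟨C, x, fun i hi => (hx i hi).2, fun y => ?_⟩
  obtain ⟨i, hi⟩ := hBd (Sum.inl y)
  refine ⟨i, Finset.mem_filter.2 ⟨Finset.mem_univ _, fun h =>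
    absurd (hi _ h) (not_le.2 (hlr _ _))⟩, fun j hj => ?_⟩
  have := hi _ (hx j hj).1
  rw [ρl, ρl, Prod.Lex.toLex_le_toLex, Prod.Lex.toLex_le_toLex] at this
  simp only [lt_self_iff_false, true_and, false_or] at this
  rcases this with h | h
  · exact h.le
  · exact h.1.le

lemma sc_grid {I : Type*} [Fintype I] [Nonempty I] (N : ℕ)
    (c : {t : I → Fin (N + 1) // ∑ i, (t i : ℕ) = N} → I) :
    ∃ (C : Finset I) (x : I → {t : I → Fin (N + 1) // ∑ i, (t i : ℕ) = N}), C.Nonempty ∧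
      (∀ i ∈ C, c (x i) = i) ∧
      (∀ j ∈ C, ∀ i ∉ C, ((x j).1 i : ℕ) ≤ Fintype.card I) ∧
      (∀ j ∈ C, ∀ j' ∈ C, ∀ i, ((x j).1 i : ℕ) ≤ (x j').1 i + Fintype.card I) := by
  classical
  let T := {t : I → Fin (N + 1) // ∑ i, (t i : ℕ) = N}
  have mk : ∀ f : I → ℕ, ∑ i, f i = N → ∃ t : T, ∀ i, ((t.1 i : ℕ)) = f i := by
    intro f hf
    have hle : ∀ i, f i < N + 1 := fun i => by
      have := Finset.single_le_sum (f := f) (fun _ _ => Nat.zero_le _) (Finset.mem_univ i)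
      omega
    exact ⟨⟨fun i => ⟨f i, hle i⟩, hf⟩, fun i => rfl⟩
  have : Nonempty T := by
    obtain ⟨i⟩ := ‹Nonempty I›
    obtain ⟨t, _⟩ := mk (fun j => if j = i then N else 0) (by simp)
    exact ⟨t⟩
  obtain ⟨C, x, hc, hd⟩ := sc_scarf (fun i (t : T) => (t.1 i : ℕ)) c
  have hCn : C.Nonempty := by
    obtain ⟨i, hi, _⟩ := hd (Classical.arbitrary T)
    exact ⟨i, hi⟩
  have hm : ∀ i, ∃ j ∈ C, ∀ j' ∈ C, ((x j).1 i : ℕ) ≤ (x j').1 i := fun i =>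
    C.exists_min_image (fun j => ((x j).1 i : ℕ)) hCn
  choose μ hμC hμ using hm
  let m : I → ℕ := fun i => ((x (μ i)).1 i : ℕ)
  have hsum : N < ∑ i ∈ C, (m i + 1) := by
    by_contra! hle
    obtain ⟨i₁, hi₁⟩ := hCn
    obtain ⟨y, hy⟩ := mk (fun i => (if i ∈ C then m i + 1 else 0) +
      if i = i₁ then N - ∑ i ∈ C, (m i + 1) else 0) (by
        rw [Finset.sum_add_distrib]
        simp only [Finset.sum_ite_mem, Finset.univ_inter, Finset.sum_ite_eq', Finset.mem_univ,
          if_true]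
        omega)
    obtain ⟨i, hi, h⟩ := hd y
    have := h (μ i) (hμC i)
    rw [hy] at this
    simp only [hi, if_true] at this
    simp only [m] at this
    omega
  have hsum' : N < ∑ i ∈ C, m i + C.card := by
    rw [Finset.sum_add_distrib] at hsum
    simpa using hsum
  have hcard : C.card ≤ Fintype.card I := Finset.card_le_univ C
  have hout : ∀ j ∈ C, ∀ i ∉ C, ((x j).1 i : ℕ) ≤ Fintype.card I := by
    intro j hj i hi
    have h1 : ∑ l ∈ insert i C, ((x j).1 l : ℕ) ≤ N :=
      (Finset.sum_le_sum_of_subset (Finset.subset_univ _)).trans_eq (x j).2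
    rw [Finset.sum_insert hi] at h1
    have h2 : ∑ l ∈ C, m l ≤ ∑ l ∈ C, ((x j).1 l : ℕ) :=
      Finset.sum_le_sum fun l _ => hμ l j hj
    omega
  refine ⟨C, x, hCn, hc, hout, fun j hj j' hj' i => ?_⟩
  by_cases hi : i ∈ C
  · have h1 : ∑ l ∈ C, ((x j).1 l : ℕ) ≤ N :=
      (Finset.sum_le_sum_of_subset (Finset.subset_univ _)).trans_eq (x j).2
    rw [← Finset.add_sum_erase _ _ hi] at h1
    have h2 : ∑ l ∈ C.erase i, m l ≤ ∑ l ∈ C.erase i, ((x j).1 l : ℕ) :=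
      Finset.sum_le_sum fun l _ => hμ l j hj
    rw [← Finset.add_sum_erase _ _ hi] at hsum'
    have h3 : m i ≤ (x j').1 i := hμ i j' hj'
    omega
  · have := hout j hj i hi
    omega

lemma sc_brouwer {I : Type*} [Fintype I] [Nonempty I] (f : (I → ℝ) → I → ℝ)
    (hf : ContinuousOn f (stdSimplex ℝ I)) (hmaps : ∀ z ∈ stdSimplex ℝ I, f z ∈ stdSimplex ℝ I) :
    ∃ z ∈ stdSimplex ℝ I, f z = z := by
  classical
  have hcol : ∀ z ∈ stdSimplex ℝ I, ∃ i, z i ≤ f z i := by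
    intro z hz
    by_contra! h
    have : ∑ i, f z i < ∑ i, z i :=
      Finset.sum_lt_sum_of_nonempty Finset.univ_nonempty fun i _ => h i
    rw [hz.2, (hmaps z hz).2] at this
    exact lt_irrefl _ this
  let T : ℕ → Type _ := fun N => {t : I → Fin (N + 1 + 1) // ∑ i, (t i : ℕ) = N + 1}
  let pt : ∀ N, T N → I → ℝ := fun N t i => ((t.1 i : ℕ) : ℝ) / (N + 1 : ℝ)
  have hpt : ∀ N t, pt N t ∈ stdSimplex ℝ I := by
    intro N t
    refine ⟨fun i => by positivity, ?_⟩
    simp only [pt]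
    rw [← Finset.sum_div, ← Nat.cast_sum, t.2]
    push_cast
    exact div_self (by positivity)
  choose c hc using fun N (t : T N) => hcol _ (hpt N t)
  choose C x hCn hxc hout hdiff using fun N => sc_grid (N + 1) (c N)
  let 𝒰 : Ultrafilter ℕ := Filter.hyperfilter ℕ
  have h𝒰 : (𝒰 : Filter ℕ) ≤ Filter.atTop :=
    Nat.hyperfilter_le_atTop
  obtain ⟨C₀, hC₀⟩ : ∃ C₀, ∀ᶠ N in (𝒰 : Filter ℕ), C N = C₀ := by
    have := (𝒰.map C).eq_pure_of_finite
    obtain ⟨a, ha⟩ := this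
    refine ⟨a, ?_⟩
    have h : {a} ∈ 𝒰.map C := by rw [ha]; exact rfl
    exact h
  have hlim : ∀ j, ∃ z ∈ stdSimplex ℝ I,
      Filter.Tendsto (fun N => pt N (x N j)) 𝒰 (nhds z) := by
    intro j
    have hK : IsCompact (stdSimplex ℝ I) := isCompact_stdSimplex ℝ I
    exact hK.ultrafilter_le_nhds (𝒰.map fun N => pt N (x N j))
      (Filter.le_principal_iff.2 (Filter.mem_map.2
        (Filter.Eventually.of_forall (f := (𝒰 : Filter ℕ)) fun N => hpt N _)))
  choose z hz hzl using hlim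
  have hzl' : ∀ j i, Filter.Tendsto (fun N => pt N (x N j) i) 𝒰 (nhds (z j i)) := fun j i =>
    (tendsto_pi_nhds.1 (hzl j)) i
  have hsmall : Filter.Tendsto (fun N : ℕ => (Fintype.card I : ℝ) / (N + 1 : ℝ)) 𝒰 (nhds 0) := by
    have := (tendsto_const_div_atTop_nhds_zero_nat (Fintype.card I : ℝ)).comp
      (Filter.tendsto_add_atTop_nat 1)
    refine (this.congr fun N => ?_).mono_left h𝒰
    simp
  have hC₀n : C₀.Nonempty := by
    obtain ⟨N, hN⟩ := hC₀.exists
    exact hN ▸ hCn N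
  have hle : ∀ j ∈ C₀, ∀ j' ∈ C₀, ∀ i, z j i ≤ z j' i := by
    intro j hj j' hj' i
    have h2 := (hzl' j' i).add hsmall
    rw [add_zero] at h2
    refine le_of_tendsto_of_tendsto (hzl' j i) h2 ?_
    filter_upwards [hC₀] with N hN
    have := hdiff N j (hN ▸ hj) j' (hN ▸ hj') i
    simp only [pt]
    rw [← add_div]
    gcongr
    exact_mod_cast this
  have hzero : ∀ j ∈ C₀, ∀ i ∉ C₀, z j i ≤ 0 := by
    intro j hj i hi
    refine le_of_tendsto_of_tendsto (hzl' j i) hsmall ?_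
    filter_upwards [hC₀] with N hN
    have := hout N j (hN ▸ hj) i (hN ▸ hi)
    simp only [pt]
    gcongr
  have hfz : ∀ j ∈ C₀, z j j ≤ f (z j) j := by
    intro j hj
    have h1 : Filter.Tendsto (fun N => f (pt N (x N j))) 𝒰 (nhds (f (z j))) :=
      (hf (z j) (hz j)).tendsto.comp
        (tendsto_nhdsWithin_iff.2 ⟨hzl j, Filter.Eventually.of_forall fun N => hpt N _⟩)
    refine le_of_tendsto_of_tendsto (hzl' j j) ((tendsto_pi_nhds.1 h1) j) ?_
    filter_upwards [hC₀] with N hN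
    have := hc N (x N j)
    rwa [hxc N j (hN ▸ hj)] at this
  obtain ⟨k, hk⟩ := hC₀n
  have hall : ∀ i, z k i ≤ f (z k) i := by
    intro i
    by_cases hi : i ∈ C₀
    · have : z k = z i := funext fun l => le_antisymm (hle k hk i hi l) (hle i hi k hk l)
      rw [this]
      exact hfz i hi
    · exact (hzero k hk i hi).trans ((hmaps _ (hz k)).1 i)
  refine ⟨z k, hz k, ?_⟩
  have hs : ∑ i, z k i = ∑ i, f (z k) i := by rw [(hz k).2, (hmaps _ (hz k)).2]
  have := (Finset.sum_eq_sum_iff_of_le fun i _ => hall i).1 hs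
  funext i
  exact (this i (Finset.mem_univ _)).symm

lemma sc_ineq {I : Type*} [Fintype I] [Nonempty I] (g : (I → ℝ) → I → ℝ)
    (hg : ContinuousOn g (stdSimplex ℝ I))
    (h0 : ∀ z ∈ stdSimplex ℝ I, ∑ i, z i * g z i ≤ 0) :
    ∃ z ∈ stdSimplex ℝ I, ∀ i, g z i ≤ 0 := by
  have hpos : ∀ z, 0 < 1 + ∑ i, max (g z i) 0 := fun z => by
    have : 0 ≤ ∑ i, max (g z i) 0 := Finset.sum_nonneg fun i _ => le_max_right _ _
    linarith
  have hgi : ∀ i, ContinuousOn (fun z => max (g z i) 0) (stdSimplex ℝ I) := fun i =>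
    ((continuousOn_pi.1 hg i)).sup continuousOn_const
  obtain ⟨z, hz, hfix⟩ := sc_brouwer
    (fun z i => (z i + max (g z i) 0) / (1 + ∑ i, max (g z i) 0)) (by
      apply continuousOn_pi.2
      intro i
      apply ContinuousOn.div
      · exact (continuous_apply i).continuousOn.add (hgi i)
      · exact continuousOn_const.add (continuousOn_finsetSum _ fun i _ => hgi i)
      · intro z _; exact (hpos z).ne') (by
      intro z hz
      refine ⟨fun i => div_nonneg (add_nonneg (hz.1 i) (le_max_right _ _)) (hpos z).le, ?_⟩
      simp only
      rw [← Finset.sum_div, Finset.sum_add_distrib, hz.2]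
      exact div_self (hpos z).ne')
  refine ⟨z, hz, ?_⟩
  have hfi : ∀ i, max (g z i) 0 = z i * ∑ i, max (g z i) 0 := by
    intro i
    have := congrFun hfix i
    rw [div_eq_iff (hpos z).ne'] at this
    linarith
  have hsq : ∑ i, max (g z i) 0 * max (g z i) 0 ≤ 0 := by
    have h1 : ∀ i, max (g z i) 0 * max (g z i) 0 = (∑ i, max (g z i) 0) * (z i * g z i) := by
      intro i
      have h2 : max (g z i) 0 * max (g z i) 0 = max (g z i) 0 * g z i := by
        rcases le_total (g z i) 0 with h | h
        · simp [max_eq_right h]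
        · simp [max_eq_left h]
      rw [h2]
      nth_rewrite 1 [hfi i]
      ring
    rw [Finset.sum_congr rfl fun i _ => h1 i, ← Finset.mul_sum]
    exact mul_nonpos_of_nonneg_of_nonpos (Finset.sum_nonneg fun i _ => le_max_right _ _) (h0 z hz)
  intro i
  by_contra! hi
  have : 0 < ∑ i, max (g z i) 0 * max (g z i) 0 := by
    apply Finset.sum_pos' (fun i _ => mul_self_nonneg _)
    exact ⟨i, Finset.mem_univ _, by rw [max_eq_left hi.le]; positivity⟩
  linarith

lemma sc_fubini {P : Type*} [Fintype P] [DecidableEq P]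
    {S : P → Type*} [∀ p, MetricSpace (S p)] [∀ p, CompactSpace (S p)]
    [∀ p, MeasurableSpace (S p)] [∀ p, BorelSpace (S p)]
    (f : (∀ q, S q) → ℝ) (hf : Continuous f) (σ : ∀ q, Measure (S q))
    [∀ q, IsProbabilityMeasure (σ q)] (p : P) (μ : Measure (S p)) [IsProbabilityMeasure μ] :
    ∫ x, f x ∂(Measure.pi (Function.update σ p μ)) =
      ∫ s, (∫ x, f (Function.update x p s) ∂(Measure.pi σ)) ∂μ := by
  have hprob : ∀ q, IsProbabilityMeasure (Function.update σ p μ q) := by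
    intro q
    by_cases h : q = p
    · subst h; simpa
    · simpa [Function.update_of_ne h] using ‹∀ q, IsProbabilityMeasure (σ q)› q
  have hcont : Continuous (fun y : S p × (∀ q, S q) => Function.update y.2 p y.1) :=
    continuous_snd.update p continuous_fst
  have hmap : Measure.pi (Function.update σ p μ) =
      Measure.map (fun y : S p × (∀ q, S q) => Function.update y.2 p y.1)
        (μ.prod (Measure.pi σ)) := by
    apply Measure.pi_eq
    intro t ht
    rw [Measure.map_apply hcont.measurable (MeasurableSet.univ_pi ht)]
    have hpre : (fun y : S p × (∀ q, S q) => Function.update y.2 p y.1) ⁻¹' (Set.univ.pi t) =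
        t p ×ˢ (Set.univ.pi (Function.update t p Set.univ)) := by
      ext ⟨s, x⟩
      simp only [Set.mem_preimage, Set.mem_pi, Set.mem_univ, true_imp_iff, Set.mem_prod]
      constructor
      · intro h
        refine ⟨by simpa using h p, fun q => ?_⟩
        by_cases hq : q = p
        · subst hq; simp
        · simpa [hq] using h q
      · rintro ⟨h1, h2⟩ q
        by_cases hq : q = p
        · subst hq; simpa using h1
        · simpa [hq] using h2 q
    rw [hpre, Measure.prod_prod, Measure.pi_pi,
      ← Finset.mul_prod_erase _ _ (Finset.mem_univ p),
      ← Finset.mul_prod_erase _ (fun i => Function.update σ p μ i (t i)) (Finset.mem_univ p)]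
    simp only [Function.update_self, measure_univ, one_mul]
    congr 1
    apply Finset.prod_congr rfl
    intro q hq
    have := Finset.ne_of_mem_erase hq
    simp [this]
  rw [hmap, integral_map hcont.aemeasurable hf.aestronglyMeasurable]
  rw [integral_prod]
  exact (hf.comp hcont).integrable_of_hasCompactSupport (HasCompactSupport.of_compactSpace _)

lemma sc_cont {P : Type*} [Fintype P]
    {S : P → Type*} [∀ p, MetricSpace (S p)] [∀ p, CompactSpace (S p)]
    [∀ p, MeasurableSpace (S p)] [∀ p, BorelSpace (S p)]
    (f : (∀ q, S q) → ℝ) (hf : Continuous f) :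
    Continuous fun σ : (∀ q, ProbabilityMeasure (S q)) =>
      ∫ x, f x ∂(Measure.pi fun q => (σ q : Measure (S q))) := by
  have h1 := ProbabilityMeasure.continuous_integral_continuousMap (X := ∀ q, S q) (⟨f, hf⟩ : C(_, ℝ))
  exact h1.comp ProbabilityMeasure.continuous_pi

noncomputable def scMix {I E : Type*} [Fintype I] [MeasurableSpace E] (y : I → E)
    (z : stdSimplex ℝ I) : ProbabilityMeasure E :=
  ⟨∑ i, ENNReal.ofReal (z.1 i) • Measure.dirac (y i), ⟨by
    simp only [Measure.coe_finsetSum, Finset.sum_apply, Measure.smul_apply, measure_univ,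
      smul_eq_mul, mul_one]
    rw [← ENNReal.ofReal_sum_of_nonneg fun i _ => z.2.1 i, z.2.2, ENNReal.ofReal_one]⟩⟩

lemma scMix_integral {I E : Type*} [Fintype I] [MeasurableSpace E] [MeasurableSingletonClass E]
    (y : I → E) (z : stdSimplex ℝ I) (f : E → ℝ) :
    ∫ s, f s ∂(scMix y z : Measure E) = ∑ i, z.1 i * f (y i) := by
  change ∫ s, f s ∂(∑ i, ENNReal.ofReal (z.1 i) • Measure.dirac (y i)) = _
  rw [integral_finsetSum_measure]
  · refine Finset.sum_congr rfl fun i _ => ?_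
    rw [integral_smul_measure, integral_dirac, ENNReal.toReal_ofReal (z.2.1 i), smul_eq_mul]
  · intro i _
    exact (integrable_dirac (by simp)).smul_measure ENNReal.ofReal_ne_top

lemma scMix_continuous {I E : Type*} [Fintype I] [TopologicalSpace E] [T1Space E]
    [MeasurableSpace E] [BorelSpace E]
    (y : I → E) : Continuous (scMix y) := by
  rw [ProbabilityMeasure.continuous_iff_forall_continuous_integral]
  intro f
  simp only [scMix_integral]
  exact continuous_finsetSum _ fun i _ =>
    ((continuous_apply i).comp continuous_subtype_val).mul continuous_const

/-- **Existence of mixed strategy Nash equilibrium for continuous games.**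
Every continuous game (finitely many players, each with a nonempty compact metric
pure-strategy space and a continuous payoff function) possesses a mixed strategy
Nash equilibrium: a profile of Borel probability measures `σ` such that for every
player `p` and pure strategy `s : S p`, the expected payoff of deviating to the
Dirac measure at `s` does not exceed the expected payoff at `σ`. -/
theorem continuous_game_exists_mixed_nash_equilibrium
    (P : Type*) [Fintype P] [Nonempty P] [DecidableEq P]
    (S : P → Type*) [∀ p, MetricSpace (S p)] [∀ p, CompactSpace (S p)]
    [∀ p, Nonempty (S p)] [∀ p, MeasurableSpace (S p)] [∀ p, BorelSpace (S p)]
    (u : P → (∀ q, S q) → ℝ) (hu : ∀ p, Continuous (u p)) :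
    ∃ σ : ∀ p, Measure (S p),
      (∀ p, IsProbabilityMeasure (σ p)) ∧
      ∀ (p : P) (s : S p),
        (∫ x, u p x ∂(Measure.pi (Function.update σ p (Measure.dirac s)))) ≤
          ∫ x, u p x ∂(Measure.pi σ) := by
  let K := ∀ q, ProbabilityMeasure (S q)
  let m : K → ∀ q, Measure (S q) := fun σ q => (σ q : Measure (S q))
  have hm : ∀ (σ : K) q, IsProbabilityMeasure (m σ q) := fun σ q => (σ q).2
  let U : P → K → ℝ := fun p σ => ∫ x, u p x ∂(Measure.pi (m σ))
  let h : ∀ p, K → S p → ℝ := fun p σ s =>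
    ∫ x, u p x ∂(Measure.pi (Function.update (m σ) p (Measure.dirac s)))
  have hUc : ∀ p, Continuous (U p) := fun p => sc_cont (u p) (hu p)
  have hh : ∀ p σ s, h p σ s = ∫ x, u p (Function.update x p s) ∂(Measure.pi (m σ)) := by
    intro p σ s
    simp only [h]
    rw [sc_fubini (u p) (hu p) (m σ) p (Measure.dirac s), integral_dirac]
  have hhc : ∀ p s, Continuous fun σ => h p σ s := by
    intro p s
    have h1 : ∀ σ, h p σ s = U p (Function.update σ p (diracProba s)) := by
      intro σ
      simp only [h, U]
      congr 2
      funext q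
      by_cases hq : q = p
      · subst hq
        simp only [m, Function.update_self]
        rfl
      · simp [m, hq]
    simp only [h1]
    exact (hUc p).comp (continuous_id.update p continuous_const)
  have hUh : ∀ p σ, U p σ = ∫ s, h p σ s ∂(m σ p) := by
    intro p σ
    have := sc_fubini (u p) (hu p) (m σ) p (m σ p)
    rw [Function.update_eq_self] at this
    simp only [hh]
    exact this
  have hhs : ∀ p σ, Continuous (h p σ) := by
    intro p σ
    have h1 : ∀ s, h p σ s = U p (Function.update σ p (diracProba s)) := by
      intro s
      simp only [h, U]
      congr 2
      funext q
      by_cases hq : q = p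
      · subst hq
        simp only [m, Function.update_self]
        rfl
      · simp [m, hq]
    rw [show h p σ = fun s => U p (Function.update σ p (diracProba s)) from funext h1]
    exact (hUc p).comp (continuous_const.update p continuous_diracProba)
  let φ : K → (∀ q, S q) → ℝ := fun σ y => ∑ p, (h p σ (y p) - U p σ)
  have hφc : ∀ y, Continuous fun σ => φ σ y := fun y =>
    continuous_finsetSum _ fun p _ => (hhc p (y p)).sub (hUc p)
  have hfin : ∀ Y : Finset (∀ q, S q), ∃ σ : K, ∀ y ∈ Y, φ σ y ≤ 0 := by
    intro Y
    rcases Y.eq_empty_or_nonempty with rfl | hY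
    · exact ⟨fun q => diracProba (Classical.arbitrary _), by simp⟩
    have : Nonempty Y := hY.to_subtype
    let mix : stdSimplex ℝ Y → K := fun z q => scMix (fun y : Y => y.1 q) z
    have hmix : Continuous mix := continuous_pi fun q => scMix_continuous _
    let g : (Y → ℝ) → Y → ℝ := fun z y => by
      classical exact if hz : z ∈ stdSimplex ℝ Y then φ (mix ⟨z, hz⟩) y.1 else 0
    have hgeq : ∀ (z : stdSimplex ℝ Y) y, g z.1 y = φ (mix z) y.1 := by
      intro z y
      simp [g]
    obtain ⟨z, hz, hle⟩ := sc_ineq g (by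
      rw [continuousOn_iff_continuous_domRestrict]
      refine continuous_pi fun y => ?_
      have : (fun z : stdSimplex ℝ Y => (stdSimplex ℝ Y).domRestrict g z y) =
          fun z => φ (mix z) y.1 := funext fun z => hgeq z y
      rw [this]
      exact (hφc y.1).comp hmix) (by
      intro z hz
      have : ∀ y, g z y = φ (mix ⟨z, hz⟩) y.1 := hgeq ⟨z, hz⟩
      simp only [this, φ, Finset.mul_sum]
      rw [Finset.sum_comm]
      refine (Finset.sum_eq_zero fun p _ => ?_).le
      simp only [mul_sub]
      rw [Finset.sum_sub_distrib, ← Finset.sum_mul, hz.2, one_mul, sub_eq_zero, hUh]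
      exact (scMix_integral (fun y : Y => y.1 p) ⟨z, hz⟩ (h p (mix ⟨z, hz⟩))).symm)
    exact ⟨mix ⟨z, hz⟩, fun y hy => hgeq ⟨z, hz⟩ ⟨y, hy⟩ ▸ hle ⟨y, hy⟩⟩
  obtain ⟨σ, hσ⟩ : ∃ σ : K, ∀ y, φ σ y ≤ 0 := by
    have := CompactSpace.iInter_nonempty (X := K) (t := fun y => {σ : K | φ σ y ≤ 0})
      (fun y => isClosed_le (hφc y) continuous_const) (by
        intro Y
        obtain ⟨σ, hσ⟩ := hfin Y
        exact ⟨σ, by simpa using hσ⟩)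
    obtain ⟨σ, hσ⟩ := this
    exact ⟨σ, fun y => (Set.mem_iInter.1 hσ) y⟩
  refine ⟨m σ, hm σ, fun p s => ?_⟩
  have hex : ∀ q, ∃ t, U q σ ≤ h q σ t := by
    intro q
    obtain ⟨t, ht⟩ := exists_integral_le (μ := m σ q) (f := h q σ)
      ((hhs q σ).integrable_of_hasCompactSupport (HasCompactSupport.of_compactSpace _))
    exact ⟨t, (hUh q σ).trans_le ht⟩
  choose t ht using hex
  have h1 := hσ (Function.update t p s)
  simp only [φ] at h1
  rw [← Finset.add_sum_erase _ _ (Finset.mem_univ p), Function.update_self] at h1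
  have h2 : 0 ≤ ∑ q ∈ Finset.univ.erase p, (h q σ (Function.update t p s q) - U q σ) := by
    apply Finset.sum_nonneg
    intro q hq
    rw [Function.update_of_ne (Finset.ne_of_mem_erase hq)]
    exact sub_nonneg.2 (ht q)
  have h3 : h p σ s - U p σ ≤ 0 := by linarith
  exact sub_nonpos.1 h3
end

section
/- Let ⟨P, (S_p), (u_p)⟩ be a continuous game. Suppose (σ^k)_{k∈ℕ} is a sequence of mixed strategy profiles such that for each player p the measures σ^k_p converge weakly to σ_p as k → ∞, (ε^k)_{k∈ℕ} is a sequence of nonnegative reals converging to ε, and for each k the profile σ^k is an ε^k-equilibrium. Then the limit profile σ = (σ_p) is an ε-equilibrium. -/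
open MeasureTheory Filter Topology

theorem aux_tendsto_pi {P : Type*} [Fintype P]
    {S : P → Type*} [∀ p, MetricSpace (S p)] [∀ p, CompactSpace (S p)]
    [∀ p, MeasurableSpace (S p)] [∀ p, BorelSpace (S p)]
    (v : (∀ q, S q) → ℝ) (hv : Continuous v)
    (μs : ℕ → ∀ p, Measure (S p)) (hμs : ∀ k p, IsProbabilityMeasure (μs k p))
    (μ : ∀ p, Measure (S p)) (hμ : ∀ p, IsProbabilityMeasure (μ p))
    (hweak : ∀ (p : P) (f : BoundedContinuousFunction (S p) ℝ),
      Tendsto (fun k => ∫ x, f x ∂(μs k p)) atTop (𝓝 (∫ x, f x ∂(μ p)))) :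
    Tendsto (fun k => ∫ x, v x ∂(Measure.pi (μs k))) atTop
      (𝓝 (∫ x, v x ∂(Measure.pi μ))) := by
  let a : ℕ → ∀ p, ProbabilityMeasure (S p) := fun k p => ⟨μs k p, hμs k p⟩
  let b : ∀ p, ProbabilityMeasure (S p) := fun p => ⟨μ p, hμ p⟩
  have h1 : Tendsto a atTop (𝓝 b) := by
    rw [tendsto_pi_nhds]
    intro p
    rw [ProbabilityMeasure.tendsto_iff_forall_integral_tendsto]
    exact hweak p
  have h2 := (ProbabilityMeasure.continuous_pi.tendsto b).comp h1
  rw [ProbabilityMeasure.tendsto_iff_forall_integral_tendsto] at h2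
  exact h2 (BoundedContinuousFunction.mkOfCompact ⟨v, hv⟩)

/-- **Limits of ε-equilibria in continuous games.**
If `σseq k` is a sequence of mixed strategy profiles of a continuous game converging
weakly (playerwise) to a profile `σ`, `εseq k` are nonnegative reals converging to `ε`,
and each `σseq k` is an `εseq k`-equilibrium, then `σ` is an `ε`-equilibrium. -/
theorem limit_of_eps_equilibria_is_eps_equilibrium
    (P : Type*) [Fintype P] [Nonempty P] [DecidableEq P]
    (S : P → Type*) [∀ p, MetricSpace (S p)] [∀ p, CompactSpace (S p)]
    [∀ p, Nonempty (S p)] [∀ p, MeasurableSpace (S p)] [∀ p, BorelSpace (S p)]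
    (u : P → (∀ q, S q) → ℝ) (hu : ∀ p, Continuous (u p))
    (σseq : ℕ → ∀ p, Measure (S p)) (hσseq : ∀ k p, IsProbabilityMeasure (σseq k p))
    (σ : ∀ p, Measure (S p)) (hσ : ∀ p, IsProbabilityMeasure (σ p))
    (hweak : ∀ (p : P) (f : BoundedContinuousFunction (S p) ℝ),
      Tendsto (fun k => ∫ x, f x ∂(σseq k p)) atTop (𝓝 (∫ x, f x ∂(σ p))))
    (ε : ℝ) (εseq : ℕ → ℝ) (hεnonneg : ∀ k, 0 ≤ εseq k)
    (hεlim : Tendsto εseq atTop (𝓝 ε))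
    (heq : ∀ (k : ℕ) (p : P) (s : S p),
      (∫ x, u p x ∂(Measure.pi (Function.update (σseq k) p (Measure.dirac s)))) ≤
        (∫ x, u p x ∂(Measure.pi (σseq k))) + εseq k) :
    ∀ (p : P) (s : S p),
      (∫ x, u p x ∂(Measure.pi (Function.update σ p (Measure.dirac s)))) ≤
        (∫ x, u p x ∂(Measure.pi σ)) + ε := by
  intro p s
  have hup : ∀ (τ : ∀ p, Measure (S p)), (∀ p, IsProbabilityMeasure (τ p)) →
      ∀ q, IsProbabilityMeasure (Function.update τ p (Measure.dirac s) q) := by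
    intro τ hτ q
    by_cases h : q = p
    · subst h
      rw [Function.update_self]
      infer_instance
    · rw [Function.update_of_ne h]
      exact hτ q
  refine le_of_tendsto_of_tendsto'
    (aux_tendsto_pi (u p) (hu p) _ (fun k => hup _ (hσseq k)) _ (hup _ hσ) ?_)
    ((aux_tendsto_pi (u p) (hu p) σseq hσseq σ hσ hweak).add hεlim)
    (fun k => heq k p s)
  intro q f
  by_cases h : q = p
  · subst h
    simp only [Function.update_self]
    exact tendsto_const_nhds
  · simp only [Function.update_of_ne h]
    exact hweak q f
end

section
/- Let ⟨P, (S_p), (u_p)⟩ be a continuous game and φ > 0. Then for each player p there exist a finite partition of S_p into nonempty sets U_p^1, …, U_p^{m_p} and representative points s_p^j ∈ U_p^j, such that the functions ũ_p : ∏_{q∈P} S_q → ℝ defined by ũ_p(s) = u_p((s_q^{j_q})_{q∈P}) whenever s ∈ ∏_q U_q^{j_q} satisfy |u_p(s) − ũ_p(s)| ≤ φ for every player p and every s ∈ ∏_q S_q. In other words, every continuous game admits an 'essentially finite' φ-approximation whose payoffs are constant on each product cell of finite partitions of the strategy spaces. -/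
theorem exists_fine_partition (X : Type*) [MetricSpace X] [CompactSpace X] (δ : ℝ) (hδ : 0 < δ) :
    ∃ (m : ℕ) (U : Fin m → Set X) (rep : Fin m → X),
      (∀ j j', j ≠ j' → Disjoint (U j) (U j')) ∧ (⋃ j, U j) = Set.univ ∧
      (∀ j, rep j ∈ U j) ∧ ∀ j x, x ∈ U j → dist x (rep j) < δ := by
  obtain ⟨t, htf, ht⟩ := Metric.totallyBounded_iff.1
    (isCompact_univ (X := X)).totallyBounded (δ / 2) (half_pos hδ)
  have h : ∀ x : X, ∃ y ∈ t, dist x y < δ / 2 := fun x => by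
    simpa using ht (Set.mem_univ x)
  choose f hft hfd using h
  have hfin : (Set.range f).Finite := htf.subset (by rintro _ ⟨x, rfl⟩; exact hft x)
  have : Finite (Set.range f) := hfin
  obtain ⟨m, ⟨e⟩⟩ := Finite.exists_equiv_fin (Set.range f)
  have hr : ∀ j : Fin m, ∃ x, f x = (e.symm j : X) := fun j => (e.symm j).2
  choose rep hrep using hr
  refine ⟨m, fun j => {x | f x = (e.symm j : X)}, rep, ?_, ?_, hrep, ?_⟩
  · intro j j' hne
    rw [Set.disjoint_left]
    intro x hx hx'
    exact hne (e.symm.injective (Subtype.ext (hx.symm.trans hx')))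
  · ext x
    simp only [Set.mem_iUnion, Set.mem_univ, iff_true]
    exact ⟨e ⟨f x, x, rfl⟩, by simp⟩
  · intro j x hx
    have h1 := hfd x
    have h2 := hfd (rep j)
    rw [hrep j, dist_comm] at h2
    rw [show f x = _ from hx] at h1
    linarith [dist_triangle x (e.symm j : X) (rep j)]

/-- **Every continuous game admits an "essentially finite" φ-approximation.**
For every continuous game and every `φ > 0`, each pure strategy space `S p` can be
partitioned into finitely many nonempty pieces `U p 0, …, U p (m p − 1)` with
representative points `rep p j ∈ U p j` such that the "essentially finite" payoffs
`ũ p s := u p (rep of the cell of s)`, i.e. the payoffs constant on each product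
cell, approximate the original payoffs within `φ`:
`|u p s − u p (fun q => rep q (j q))| ≤ φ` whenever `s q ∈ U q (j q)` for all `q`. -/
theorem continuous_game_has_essentially_finite_approximation
    (P : Type*) [Fintype P] [Nonempty P]
    (S : P → Type*) [∀ p, MetricSpace (S p)] [∀ p, CompactSpace (S p)]
    [∀ p, Nonempty (S p)]
    (u : P → (∀ q, S q) → ℝ) (hu : ∀ p, Continuous (u p))
    (φ : ℝ) (hφ : 0 < φ) :
    ∃ (m : P → ℕ) (U : ∀ p, Fin (m p) → Set (S p)) (rep : ∀ p, Fin (m p) → S p),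
      (∀ p j, (U p j).Nonempty) ∧
      (∀ (p : P) (j j' : Fin (m p)), j ≠ j' → Disjoint (U p j) (U p j')) ∧
      (∀ p, (⋃ j, U p j) = Set.univ) ∧
      (∀ p j, rep p j ∈ U p j) ∧
      (∀ (p : P) (s : ∀ q, S q) (j : ∀ q, Fin (m q)),
        (∀ q, s q ∈ U q (j q)) → |u p s - u p (fun q => rep q (j q))| ≤ φ) := by
  have hc : Continuous (fun s p => u p s) := continuous_pi hu
  obtain ⟨δ, hδ, H⟩ := Metric.uniformContinuous_iff.1
    (CompactSpace.uniformContinuous_of_continuous hc) φ hφ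
  choose m U rep h1 h2 h3 h4 using fun p => exists_fine_partition (S p) δ hδ
  refine ⟨m, U, rep, fun p j => ⟨_, h3 p j⟩, h1, h2, h3, ?_⟩
  intro p s j hs
  have := H ((dist_pi_lt_iff hδ).2 fun q => h4 q (j q) (s q) (hs q))
  exact ((dist_pi_lt_iff hφ).1 this p).le
end

section
/- Let P ∈ ℝ^{n×n} be a row-stochastic matrix that is reversible with respect to θ. Then there exists x ∈ ℝⁿ with x ≠ 0 and ⟨x, 𝟙⟩_θ = 0 such that ⟨Px, x⟩_θ ≥ −(θ₁/(1−θ₁)) ⟨x, x⟩_θ. Consequently the second largest eigenvalue λ₂ of P, characterized as the supremum of the Rayleigh quotient ⟨Px, x⟩_θ / ⟨x, x⟩_θ over nonzero x with ⟨x, 𝟙⟩_θ = 0, satisfies λ₂ ≥ −θ₁/(1−θ₁). -/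
open Matrix

/-- **Lower bound for the second largest eigenvalue of a reversible stochastic matrix.**
Let `θ` be a probability vector on `n + 2 ≥ 2` states with `0 < θ 0` and nondecreasing
entries, and let `P` be row-stochastic and reversible w.r.t. `θ`. Then there exists a
nonzero `x` with `⟨x, 𝟙⟩_θ = 0` such that `⟨Px, x⟩_θ ≥ −(θ₁/(1−θ₁)) ⟨x, x⟩_θ`;
consequently the second largest eigenvalue
`λ₂ = sup { ⟨Px, x⟩_θ / ⟨x, x⟩_θ : x ≠ 0, ⟨x, 𝟙⟩_θ = 0 }`
satisfies `λ₂ ≥ −θ₁/(1−θ₁)`. -/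
theorem reversible_second_eigenvalue_lower_bound
    (n : ℕ) (θ : Fin (n + 2) → ℝ)
    (hθ1 : 0 < θ 0) (hmono : Monotone θ) (hsum : ∑ i, θ i = 1)
    (P : Matrix (Fin (n + 2)) (Fin (n + 2)) ℝ)
    (hnonneg : ∀ i j, 0 ≤ P i j) (hrow : ∀ i, ∑ j, P i j = 1)
    (hrev : ∀ i j, θ i * P i j = θ j * P j i) :
    (∃ x : Fin (n + 2) → ℝ, x ≠ 0 ∧ (∑ i, x i * θ i) = 0 ∧
      -(θ 0 / (1 - θ 0)) * ∑ i, x i * x i * θ i ≤ ∑ i, P.mulVec x i * x i * θ i) ∧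
    -(θ 0 / (1 - θ 0)) ≤
      sSup {r : ℝ | ∃ x : Fin (n + 2) → ℝ, x ≠ 0 ∧ (∑ i, x i * θ i) = 0 ∧
        r = (∑ i, P.mulVec x i * x i * θ i) / (∑ i, x i * x i * θ i)} := by
  have hpos : ∀ i, 0 < θ i := fun i => lt_of_lt_of_le hθ1 (hmono (Fin.zero_le i))
  have hlt : θ 0 < 1 := by
    rw [← hsum, Fin.sum_univ_succ]
    have : 0 < ∑ i : Fin (n + 1), θ i.succ :=
      Finset.sum_pos (fun i _ => hpos _) Finset.univ_nonempty
    linarith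
  have h1 : 0 < 1 - θ 0 := by linarith
  have hcol : ∑ i, P i 0 * θ i = θ 0 := by
    calc ∑ i, P i 0 * θ i = ∑ i, θ 0 * P 0 i :=
          Finset.sum_congr rfl (fun i _ => by rw [mul_comm, hrev])
      _ = θ 0 := by rw [← Finset.mul_sum, hrow, mul_one]
  have hex : ∃ x : Fin (n + 2) → ℝ, x ≠ 0 ∧ (∑ i, x i * θ i) = 0 ∧
      -(θ 0 / (1 - θ 0)) * ∑ i, x i * x i * θ i ≤ ∑ i, P.mulVec x i * x i * θ i := by
    refine ⟨fun i => (if i = 0 then 1 else 0) - θ 0, ?_, ?_, ?_⟩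
    · intro h
      have := congrFun h 0
      simp at this
      linarith
    · simp [sub_mul, Finset.sum_sub_distrib, ← Finset.mul_sum, hsum]
    · have e1 : ∀ i, P.mulVec (fun i => (if i = 0 then (1:ℝ) else 0) - θ 0) i
          = P i 0 - θ 0 := by
        intro i
        simp [Matrix.mulVec, dotProduct, mul_sub, Finset.sum_sub_distrib, ← Finset.sum_mul, hrow]
      have e2 : ∑ i, ((if i = 0 then (1:ℝ) else 0) - θ 0) * ((if i = 0 then (1:ℝ) else 0) - θ 0) * θ i
          = θ 0 * (1 - θ 0) := by
        have : ∀ i, ((if i = 0 then (1:ℝ) else 0) - θ 0) * ((if i = 0 then (1:ℝ) else 0) - θ 0) * θ i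
          = (if i = 0 then (1 - 2 * θ 0) * θ i else 0) + θ 0 ^ 2 * θ i := by
          intro i
          split_ifs <;> ring
        rw [Finset.sum_congr rfl (fun i _ => this i), Finset.sum_add_distrib, ← Finset.mul_sum, hsum]
        simp
        ring
      have e3 : ∑ i, (P i 0 - θ 0) * ((if i = 0 then (1:ℝ) else 0) - θ 0) * θ i
          = θ 0 * P 0 0 - θ 0 ^ 2 := by
        have : ∀ i, (P i 0 - θ 0) * ((if i = 0 then (1:ℝ) else 0) - θ 0) * θ i
          = (if i = 0 then (P i 0 - θ 0) * θ i else 0) - θ 0 * (P i 0 * θ i) + θ 0 ^ 2 * θ i := by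
          intro i
          split_ifs <;> ring
        rw [Finset.sum_congr rfl (fun i _ => this i), Finset.sum_add_distrib,
          Finset.sum_sub_distrib, ← Finset.mul_sum, ← Finset.mul_sum, hsum, hcol]
        simp
        ring
      simp only [e1]
      rw [e2, e3]
      have : -(θ 0 / (1 - θ 0)) * (θ 0 * (1 - θ 0)) = - θ 0 ^ 2 := by
        field_simp
      rw [this]
      have := mul_nonneg hθ1.le (hnonneg 0 0)
      linarith
  have hxx : ∀ x : Fin (n + 2) → ℝ, x ≠ 0 → 0 < ∑ i, x i * x i * θ i := by
    intro x hx
    obtain ⟨i, hi⟩ := Function.ne_iff.mp hx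
    exact Finset.sum_pos' (fun i _ => mul_nonneg (mul_self_nonneg _) (hpos i).le)
      ⟨i, Finset.mem_univ _, mul_pos (mul_self_pos.mpr hi) (hpos i)⟩
  refine ⟨hex, ?_⟩
  obtain ⟨x, hx, hx0, hle⟩ := hex
  refine le_trans ((le_div_iff₀ (hxx x hx)).mpr hle) (le_csSup ⟨1, ?_⟩ ⟨x, hx, hx0, rfl⟩)
  rintro r ⟨y, hy, -, rfl⟩
  rw [div_le_one (hxx y hy)]
  have a1 : ∑ i, ∑ j, θ i * P i j * (y i * y i) = ∑ i, y i * y i * θ i := by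
    refine Finset.sum_congr rfl (fun i _ => ?_)
    rw [← Finset.sum_mul, ← Finset.mul_sum, hrow]
    ring
  have a2 : ∑ i, ∑ j, θ i * P i j * (y j * y j) = ∑ i, y i * y i * θ i := by
    rw [← a1, Finset.sum_comm]
    refine Finset.sum_congr rfl (fun i _ => Finset.sum_congr rfl (fun j _ => ?_))
    rw [hrev]
  have a3 : ∑ i, P.mulVec y i * y i * θ i = ∑ i, ∑ j, θ i * P i j * (y i * y j) := by
    refine Finset.sum_congr rfl (fun i _ => ?_)
    simp only [Matrix.mulVec, dotProduct, Finset.sum_mul]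
    exact Finset.sum_congr rfl (fun j _ => by ring)
  have a4 : 0 ≤ ∑ i, ∑ j, θ i * P i j * (y i - y j) ^ 2 :=
    Finset.sum_nonneg (fun i _ => Finset.sum_nonneg (fun j _ =>
      mul_nonneg (mul_nonneg (hpos i).le (hnonneg i j)) (sq_nonneg _)))
  have a5 : ∑ i, ∑ j, θ i * P i j * (y i - y j) ^ 2
      = ∑ i, ∑ j, θ i * P i j * (y i * y i) + ∑ i, ∑ j, θ i * P i j * (y j * y j)
        - 2 * ∑ i, ∑ j, θ i * P i j * (y i * y j) := by
    simp only [Finset.mul_sum, ← Finset.sum_add_distrib, ← Finset.sum_sub_distrib]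
    exact Finset.sum_congr rfl (fun i _ => Finset.sum_congr rfl (fun j _ => by ring))
  rw [a5, a1, a2, ← a3] at a4
  linarith
end

section
/- Let P ∈ ℝ^{n×n} be a row-stochastic matrix reversible with respect to θ, and suppose the second largest eigenvalue attains its lower bound, i.e. ⟨Px, x⟩_θ ≤ −(θ₁/(1−θ₁)) ⟨x, x⟩_θ for every x ∈ ℝⁿ with ⟨x, 𝟙⟩_θ = 0. Then P₁₁ = 0, P_{1j} = θ_j/(1−θ₁) for every j ≥ 2, and P_{j1} = θ₁/(1−θ₁) for every j ≥ 2; moreover the lower-right submatrix (P_{ij})_{2≤i,j≤n} satisfies the detailed balance condition θ_i P_{ij} = θ_j P_{ji} with respect to the vector (θ₂, …, θ_n) and has constant row sums, each row summing to (1−2θ₁)/(1−θ₁). -/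
open Matrix

/-- **Structure of a reversible stochastic matrix attaining the minimal second eigenvalue.**
Let `θ` be a probability vector on `n + 2 ≥ 2` states with `0 < θ 0` and nondecreasing
entries, and let `P` be row-stochastic and reversible w.r.t. `θ`. If the second largest
eigenvalue attains its lower bound, i.e. `⟨Px, x⟩_θ ≤ −(θ₁/(1−θ₁)) ⟨x, x⟩_θ` for every
`x` with `⟨x, 𝟙⟩_θ = 0`, then `P 0 0 = 0`, `P 0 j = θ j / (1 − θ 0)` and
`P j 0 = θ 0 / (1 − θ 0)` for every `j ≠ 0`; moreover the lower-right submatrix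
satisfies detailed balance w.r.t. `(θ j)_{j ≠ 0}` and has constant row sums, each row
summing to `(1 − 2 θ 0)/(1 − θ 0)`. -/
theorem reversible_attaining_lower_bound_structure
    (n : ℕ) (θ : Fin (n + 2) → ℝ)
    (hθ1 : 0 < θ 0) (hmono : Monotone θ) (hsum : ∑ i, θ i = 1)
    (P : Matrix (Fin (n + 2)) (Fin (n + 2)) ℝ)
    (hnonneg : ∀ i j, 0 ≤ P i j) (hrow : ∀ i, ∑ j, P i j = 1)
    (hrev : ∀ i j, θ i * P i j = θ j * P j i)
    (hattain : ∀ x : Fin (n + 2) → ℝ, (∑ i, x i * θ i) = 0 →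
      ∑ i, P.mulVec x i * x i * θ i ≤ -(θ 0 / (1 - θ 0)) * ∑ i, x i * x i * θ i) :
    P 0 0 = 0 ∧
    (∀ j, j ≠ 0 → P 0 j = θ j / (1 - θ 0)) ∧
    (∀ j, j ≠ 0 → P j 0 = θ 0 / (1 - θ 0)) ∧
    (∀ i j, i ≠ 0 → j ≠ 0 → θ i * P i j = θ j * P j i) ∧
    (∀ i, i ≠ 0 → ∑ j ∈ Finset.univ.erase 0, P i j = (1 - 2 * θ 0) / (1 - θ 0)) := by
  have hpos : ∀ i, 0 < θ i := fun i => lt_of_lt_of_le hθ1 (hmono (Fin.zero_le i))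
  have hlt : 0 < 1 - θ 0 := by
    rw [Fin.sum_univ_succ] at hsum
    have : 0 < ∑ i : Fin (n + 1), θ i.succ :=
      Finset.sum_pos (fun i _ => hpos _) Finset.univ_nonempty
    linarith
  have key : ∀ y : Fin (n + 2) → ℝ,
      ∑ i, P.mulVec y i * y i * θ i - (∑ i, y i * θ i) ^ 2 ≤
        -(θ 0 / (1 - θ 0)) * (∑ i, y i * y i * θ i - (∑ i, y i * θ i) ^ 2) := by
    intro y
    obtain ⟨m, hm⟩ : ∃ m, m = ∑ i, y i * θ i := ⟨_, rfl⟩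
    have hst : ∑ i, P.mulVec y i * θ i = m := by
      simp only [Matrix.mulVec, dotProduct, Finset.sum_mul]
      rw [Finset.sum_comm, hm]
      refine Finset.sum_congr rfl fun j _ => ?_
      calc ∑ i, P i j * y j * θ i = ∑ i, P j i * (y j * θ j) :=
            Finset.sum_congr rfl fun i _ => by linear_combination y j * hrev i j
        _ = y j * θ j := by rw [← Finset.sum_mul, hrow, one_mul]
    have hP : ∀ i, P.mulVec (fun k => y k - m) i = P.mulVec y i - m := by
      intro i
      simp only [Matrix.mulVec, dotProduct, mul_sub, Finset.sum_sub_distrib]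
      rw [← Finset.sum_mul, hrow, one_mul]
    have h0 : ∑ i, (y i - m) * θ i = 0 := by
      simp only [sub_mul, Finset.sum_sub_distrib]
      rw [← Finset.mul_sum, hsum, ← hm]; ring
    have h := hattain (fun k => y k - m) h0
    simp only [hP] at h
    have e1 : ∑ i, (P.mulVec y i - m) * (y i - m) * θ i
        = ∑ i, P.mulVec y i * y i * θ i - m ^ 2 := by
      have : ∀ i, (P.mulVec y i - m) * (y i - m) * θ i
        = P.mulVec y i * y i * θ i - m * (P.mulVec y i * θ i) - m * (y i * θ i)
          + m ^ 2 * θ i := fun i => by ring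
      simp only [this, Finset.sum_add_distrib, Finset.sum_sub_distrib, ← Finset.mul_sum]
      rw [hst, hsum, ← hm]; ring
    have e2 : ∑ i, (y i - m) * (y i - m) * θ i = ∑ i, y i * y i * θ i - m ^ 2 := by
      have : ∀ i, (y i - m) * (y i - m) * θ i
        = y i * y i * θ i - 2 * m * (y i * θ i) + m ^ 2 * θ i := fun i => by ring
      simp only [this, Finset.sum_add_distrib, Finset.sum_sub_distrib, ← Finset.mul_sum]
      rw [hsum, ← hm]; ring
    rw [e1, e2] at h
    rw [← hm]; exact h
  obtain ⟨c, hc⟩ : ∃ c, c = θ 0 / (1 - θ 0) := ⟨_, rfl⟩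
  have hc1 : c * (1 - θ 0) = θ 0 := by rw [hc]; field_simp
  have h00 : P 0 0 = 0 := by
    have h := key (Pi.single 0 1)
    rw [← hc] at h
    simp [Pi.single_apply] at h
    have : P 0 0 * θ 0 ≤ 0 := by
      have : c * (1 - θ 0) * θ 0 = θ 0 * θ 0 := by rw [hc1]
      nlinarith
    exact le_antisymm (by by_contra hh; push Not at hh; nlinarith [mul_pos hh hθ1]) (hnonneg 0 0)
  have h0j : ∀ j, j ≠ 0 → P 0 j = θ j / (1 - θ 0) := by
    intro j hj
    have hr := hrev 0 j
    have h : ∀ t : ℝ, 2 * t * θ 0 * (P 0 j - (1 + c) * θ j)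
        + (θ j * P j j + c * θ j - (1 + c) * θ j ^ 2) ≤ 0 := by
      intro t
      have h := key (t • Pi.single 0 1 + Pi.single j 1)
      rw [← hc] at h
      simp [Matrix.mulVec_add, Matrix.mulVec_smul, Pi.single_apply, mul_add, add_mul,
        Finset.sum_add_distrib, hj, hj.symm, h00] at h
      nlinarith [congrArg (fun z => t * z) hr, congrArg (fun z => t ^ 2 * θ 0 * z) hc1]
    have hz : P 0 j - (1 + c) * θ j = 0 := by
      obtain ⟨d, hd⟩ : ∃ d, d = P 0 j - (1 + c) * θ j := ⟨_, rfl⟩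
      obtain ⟨q, hq⟩ : ∃ q, q = θ j * P j j + c * θ j - (1 + c) * θ j ^ 2 := ⟨_, rfl⟩
      rw [← hd, ← hq] at h
      rw [← hd]
      by_contra hne
      have h1 := h ((1 - q) / (2 * θ 0 * d))
      have h2 : 2 * ((1 - q) / (2 * θ 0 * d)) * θ 0 * d = 1 - q := by
        have := hθ1.ne'
        field_simp
      linarith
    rw [eq_div_iff hlt.ne']
    linear_combination (1 - θ 0) * hz + θ j * hc1
  have hj0 : ∀ j, j ≠ 0 → P j 0 = θ 0 / (1 - θ 0) := by
    intro j hj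
    have hr := hrev 0 j
    rw [h0j j hj] at hr
    have := (hpos j).ne'
    apply mul_left_cancel₀ this
    rw [← hr]; ring
  refine ⟨h00, h0j, hj0, fun i j _ _ => hrev i j, fun i hi => ?_⟩
  have h := hrow i
  rw [← Finset.add_sum_erase _ _ (Finset.mem_univ 0), hj0 i hi] at h
  have : ∑ j ∈ Finset.univ.erase 0, P i j = 1 - θ 0 / (1 - θ 0) := by linarith
  rw [this]; field_simp; ring
end

section
/- The matrix P_A given by the recursive construction is a row-stochastic matrix (all entries nonnegative, every row sums to 1) and is reversible with respect to θ, i.e. θ_i (P_A)_{ij} = θ_j (P_A)_{ji} for all i, j; in particular θ is an invariant distribution of P_A: ∑_i θ_i (P_A)_{ij} = θ_j for all j. -/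
/-- **The recursive construction yields a reversible stochastic matrix.**
States are indexed by `1, …, n` (with `n ≥ 2`); `θ` is a positive nondecreasing
probability vector on these indices, and `s k = ∑_{l=k}^n θ l`. The matrices
`Pk k` (with rows and columns in `{k, …, n}`) are defined recursively:
`Pk n` is the 1×1 zero matrix; and for `1 ≤ k < n`, `(Pk k)_{kk} = 0`,
`(Pk k)_{kj} = θ j / s (k+1)` and `(Pk k)_{jk} = θ k / s (k+1)` for `j > k`, and
`(Pk k)_{ij} = (1 − θ k / s (k+1)) (Pk (k+1))_{ij}` for `i, j > k`. The matrix `PA`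
agrees with `Pk 1` everywhere except `(PA)_{nn} = 1 − ∑_{j=1}^{n−1} (Pk 1)_{nj}`.
Then `PA` is row-stochastic and reversible w.r.t. `θ`; in particular `θ` is an
invariant distribution of `PA`. -/
theorem recursive_construction_is_reversible_stochastic
    (n : ℕ) (hn : 2 ≤ n) (θ : ℕ → ℝ)
    (hpos : ∀ i, 1 ≤ i → i ≤ n → 0 < θ i)
    (hmono : ∀ i j, 1 ≤ i → i ≤ j → j ≤ n → θ i ≤ θ j)
    (hsum : ∑ i ∈ Finset.Icc 1 n, θ i = 1)
    (s : ℕ → ℝ) (hs : ∀ k, s k = ∑ l ∈ Finset.Icc k n, θ l)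
    (Pk : ℕ → ℕ → ℕ → ℝ)
    (hPtop : Pk n n n = 0)
    (hPdiag : ∀ k, 1 ≤ k → k < n → Pk k k k = 0)
    (hProw : ∀ k j, 1 ≤ k → k < j → j ≤ n → Pk k k j = θ j / s (k + 1))
    (hPcol : ∀ k j, 1 ≤ k → k < j → j ≤ n → Pk k j k = θ k / s (k + 1))
    (hPrec : ∀ k i j, 1 ≤ k → k < i → i ≤ n → k < j → j ≤ n →
      Pk k i j = (1 - θ k / s (k + 1)) * Pk (k + 1) i j)
    (PA : ℕ → ℕ → ℝ)
    (hPA : ∀ i j, 1 ≤ i → i ≤ n → 1 ≤ j → j ≤ n → ¬(i = n ∧ j = n) → PA i j = Pk 1 i j)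
    (hPAnn : PA n n = 1 - ∑ j ∈ Finset.Icc 1 (n - 1), Pk 1 n j) :
    (∀ i j, 1 ≤ i → i ≤ n → 1 ≤ j → j ≤ n → 0 ≤ PA i j) ∧
    (∀ i, 1 ≤ i → i ≤ n → ∑ j ∈ Finset.Icc 1 n, PA i j = 1) ∧
    (∀ i j, 1 ≤ i → i ≤ n → 1 ≤ j → j ≤ n → θ i * PA i j = θ j * PA j i) ∧
    (∀ j, 1 ≤ j → j ≤ n → ∑ i ∈ Finset.Icc 1 n, θ i * PA i j = θ j) := by
  have hspos : ∀ k, 1 ≤ k → k ≤ n → 0 < s k := by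
    intro k h1 h2
    rw [hs]
    refine Finset.sum_pos (fun i hi => ?_) ⟨k, by simp [h2]⟩
    rw [Finset.mem_Icc] at hi
    exact hpos i (by omega) hi.2
  have hle : ∀ k, 1 ≤ k → k < n → θ k / s (k + 1) ≤ 1 := by
    intro k h1 h2
    rw [div_le_one (hspos (k+1) (by omega) (by omega))]
    refine (hmono k (k+1) h1 (by omega) (by omega)).trans ?_
    rw [hs]
    refine Finset.single_le_sum (f := θ) (fun i hi => ?_) (by simp; omega)
    rw [Finset.mem_Icc] at hi
    exact (hpos i (by omega) hi.2).le
  have hsplit : ∀ (f : ℕ → ℝ) k, k ≤ n →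
      ∑ j ∈ Finset.Icc k n, f j = f k + ∑ j ∈ Finset.Icc (k+1) n, f j := by
    intro f k h
    rw [← Finset.insert_Icc_succ_left_eq_Icc h, Finset.sum_insert (by simp)]
    rfl
  have key : ∀ d k, 1 ≤ k → k + d = n →
      (∀ i j, k ≤ i → i ≤ n → k ≤ j → j ≤ n → 0 ≤ Pk k i j) ∧
      (∀ i, k ≤ i → i < n → ∑ j ∈ Finset.Icc k n, Pk k i j = 1) ∧
      (∑ j ∈ Finset.Icc k n, Pk k n j ≤ 1) ∧
      (∀ i j, k ≤ i → i ≤ n → k ≤ j → j ≤ n → θ i * Pk k i j = θ j * Pk k j i) ∧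
      Pk k n n = 0 := by
    intro d
    induction d with
    | zero =>
      intro k h1 hk
      obtain rfl : k = n := by omega
      refine ⟨?_, ?_, ?_, ?_, hPtop⟩
      · intro i j a b c e
        obtain rfl : i = k := by omega
        obtain rfl : j = i := by omega
        exact hPtop.ge
      · intro i a b
        omega
      · simp [hPtop]
      · intro i j a b c e
        obtain rfl : i = k := by omega
        obtain rfl : j = i := by omega
        rfl
    | succ d ih =>
      intro k h1 hk
      have hkn : k < n := by omega
      obtain ⟨A, B, C, D, E⟩ := ih (k+1) (by omega) (by omega)
      have hS := hspos (k+1) (by omega) (by omega)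
      have hL := hle k h1 hkn
      have hT := hpos k h1 hkn.le
      have hrow : ∀ i, k < i → i ≤ n → ∑ j ∈ Finset.Icc k n, Pk k i j
          = θ k / s (k+1) + (1 - θ k / s (k+1)) * ∑ j ∈ Finset.Icc (k+1) n, Pk (k+1) i j := by
        intro i a b
        rw [hsplit _ k hkn.le, hPcol k i h1 a b, Finset.mul_sum]
        congr 1
        refine Finset.sum_congr rfl (fun j hj => ?_)
        rw [Finset.mem_Icc] at hj
        exact hPrec k i j h1 a b (by omega) hj.2
      refine ⟨?_, ?_, ?_, ?_, ?_⟩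
      · intro i j a b c e
        rcases a.eq_or_lt with rfl | a'
        · rcases c.eq_or_lt with rfl | c'
          · exact (hPdiag _ h1 hkn).ge
          · rw [hProw _ _ h1 c' e]
            exact div_nonneg (hpos j (by omega) e).le hS.le
        · rcases c.eq_or_lt with rfl | c'
          · rw [hPcol _ _ h1 a' b]
            exact div_nonneg hT.le hS.le
          · rw [hPrec k i j h1 a' b c' e]
            exact mul_nonneg (by linarith) (A i j a' b c' e)
      · intro i a b
        rcases a.eq_or_lt with rfl | a'
        · rw [hsplit _ k hkn.le, hPdiag k h1 hkn, zero_add]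
          have : ∑ j ∈ Finset.Icc (k+1) n, Pk k k j = ∑ j ∈ Finset.Icc (k+1) n, θ j / s (k+1) := by
            refine Finset.sum_congr rfl (fun j hj => ?_)
            rw [Finset.mem_Icc] at hj
            exact hProw k j h1 (by omega) hj.2
          rw [this, ← Finset.sum_div, ← hs, div_self hS.ne']
        · rw [hrow i a' b.le, B i a' b]
          ring
      · rw [hrow n hkn le_rfl]
        nlinarith
      · intro i j a b c e
        rcases a.eq_or_lt with rfl | a'
        · rcases c.eq_or_lt with rfl | c'
          · rfl
          · rw [hProw _ _ h1 c' e, hPcol _ _ h1 c' e]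
            ring
        · rcases c.eq_or_lt with rfl | c'
          · rw [hPcol _ _ h1 a' b, hProw _ _ h1 a' b]
            ring
          · rw [hPrec k i j h1 a' b c' e, hPrec k j i h1 c' e a' b]
            linear_combination (1 - θ k / s (k+1)) * D i j a' b c' e
      · rw [hPrec k n n h1 hkn le_rfl hkn le_rfl, E, mul_zero]
  obtain ⟨A, B, C, D, E⟩ := key (n-1) 1 le_rfl (by omega)
  have hlast : ∀ f : ℕ → ℝ,
      ∑ j ∈ Finset.Icc 1 n, f j = ∑ j ∈ Finset.Icc 1 (n-1), f j + f n := by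
    intro f
    obtain ⟨m, rfl⟩ : ∃ m, n = m + 1 := ⟨n - 1, by omega⟩
    rw [Finset.sum_Icc_succ_top (by omega)]
    rfl
  have hrowS : ∀ i, 1 ≤ i → i ≤ n → ∑ j ∈ Finset.Icc 1 n, PA i j = 1 := by
    intro i h1 h2
    rcases h2.eq_or_lt with rfl | h
    · rw [hlast, hPAnn, Finset.sum_congr rfl (g := fun j => Pk 1 i j)]
      · ring
      · intro j hj
        rw [Finset.mem_Icc] at hj
        exact hPA i j h1 h2 hj.1 (by omega) (by omega)
    · rw [← B i h1 h]
      refine Finset.sum_congr rfl (fun j hj => ?_)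
      rw [Finset.mem_Icc] at hj
      exact hPA i j h1 h2 hj.1 hj.2 (by omega)
  have hrev : ∀ i j, 1 ≤ i → i ≤ n → 1 ≤ j → j ≤ n → θ i * PA i j = θ j * PA j i := by
    intro i j a b c e
    by_cases h : i = n ∧ j = n
    · rw [h.1, h.2]
    · rw [hPA i j a b c e h, hPA j i c e a b (by tauto)]
      exact D i j a b c e
  refine ⟨?_, hrowS, hrev, ?_⟩
  · intro i j a b c e
    by_cases h : i = n ∧ j = n
    · rw [h.1, h.2, hPAnn]
      rw [hlast, E] at C
      linarith
    · rw [hPA i j a b c e h]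
      exact A i j a b c e
  · intro j c e
    rw [Finset.sum_congr rfl (g := fun i => θ j * PA j i), ← Finset.mul_sum, hrowS j c e, mul_one]
    intro i hi
    rw [Finset.mem_Icc] at hi
    exact hrev i j hi.1 hi.2 c e
end

section
/- For the matrix P_A given by the recursive construction: for every x ∈ ℝⁿ with ⟨x, 𝟙⟩_θ = 0 one has ⟨P_A x, x⟩_θ ≤ −(θ₁/(1−θ₁)) ⟨x, x⟩_θ. Hence the second largest eigenvalue of P_A (the supremum of the Rayleigh quotient ⟨P_A x, x⟩_θ / ⟨x, x⟩_θ over nonzero x with ⟨x, 𝟙⟩_θ = 0) equals −θ₁/(1−θ₁), and this value is minimal among the second largest eigenvalues of all row-stochastic matrices reversible with respect to θ. -/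
lemma aux_head (n k : ℕ) (hk : k ≤ n) (f : ℕ → ℝ) :
    ∑ i ∈ Finset.Icc k n, f i = f k + ∑ i ∈ Finset.Icc (k+1) n, f i := by
  rw [← Finset.insert_Icc_add_one_left_eq_Icc hk, Finset.sum_insert (by simp)]

lemma aux_step (n k : ℕ) (hk : k < n) (θ x : ℕ → ℝ) (s' : ℝ) (A B : ℕ → ℕ → ℝ)
    (hd : A k k = 0)
    (hr : ∀ j, k < j → j ≤ n → A k j = θ j / s')
    (hc : ∀ j, k < j → j ≤ n → A j k = θ k / s')
    (hrec : ∀ i j, k < i → i ≤ n → k < j → j ≤ n → A i j = (1 - θ k / s') * B i j) :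
    ∑ i ∈ Finset.Icc k n, (∑ j ∈ Finset.Icc k n, A i j * x j) * x i * θ i
    = 2 * θ k * x k * (∑ i ∈ Finset.Icc (k+1) n, x i * θ i) / s' + (1 - θ k / s') *
      ∑ i ∈ Finset.Icc (k+1) n, (∑ j ∈ Finset.Icc (k+1) n, B i j * x j) * x i * θ i := by
  rw [aux_head n k hk.le, aux_head n k hk.le]
  have h1 : ∑ j ∈ Finset.Icc (k+1) n, A k j * x j
      = (∑ i ∈ Finset.Icc (k+1) n, x i * θ i) / s' := by
    rw [Finset.sum_div]
    refine Finset.sum_congr rfl fun j hj => ?_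
    rw [Finset.mem_Icc] at hj
    rw [hr j (by omega) hj.2]; ring
  have h2 : ∑ i ∈ Finset.Icc (k+1) n, (∑ j ∈ Finset.Icc k n, A i j * x j) * x i * θ i
      = θ k / s' * x k * (∑ i ∈ Finset.Icc (k+1) n, x i * θ i) + (1 - θ k / s') *
      ∑ i ∈ Finset.Icc (k+1) n, (∑ j ∈ Finset.Icc (k+1) n, B i j * x j) * x i * θ i := by
    rw [Finset.mul_sum, Finset.mul_sum, ← Finset.sum_add_distrib]
    refine Finset.sum_congr rfl fun i hi => ?_
    rw [Finset.mem_Icc] at hi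
    rw [aux_head n k hk.le, hc i (by omega) hi.2]
    have : ∑ j ∈ Finset.Icc (k+1) n, A i j * x j
        = (1 - θ k / s') * ∑ j ∈ Finset.Icc (k+1) n, B i j * x j := by
      rw [Finset.mul_sum]
      refine Finset.sum_congr rfl fun j hj => ?_
      rw [Finset.mem_Icc] at hj
      rw [hrec i j (by omega) hi.2 (by omega) hj.2]; ring
    rw [this]; ring
  rw [h1, h2, hd]; ring

lemma aux_cs (n k : ℕ) (θ x : ℕ → ℝ) (h : ∀ i, k ≤ i → i ≤ n → 0 < θ i) :
    (∑ i ∈ Finset.Icc k n, x i * θ i)^2 ≤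
      (∑ i ∈ Finset.Icc k n, θ i) * ∑ i ∈ Finset.Icc k n, x i * x i * θ i := by
  refine Finset.sum_sq_le_sum_mul_sum_of_sq_eq_mul _ ?_ ?_ ?_
  · intro i hi; rw [Finset.mem_Icc] at hi; exact (h i hi.1 hi.2).le
  · intro i hi; rw [Finset.mem_Icc] at hi
    exact mul_nonneg (mul_self_nonneg _) (h i hi.1 hi.2).le
  · intro i _; ring

lemma aux_main (n : ℕ) (θ : ℕ → ℝ)
    (hpos : ∀ i, 1 ≤ i → i ≤ n → 0 < θ i)
    (hmono : ∀ i j, 1 ≤ i → i ≤ j → j ≤ n → θ i ≤ θ j)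
    (s : ℕ → ℝ) (hs : ∀ k, s k = ∑ l ∈ Finset.Icc k n, θ l)
    (A : ℕ → ℕ → ℕ → ℝ) (htop : A n n n = 1)
    (hd : ∀ k, 1 ≤ k → k < n → A k k k = 0)
    (hr : ∀ k j, 1 ≤ k → k < j → j ≤ n → A k k j = θ j / s (k + 1))
    (hc : ∀ k j, 1 ≤ k → k < j → j ≤ n → A k j k = θ k / s (k + 1))
    (hrec : ∀ k i j, 1 ≤ k → k < i → i ≤ n → k < j → j ≤ n →
      A k i j = (1 - θ k / s (k + 1)) * A (k + 1) i j) (x : ℕ → ℝ) (d : ℕ) :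
    ∀ k, 1 ≤ k → k + d = n →
    (∀ t, t ≤ θ k → (s k - t) *
      ∑ i ∈ Finset.Icc k n, (∑ j ∈ Finset.Icc k n, A k i j * x j) * x i * θ i ≤
      (∑ i ∈ Finset.Icc k n, x i * θ i)^2 - t * ∑ i ∈ Finset.Icc k n, x i * x i * θ i) ∧
    (∀ c, (∀ i, k ≤ i → i ≤ n → x i = c) →
      ∑ i ∈ Finset.Icc k n, (∑ j ∈ Finset.Icc k n, A k i j * x j) * x i * θ i
       = c^2 * s k) := by
  induction d with
  | zero =>
    intro k hk hkn
    obtain rfl : k = n := by omega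
    simp only [hs, Finset.Icc_self, Finset.sum_singleton, htop]
    refine ⟨fun t _ => le_of_eq (by ring), fun c h => ?_⟩
    rw [h k le_rfl le_rfl]; ring
  | succ d ih =>
    intro k hk hkn
    have hlt : k < n := by omega
    obtain ⟨ih1, ih2⟩ := ih (k+1) (by omega) (by omega)
    have hpos' : 0 < s (k+1) := by
      rw [hs]
      refine Finset.sum_pos (fun i hi => ?_) ⟨n, by simp; omega⟩
      rw [Finset.mem_Icc] at hi; exact hpos i (by omega) hi.2
    have hstep := aux_step n k hlt θ x (s (k+1)) (A k) (A (k+1)) (hd k hk hlt)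
      (fun j => hr k j hk) (fun j => hc k j hk) (fun i j => hrec k i j hk)
    have hsk : s k = θ k + s (k+1) := by rw [hs, hs, aux_head n k hlt.le]
    have hcs := aux_cs n k θ x (fun i h1 h2 => hpos i (by omega) h2)
    rw [← hs] at hcs
    have hM := aux_head n k hlt.le (fun i => x i * θ i)
    have hN := aux_head n k hlt.le (fun i => x i * x i * θ i)
    constructor
    · intro t ht
      have h1 := ih1 (θ k) (hmono k (k+1) hk (by omega) (by omega))
      clear ih1 ih2
      generalize ∑ i ∈ Finset.Icc k n, (∑ j ∈ Finset.Icc k n, A k i j * x j) * x i * θ i = F at *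
      generalize ∑ i ∈ Finset.Icc (k+1) n, (∑ j ∈ Finset.Icc (k+1) n, A (k+1) i j * x j) * x i * θ i = F' at *
      generalize ∑ i ∈ Finset.Icc k n, x i * θ i = M at *
      generalize ∑ i ∈ Finset.Icc (k+1) n, x i * θ i = M' at *
      generalize ∑ i ∈ Finset.Icc k n, x i * x i * θ i = N at *
      generalize ∑ i ∈ Finset.Icc (k+1) n, x i * x i * θ i = N' at *
      have h2 : s (k+1) * F ≤ M^2 - θ k * N := by
        have : s (k+1) * F = 2 * θ k * x k * M' + (s (k+1) - θ k) * F' := by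
          rw [hstep]; field_simp
        rw [this, hM, hN]; nlinarith
      have h3 : 0 ≤ s k - t := by linarith
      have h4 := mul_le_mul_of_nonneg_left h2 h3
      have h5 := mul_le_mul_of_nonneg_left hcs (sub_nonneg.2 ht)
      refine le_of_mul_le_mul_left ?_ hpos'
      have e : s (k+1) = s k - θ k := by linarith
      rw [e] at h4 ⊢
      nlinarith
    · intro c h
      rw [hstep, ih2 c (fun i h1 h2 => h i (by omega) h2), h k le_rfl hlt.le, hsk]
      have : ∑ i ∈ Finset.Icc (k+1) n, x i * θ i = c * s (k+1) := by
        rw [hs, Finset.mul_sum]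
        refine Finset.sum_congr rfl fun j hj => ?_
        rw [Finset.mem_Icc] at hj
        rw [h j (by omega) hj.2]
      rw [this]; field_simp; ring

lemma aux_test (n : ℕ) (hn : 2 ≤ n) (θ : ℕ → ℝ)
    (hsum : ∑ i ∈ Finset.Icc 1 n, θ i = 1) (y : ℕ → ℝ)
    (hy1 : y 1 = 1 - θ 1) (hy : ∀ i, 2 ≤ i → y i = - θ 1) :
    (∑ i ∈ Finset.Icc 1 n, y i * θ i) = 0 ∧
    (∑ i ∈ Finset.Icc 1 n, y i * y i * θ i) = θ 1 * (1 - θ 1) ∧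
    ∀ f : ℕ → ℝ, ∑ i ∈ Finset.Icc 1 n, f i * y i = f 1 - θ 1 * ∑ i ∈ Finset.Icc 1 n, f i := by
  have key : ∀ f : ℕ → ℝ,
      ∑ i ∈ Finset.Icc 1 n, f i * y i = f 1 - θ 1 * ∑ i ∈ Finset.Icc 1 n, f i := by
    intro f
    have : ∑ i ∈ Finset.Icc 2 n, f i * y i = - θ 1 * ∑ i ∈ Finset.Icc 2 n, f i := by
      rw [Finset.mul_sum]
      refine Finset.sum_congr rfl fun j hj => ?_
      rw [Finset.mem_Icc] at hj
      rw [hy j hj.1]; ring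
    rw [aux_head n 1 (by omega), aux_head n 1 (by omega) f]
    simp only [Nat.reduceAdd]
    rw [this, hy1]; ring
  have h0 : (∑ i ∈ Finset.Icc 1 n, y i * θ i) = 0 := by
    have := key θ
    rw [hsum] at this
    rw [Finset.sum_congr rfl fun i _ => mul_comm (y i) (θ i), this]; ring
  refine ⟨h0, ?_, key⟩
  have := key (fun i => y i * θ i)
  simp only [h0] at this
  rw [Finset.sum_congr rfl fun i _ => (by ring : y i * y i * θ i = y i * θ i * y i), this, hy1]
  ring

/-- **The recursive construction minimizes the second largest eigenvalue.**
With the recursive construction of `PA` from the probability vector `θ` (states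
`1, …, n`, `n ≥ 2`, `s k = ∑_{l=k}^n θ l`), we have: the quadratic form bound
`⟨PA x, x⟩_θ ≤ −(θ₁/(1−θ₁)) ⟨x, x⟩_θ` for every `x` with `⟨x, 𝟙⟩_θ = 0`; the second
largest eigenvalue of `PA` (the supremum of the Rayleigh quotient over nonzero
`θ`-mean-zero vectors) equals `−θ₁/(1−θ₁)`; and this value is minimal among the
second largest eigenvalues of all row-stochastic matrices reversible w.r.t. `θ`. -/
theorem recursive_construction_minimizes_second_eigenvalue
    (n : ℕ) (hn : 2 ≤ n) (θ : ℕ → ℝ)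
    (hpos : ∀ i, 1 ≤ i → i ≤ n → 0 < θ i)
    (hmono : ∀ i j, 1 ≤ i → i ≤ j → j ≤ n → θ i ≤ θ j)
    (hsum : ∑ i ∈ Finset.Icc 1 n, θ i = 1)
    (s : ℕ → ℝ) (hs : ∀ k, s k = ∑ l ∈ Finset.Icc k n, θ l)
    (Pk : ℕ → ℕ → ℕ → ℝ)
    (hPtop : Pk n n n = 0)
    (hPdiag : ∀ k, 1 ≤ k → k < n → Pk k k k = 0)
    (hProw : ∀ k j, 1 ≤ k → k < j → j ≤ n → Pk k k j = θ j / s (k + 1))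
    (hPcol : ∀ k j, 1 ≤ k → k < j → j ≤ n → Pk k j k = θ k / s (k + 1))
    (hPrec : ∀ k i j, 1 ≤ k → k < i → i ≤ n → k < j → j ≤ n →
      Pk k i j = (1 - θ k / s (k + 1)) * Pk (k + 1) i j)
    (PA : ℕ → ℕ → ℝ)
    (hPA : ∀ i j, 1 ≤ i → i ≤ n → 1 ≤ j → j ≤ n → ¬(i = n ∧ j = n) → PA i j = Pk 1 i j)
    (hPAnn : PA n n = 1 - ∑ j ∈ Finset.Icc 1 (n - 1), Pk 1 n j) :
    (∀ x : ℕ → ℝ, (∑ i ∈ Finset.Icc 1 n, x i * θ i) = 0 →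
      ∑ i ∈ Finset.Icc 1 n, (∑ j ∈ Finset.Icc 1 n, PA i j * x j) * x i * θ i ≤
        -(θ 1 / (1 - θ 1)) * ∑ i ∈ Finset.Icc 1 n, x i * x i * θ i) ∧
    (sSup {r : ℝ | ∃ x : ℕ → ℝ, (∃ i, 1 ≤ i ∧ i ≤ n ∧ x i ≠ 0) ∧
        (∑ i ∈ Finset.Icc 1 n, x i * θ i) = 0 ∧
        r = (∑ i ∈ Finset.Icc 1 n, (∑ j ∈ Finset.Icc 1 n, PA i j * x j) * x i * θ i) /
          (∑ i ∈ Finset.Icc 1 n, x i * x i * θ i)} = -(θ 1 / (1 - θ 1))) ∧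
    (∀ Q : ℕ → ℕ → ℝ,
      (∀ i j, 1 ≤ i → i ≤ n → 1 ≤ j → j ≤ n → 0 ≤ Q i j) →
      (∀ i, 1 ≤ i → i ≤ n → ∑ j ∈ Finset.Icc 1 n, Q i j = 1) →
      (∀ i j, 1 ≤ i → i ≤ n → 1 ≤ j → j ≤ n → θ i * Q i j = θ j * Q j i) →
      -(θ 1 / (1 - θ 1)) ≤
        sSup {r : ℝ | ∃ x : ℕ → ℝ, (∃ i, 1 ≤ i ∧ i ≤ n ∧ x i ≠ 0) ∧
          (∑ i ∈ Finset.Icc 1 n, x i * θ i) = 0 ∧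
          r = (∑ i ∈ Finset.Icc 1 n, (∑ j ∈ Finset.Icc 1 n, Q i j * x j) * x i * θ i) /
            (∑ i ∈ Finset.Icc 1 n, x i * x i * θ i)}) := by
  have hθ1 : 0 < θ 1 := hpos 1 le_rfl (by omega)
  have hs2 : s 2 = 1 - θ 1 := by
    rw [aux_head n 1 (by omega)] at hsum
    rw [hs]; simp only [Nat.reduceAdd] at hsum; linarith
  have hs1 : s 1 = 1 := by rw [hs, hsum]
  have h2pos : 0 < 1 - θ 1 := by
    rw [← hs2, hs]
    refine Finset.sum_pos (fun i hi => ?_) ⟨n, by simp; omega⟩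
    rw [Finset.mem_Icc] at hi; exact hpos i (by omega) hi.2
  let A : ℕ → ℕ → ℕ → ℝ := fun k i j =>
    if i = n ∧ j = n then 1 - ∑ j ∈ Finset.Icc k (n-1), Pk k n j else Pk k i j
  have htop : A n n n = 1 := by
    have : Finset.Icc n (n-1) = ∅ := Finset.Icc_eq_empty (by omega)
    simp [A, this]
  have hd : ∀ k, 1 ≤ k → k < n → A k k k = 0 := by
    intro k h1 h2
    simp only [A, if_neg (show ¬(k = n ∧ k = n) by omega)]
    exact hPdiag k h1 h2
  have hr : ∀ k j, 1 ≤ k → k < j → j ≤ n → A k k j = θ j / s (k + 1) := by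
    intro k j h1 h2 h3
    simp only [A, if_neg (show ¬(k = n ∧ j = n) by omega)]
    exact hProw k j h1 h2 h3
  have hc : ∀ k j, 1 ≤ k → k < j → j ≤ n → A k j k = θ k / s (k + 1) := by
    intro k j h1 h2 h3
    simp only [A, if_neg (show ¬(j = n ∧ k = n) by omega)]
    exact hPcol k j h1 h2 h3
  have hrec : ∀ k i j, 1 ≤ k → k < i → i ≤ n → k < j → j ≤ n →
      A k i j = (1 - θ k / s (k + 1)) * A (k + 1) i j := by
    intro k i j h1 h2 h3 h4 h5
    by_cases h : i = n ∧ j = n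
    · simp only [A, if_pos h]
      rw [aux_head (n-1) k (by omega), hPcol k n h1 (by omega) le_rfl]
      have : ∑ j ∈ Finset.Icc (k+1) (n-1), Pk k n j
          = (1 - θ k / s (k + 1)) * ∑ j ∈ Finset.Icc (k+1) (n-1), Pk (k+1) n j := by
        rw [Finset.mul_sum]
        refine Finset.sum_congr rfl fun j hj => ?_
        rw [Finset.mem_Icc] at hj
        exact hPrec k n j h1 (by omega) le_rfl (by omega) (by omega)
      rw [this]; ring
    · simp only [A, if_neg h]
      exact hPrec k i j h1 h2 h3 h4 h5
  have hAP : ∀ x : ℕ → ℝ,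
      ∑ i ∈ Finset.Icc 1 n, (∑ j ∈ Finset.Icc 1 n, PA i j * x j) * x i * θ i
      = ∑ i ∈ Finset.Icc 1 n, (∑ j ∈ Finset.Icc 1 n, A 1 i j * x j) * x i * θ i := by
    intro x
    refine Finset.sum_congr rfl fun i hi => ?_
    congr 2
    refine Finset.sum_congr rfl fun j hj => ?_
    rw [Finset.mem_Icc] at hi hj
    congr 1
    by_cases h : i = n ∧ j = n
    · simp only [A, if_pos h]
      rw [h.1, h.2, hPAnn]
    · simp only [A, if_neg h]
      exact hPA i j hi.1 hi.2 hj.1 hj.2 h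
  have hmain := aux_main n θ hpos hmono s hs A htop hd hr hc hrec
  have part1 : ∀ x : ℕ → ℝ, (∑ i ∈ Finset.Icc 1 n, x i * θ i) = 0 →
      ∑ i ∈ Finset.Icc 1 n, (∑ j ∈ Finset.Icc 1 n, PA i j * x j) * x i * θ i ≤
        -(θ 1 / (1 - θ 1)) * ∑ i ∈ Finset.Icc 1 n, x i * x i * θ i := by
    intro x hx
    have h := (hmain x (n-1) 1 le_rfl (by omega)).1 (θ 1) le_rfl
    rw [hx, hs1, ← hAP] at h
    refine le_of_mul_le_mul_left (h.trans (le_of_eq ?_)) h2pos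
    field_simp; ring
  have hN : ∀ x : ℕ → ℝ, (∃ i, 1 ≤ i ∧ i ≤ n ∧ x i ≠ 0) →
      0 < ∑ i ∈ Finset.Icc 1 n, x i * x i * θ i := by
    rintro x ⟨i, h1, h2, h3⟩
    refine Finset.sum_pos' (fun j hj => ?_) ⟨i, by simp [h1, h2], ?_⟩
    · rw [Finset.mem_Icc] at hj
      exact mul_nonneg (mul_self_nonneg _) (hpos j hj.1 hj.2).le
    · exact mul_pos (mul_self_pos.2 h3) (hpos i h1 h2)
  let y : ℕ → ℝ := fun i => if i = 1 then 1 - θ 1 else - θ 1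
  have hy1 : y 1 = 1 - θ 1 := by simp [y]
  have hy2 : ∀ i, 2 ≤ i → y i = - θ 1 := by
    intro i hi
    simp only [y, if_neg (show i ≠ 1 by omega)]
  obtain ⟨hy0, hyN, hyf⟩ := aux_test n hn θ hsum y hy1 hy2
  have hyne : ∃ i, 1 ≤ i ∧ i ≤ n ∧ y i ≠ 0 := ⟨1, le_rfl, by omega, by rw [hy1]; exact h2pos.ne'⟩
  refine ⟨part1, ?_, ?_⟩
  · refine IsGreatest.csSup_eq ⟨⟨y, hyne, hy0, ?_⟩, ?_⟩
    · have hstep := aux_step n 1 (by omega) θ y (s 2) (A 1) (A 2) (hd 1 le_rfl (by omega))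
        (fun j => hr 1 j le_rfl) (fun j => hc 1 j le_rfl) (fun i j => hrec 1 i j le_rfl)
      have hc2 := (hmain y (n-2) 2 (by omega) (by omega)).2 (-θ 1) (fun i h _ => hy2 i h)
      have hM : ∑ i ∈ Finset.Icc 2 n, y i * θ i = -θ 1 * (1 - θ 1) := by
        rw [aux_head n 1 (by omega)] at hy0
        simp only [Nat.reduceAdd, hy1] at hy0
        linarith
      simp only [Nat.reduceAdd] at hstep
      rw [hc2, hM, hs2, hy1] at hstep
      rw [hAP, hstep, hyN]
      field_simp; ring
    · rintro r ⟨x, hx, hx0, rfl⟩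
      rw [div_le_iff₀ (hN x hx)]
      exact part1 x hx0
  · intro Q hQ0 hQ1 hQr
    refine le_csSup_of_le ?_ ⟨y, hyne, hy0, rfl⟩ ?_
    · refine ⟨1, ?_⟩
      rintro r ⟨x, hx, hx0, rfl⟩
      rw [div_le_iff₀ (hN x hx), one_mul]
      have e1 : ∑ i ∈ Finset.Icc 1 n, ∑ j ∈ Finset.Icc 1 n, θ i * Q i j * (x i * x i)
          = ∑ i ∈ Finset.Icc 1 n, x i * x i * θ i := by
        refine Finset.sum_congr rfl fun i hi => ?_
        rw [Finset.mem_Icc] at hi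
        rw [← Finset.sum_mul, ← Finset.mul_sum, hQ1 i hi.1 hi.2]; ring
      have e2 : ∑ i ∈ Finset.Icc 1 n, ∑ j ∈ Finset.Icc 1 n, θ i * Q i j * (x j * x j)
          = ∑ i ∈ Finset.Icc 1 n, x i * x i * θ i := by
        rw [Finset.sum_comm, ← e1]
        refine Finset.sum_congr rfl fun i hi => Finset.sum_congr rfl fun j hj => ?_
        rw [Finset.mem_Icc] at hi hj
        rw [hQr i j hi.1 hi.2 hj.1 hj.2]
      have e3 : ∑ i ∈ Finset.Icc 1 n, (∑ j ∈ Finset.Icc 1 n, Q i j * x j) * x i * θ i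
          ≤ ∑ i ∈ Finset.Icc 1 n, ∑ j ∈ Finset.Icc 1 n,
            (θ i * Q i j * (x i * x i) + θ i * Q i j * (x j * x j)) / 2 := by
        refine Finset.sum_le_sum fun i hi => ?_
        rw [Finset.sum_mul, Finset.sum_mul]
        refine Finset.sum_le_sum fun j hj => ?_
        rw [Finset.mem_Icc] at hi hj
        have h := mul_nonneg (hpos i hi.1 hi.2).le (hQ0 i j hi.1 hi.2 hj.1 hj.2)
        have := mul_nonneg h (sq_nonneg (x i - x j))
        nlinarith
      simp only [← Finset.sum_div, Finset.sum_add_distrib, e1, e2] at e3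
      linarith
    · rw [hyN]
      have e : ∑ i ∈ Finset.Icc 1 n, (∑ j ∈ Finset.Icc 1 n, Q i j * y j) * y i * θ i
          = θ 1 * (Q 1 1 - θ 1) := by
        have : ∀ i ∈ Finset.Icc 1 n, (∑ j ∈ Finset.Icc 1 n, Q i j * y j) * y i * θ i
            = θ 1 * (Q 1 i * y i) - θ 1 * (y i * θ i) := by
          intro i hi
          rw [Finset.mem_Icc] at hi
          rw [hyf, hQ1 i hi.1 hi.2]
          linear_combination y i * hQr i 1 hi.1 hi.2 le_rfl (by omega)
        rw [Finset.sum_congr rfl this, Finset.sum_sub_distrib, ← Finset.mul_sum,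
          ← Finset.mul_sum, hy0, hyf, hQ1 1 le_rfl (by omega)]
        ring
      rw [e, mul_div_mul_left _ _ hθ1.ne', ← neg_div]
      have := hQ0 1 1 le_rfl (by omega) le_rfl (by omega)
      gcongr
      linarith
end

section
/- Let P ∈ ℝ^{n×n} be an irreducible row-stochastic matrix reversible with respect to θ, and set λ₂ = sup{ ⟨Px, x⟩_θ : x ∈ ℝⁿ, ⟨x, 𝟙⟩_θ = 0, ‖x‖_θ = 1 } (so λ₂ < 1). Then the supremum of the asymptotic variance ν(f, P) over all θ-mean-zero f ∈ ℝⁿ with ‖f‖_θ = 1 equals (1 + λ₂)/(1 − λ₂), and this supremum is attained. -/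
open Matrix

namespace RevAux

def D {N : ℕ} (θ x y : Fin N → ℝ) : ℝ := ∑ i, x i * y i * θ i

variable {N : ℕ} {θ : Fin N → ℝ}

lemma D_comm (x y : Fin N → ℝ) : D θ x y = D θ y x := by
  unfold D; exact Finset.sum_congr rfl fun i _ => by ring

lemma D_add (x y z : Fin N → ℝ) : D θ (x + y) z = D θ x z + D θ y z := by
  unfold D; rw [← Finset.sum_add_distrib]
  exact Finset.sum_congr rfl fun i _ => by simp only [Pi.add_apply]; ring

lemma D_sub (x y z : Fin N → ℝ) : D θ (x - y) z = D θ x z - D θ y z := by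
  unfold D; rw [← Finset.sum_sub_distrib]
  exact Finset.sum_congr rfl fun i _ => by simp only [Pi.sub_apply]; ring

lemma D_smul (c : ℝ) (x z : Fin N → ℝ) : D θ (c • x) z = c * D θ x z := by
  unfold D; rw [Finset.mul_sum]
  exact Finset.sum_congr rfl fun i _ => by simp only [Pi.smul_apply, smul_eq_mul]; ring

lemma D_add' (x y z : Fin N → ℝ) : D θ z (x + y) = D θ z x + D θ z y := by
  rw [D_comm, D_add, D_comm x, D_comm y]

lemma D_sub' (x y z : Fin N → ℝ) : D θ z (x - y) = D θ z x - D θ z y := by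
  rw [D_comm, D_sub, D_comm x, D_comm y]

lemma D_smul' (c : ℝ) (x z : Fin N → ℝ) : D θ z (c • x) = c * D θ z x := by
  rw [D_comm, D_smul, D_comm]

lemma D_nonneg (hθ : ∀ i, 0 < θ i) (x : Fin N → ℝ) : 0 ≤ D θ x x :=
  Finset.sum_nonneg fun i _ => mul_nonneg (mul_self_nonneg _) (hθ i).le

lemma D_eq_zero (hθ : ∀ i, 0 < θ i) {x : Fin N → ℝ} (h : D θ x x = 0) : x = 0 := by
  unfold D at h
  rw [Finset.sum_eq_zero_iff_of_nonneg
    (fun i _ => mul_nonneg (mul_self_nonneg _) (hθ i).le)] at h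
  funext i
  have := h i (Finset.mem_univ i)
  have h2 := (hθ i).ne'
  simpa [h2] using this

lemma D_one (x : Fin N → ℝ) : D θ x 1 = ∑ i, x i * θ i := by
  simp [D]

lemma D_symm {P : Matrix (Fin N) (Fin N) ℝ} (hrev : ∀ i j, θ i * P i j = θ j * P j i)
    (x y : Fin N → ℝ) : D θ (P *ᵥ x) y = D θ x (P *ᵥ y) := by
  simp only [D, Matrix.mulVec, dotProduct, Finset.sum_mul, Finset.mul_sum]
  rw [Finset.sum_comm]
  refine Finset.sum_congr rfl fun i _ => Finset.sum_congr rfl fun j _ => ?_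
  linear_combination x i * y j * hrev j i

lemma mulVec_one' {P : Matrix (Fin N) (Fin N) ℝ} (hrow : ∀ i, ∑ j, P i j = 1) :
    P *ᵥ (1 : Fin N → ℝ) = 1 := by
  funext i; simp [Matrix.mulVec, dotProduct, hrow]

lemma dirichlet {P : Matrix (Fin N) (Fin N) ℝ} (hrow : ∀ i, ∑ j, P i j = 1)
    (hrev : ∀ i j, θ i * P i j = θ j * P j i) (x : Fin N → ℝ) :
    ∑ i, ∑ j, θ i * P i j * (x i - x j) ^ 2 = 2 * (D θ x x - D θ (P *ᵥ x) x) := by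
  have e1 : ∑ i, ∑ j, θ i * P i j * (x i) ^ 2 = D θ x x := by
    unfold D
    refine Finset.sum_congr rfl fun i _ => ?_
    rw [← Finset.sum_mul, ← Finset.mul_sum, hrow]; ring
  have e2 : ∑ i, ∑ j, θ i * P i j * (x j) ^ 2 = D θ x x := by
    rw [← e1, Finset.sum_comm]
    exact Finset.sum_congr rfl fun i _ => Finset.sum_congr rfl fun j _ => by rw [hrev]
  have e3 : ∑ i, ∑ j, θ i * P i j * (x i * x j) = D θ (P *ᵥ x) x := by
    simp only [D, Matrix.mulVec, dotProduct, Finset.sum_mul]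
    exact Finset.sum_congr rfl fun i _ => Finset.sum_congr rfl fun j _ => by ring
  have : ∑ i, ∑ j, θ i * P i j * (x i - x j) ^ 2
      = ∑ i, ∑ j, θ i * P i j * (x i) ^ 2 + ∑ i, ∑ j, θ i * P i j * (x j) ^ 2
        - 2 * ∑ i, ∑ j, θ i * P i j * (x i * x j) := by
    simp only [Finset.mul_sum, ← Finset.sum_add_distrib, ← Finset.sum_sub_distrib]
    exact Finset.sum_congr rfl fun i _ => Finset.sum_congr rfl fun j _ => by ring
  rw [this, e1, e2, e3]; ring

lemma gap {P : Matrix (Fin N) (Fin N) ℝ} (hθ : ∀ i, 0 < θ i) (hsum : ∑ i, θ i = 1)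
    (hnonneg : ∀ i j, 0 ≤ P i j) (hrow : ∀ i, ∑ j, P i j = 1)
    (hrev : ∀ i j, θ i * P i j = θ j * P j i)
    (hirr : ∀ i j, ∃ m : ℕ, 1 ≤ m ∧ 0 < (P ^ m) i j)
    (x : Fin N → ℝ) (h0 : D θ x 1 = 0) (h1 : D θ x x = 1) : D θ (P *ᵥ x) x < 1 := by
  by_contra hlt
  push Not at hlt
  have hd := dirichlet hrow hrev x
  have hnn : ∀ i j, 0 ≤ θ i * P i j * (x i - x j) ^ 2 := fun i j =>
    mul_nonneg (mul_nonneg (hθ i).le (hnonneg i j)) (sq_nonneg _)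
  have hz : ∑ i, ∑ j, θ i * P i j * (x i - x j) ^ 2 = 0 :=
    le_antisymm (by rw [hd]; linarith)
      (Finset.sum_nonneg fun i _ => Finset.sum_nonneg fun j _ => hnn i j)
  rw [Finset.sum_eq_zero_iff_of_nonneg
    (fun i _ => Finset.sum_nonneg fun j _ => hnn i j)] at hz
  have hP : ∀ i j, P i j ≠ 0 → x i = x j := by
    intro i j hij
    have := hz i (Finset.mem_univ i)
    rw [Finset.sum_eq_zero_iff_of_nonneg (fun j _ => hnn i j)] at this
    have := this j (Finset.mem_univ j)
    have h2 : x i - x j = 0 := by simpa [hij, (hθ i).ne'] using this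
    linarith
  have hPm : ∀ (m : ℕ) i j, (P ^ m) i j ≠ 0 → x i = x j := by
    intro m
    induction m with
    | zero =>
      intro i j h
      by_cases hij : i = j
      · rw [hij]
      · simp [hij] at h
    | succ m ih =>
      intro i j h
      rw [pow_succ, Matrix.mul_apply] at h
      obtain ⟨k, _, hk⟩ := Finset.exists_ne_zero_of_sum_ne_zero h
      exact (ih i k (left_ne_zero_of_mul hk)).trans (hP k j (right_ne_zero_of_mul hk))
  have hc : ∀ i j, x i = x j := fun i j => by
    obtain ⟨m, _, hm⟩ := hirr i j
    exact hPm m i j hm.ne'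
  have hx : ∀ j, x j = 0 := by
    intro j
    rw [D_one] at h0
    have : ∑ i, x i * θ i = x j := by
      rw [Finset.sum_congr rfl (fun i _ => by rw [hc i j]), ← Finset.mul_sum, hsum, mul_one]
    rw [← this, h0]
  simp [D, hx] at h1

end RevAux

/-- **Worst-case asymptotic variance of a reversible chain via the second eigenvalue.**
Let `θ` be a probability vector on `n + 2 ≥ 2` states (positive, nondecreasing) and let
`P` be an irreducible row-stochastic matrix reversible w.r.t. `θ`. Set
`λ₂ = sup { ⟨Px, x⟩_θ : ⟨x, 𝟙⟩_θ = 0, ‖x‖_θ = 1 }` (so `λ₂ < 1`). Then the supremum of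
the asymptotic variance `ν(f, P) = 2⟨g, f⟩_θ − ⟨f, f⟩_θ` (where `(I − P) g = f`) over
all `θ`-mean-zero `f` with `‖f‖_θ = 1` equals `(1 + λ₂)/(1 − λ₂)`, and this supremum
is attained. -/
theorem reversible_worst_case_asymptotic_variance
    (n : ℕ) (θ : Fin (n + 2) → ℝ)
    (hθ1 : 0 < θ 0) (hmono : Monotone θ) (hsum : ∑ i, θ i = 1)
    (P : Matrix (Fin (n + 2)) (Fin (n + 2)) ℝ)
    (hnonneg : ∀ i j, 0 ≤ P i j) (hrow : ∀ i, ∑ j, P i j = 1)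
    (hrev : ∀ i j, θ i * P i j = θ j * P j i)
    (hirr : ∀ i j, ∃ m : ℕ, 1 ≤ m ∧ 0 < (P ^ m) i j)
    (lam2 : ℝ)
    (hlam2 : lam2 = sSup {r : ℝ | ∃ x : Fin (n + 2) → ℝ,
      (∑ i, x i * θ i) = 0 ∧ (∑ i, x i * x i * θ i) = 1 ∧
      r = ∑ i, P.mulVec x i * x i * θ i}) :
    lam2 < 1 ∧
    sSup {v : ℝ | ∃ f g : Fin (n + 2) → ℝ,
        (∑ i, f i * θ i) = 0 ∧ (∑ i, f i * f i * θ i) = 1 ∧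
        ((1 : Matrix (Fin (n + 2)) (Fin (n + 2)) ℝ) - P).mulVec g = f ∧
        v = 2 * (∑ i, g i * f i * θ i) - 1} = (1 + lam2) / (1 - lam2) ∧
    (∃ f g : Fin (n + 2) → ℝ,
      (∑ i, f i * θ i) = 0 ∧ (∑ i, f i * f i * θ i) = 1 ∧
      ((1 : Matrix (Fin (n + 2)) (Fin (n + 2)) ℝ) - P).mulVec g = f ∧
      2 * (∑ i, g i * f i * θ i) - 1 = (1 + lam2) / (1 - lam2)) := by
  have hθ : ∀ i, 0 < θ i := fun i => lt_of_lt_of_le hθ1 (hmono (Fin.zero_le i))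
  have eD : ∀ x y : Fin (n + 2) → ℝ, ∑ i, x i * y i * θ i = RevAux.D θ x y := fun _ _ => rfl
  simp only [eD, ← RevAux.D_one] at hlam2 ⊢
  change lam2 = sSup {r : ℝ | ∃ x : Fin (n + 2) → ℝ, RevAux.D θ x 1 = 0 ∧ RevAux.D θ x x = 1 ∧
    r = RevAux.D θ (P *ᵥ x) x} at hlam2
  change lam2 < 1 ∧ sSup {v : ℝ | ∃ f g : Fin (n + 2) → ℝ, RevAux.D θ f 1 = 0 ∧
      RevAux.D θ f f = 1 ∧ ((1 : Matrix (Fin (n + 2)) (Fin (n + 2)) ℝ) - P) *ᵥ g = f ∧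
      v = 2 * RevAux.D θ g f - 1} = (1 + lam2) / (1 - lam2) ∧
    (∃ f g : Fin (n + 2) → ℝ, RevAux.D θ f 1 = 0 ∧
      RevAux.D θ f f = 1 ∧ ((1 : Matrix (Fin (n + 2)) (Fin (n + 2)) ℝ) - P) *ᵥ g = f ∧
      2 * RevAux.D θ g f - 1 = (1 + lam2) / (1 - lam2))
  have hsum' : RevAux.D θ 1 1 = 1 := by simpa [RevAux.D] using hsum
  have hP1 := RevAux.mulVec_one' hrow
  -- the compact sphere
  obtain ⟨S, hS⟩ : ∃ S : Set (Fin (n + 2) → ℝ),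
    S = {x | RevAux.D θ x 1 = 0 ∧ RevAux.D θ x x = 1} := ⟨_, rfl⟩
  have hcl : IsClosed S := by
    rw [hS]
    refine IsClosed.and (isClosed_eq ?_ continuous_const) (isClosed_eq ?_ continuous_const)
    · unfold RevAux.D; fun_prop
    · unfold RevAux.D; fun_prop
  have hcomp : IsCompact S := by
    refine IsCompact.of_isClosed_subset
      (isCompact_Icc (a := fun _ => -(1 + 1 / θ 0)) (b := fun _ => 1 + 1 / θ 0)) hcl ?_
    intro x hx
    rw [hS] at hx
    have key : ∀ i, |x i| ≤ 1 + 1 / θ 0 := by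
      intro i
      have h1 : x i * x i * θ i ≤ 1 := by
        rw [← hx.2]
        exact Finset.single_le_sum (f := fun i => x i * x i * θ i)
          (fun i _ => mul_nonneg (mul_self_nonneg _) (hθ i).le) (Finset.mem_univ i)
      have h2 : x i * x i * θ 0 ≤ 1 :=
        le_trans (mul_le_mul_of_nonneg_left (hmono (Fin.zero_le i)) (mul_self_nonneg _)) h1
      have h3 : x i * x i ≤ 1 / θ 0 := by rwa [le_div_iff₀ hθ1]
      have h4 : 0 < 1 / θ 0 := by positivity
      exact abs_le_of_sq_le_sq (by nlinarith) (by linarith)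
    exact ⟨fun i => (abs_le.mp (key i)).1, fun i => (abs_le.mp (key i)).2⟩
  -- normalisation
  have hnorm : ∀ x, RevAux.D θ x 1 = 0 → x ≠ 0 →
      (Real.sqrt (RevAux.D θ x x))⁻¹ • x ∈ S := by
    intro x h0 hx
    have hpos : 0 < RevAux.D θ x x :=
      lt_of_le_of_ne (RevAux.D_nonneg hθ x) (fun h => hx (RevAux.D_eq_zero hθ h.symm))
    have hs := Real.sqrt_pos.mpr hpos
    have hq := Real.mul_self_sqrt hpos.le
    rw [hS]
    refine ⟨by rw [RevAux.D_smul, h0, mul_zero], ?_⟩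
    rw [RevAux.D_smul, RevAux.D_smul']
    field_simp
    nlinarith
  have hne : S.Nonempty := by
    have h01 : (1 : Fin (n + 2)) ≠ 0 := by simp
    refine ⟨_, hnorm (Pi.single 0 (1 / θ 0) - Pi.single 1 (1 / θ 1)) ?_ ?_⟩
    · rw [RevAux.D_sub, RevAux.D_one, RevAux.D_one]
      have a0 := (hθ 0).ne'
      have a1 := (hθ 1).ne'
      simp [Pi.single_apply, a0, a1]
    · intro h
      have := congrFun h 0
      have a0 := (hθ 0).ne'
      simp [Pi.single_apply, a0] at this
  have hcont : Continuous fun x : Fin (n + 2) → ℝ => RevAux.D θ (P *ᵥ x) x := by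
    unfold RevAux.D Matrix.mulVec dotProduct; fun_prop
  obtain ⟨x0, hx0, hmax⟩ := hcomp.exists_isMaxOn hne hcont.continuousOn
  have hlam : RevAux.D θ (P *ᵥ x0) x0 = lam2 := by
    rw [hlam2]
    symm
    refine IsGreatest.csSup_eq ⟨?_, ?_⟩
    · rw [hS] at hx0
      exact ⟨x0, hx0.1, hx0.2, rfl⟩
    · rintro r ⟨x, h0, h1, rfl⟩
      exact hmax (by rw [hS]; exact ⟨h0, h1⟩)
  have hbound : ∀ h, RevAux.D θ h 1 = 0 → RevAux.D θ (P *ᵥ h) h ≤ lam2 * RevAux.D θ h h := by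
    intro h h0
    by_cases hh : h = 0
    · simp [hh, RevAux.D]
    have hpos : 0 < RevAux.D θ h h :=
      lt_of_le_of_ne (RevAux.D_nonneg hθ h) (fun e => hh (RevAux.D_eq_zero hθ e.symm))
    have hm := hmax (hnorm h h0 hh)
    have hs := Real.sqrt_pos.mpr hpos
    have hq := Real.mul_self_sqrt hpos.le
    simp only [Set.mem_setOf_eq, hlam, Matrix.mulVec_smul, RevAux.D_smul, RevAux.D_smul'] at hm
    rw [← mul_assoc, ← mul_inv, hq, inv_mul_le_iff₀ hpos] at hm
    linarith
  have hx0' := hx0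
  rw [hS] at hx0'
  obtain ⟨hx00, hx01⟩ := hx0'
  have hlt : lam2 < 1 := by
    rw [← hlam]
    exact RevAux.gap hθ hsum hnonneg hrow hrev hirr x0 hx00 hx01
  -- eigenvector
  have heig : P *ᵥ x0 = lam2 • x0 := by
    obtain ⟨y, hy⟩ : ∃ y, y = P *ᵥ x0 - lam2 • x0 := ⟨_, rfl⟩
    have hy0 : RevAux.D θ y 1 = 0 := by
      rw [hy, RevAux.D_sub, RevAux.D_smul, RevAux.D_symm hrev, hP1, hx00]; ring
    have hyy : RevAux.D θ y y = RevAux.D θ (P *ᵥ x0) y - lam2 * RevAux.D θ x0 y := by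
      conv_lhs => rw [hy, RevAux.D_sub, ← hy, RevAux.D_smul]
    have hNN := RevAux.D_nonneg hθ y
    have hC := hbound y hy0
    have hall : ∀ t : ℝ, 2 * t * RevAux.D θ y y
        ≤ t ^ 2 * (lam2 * RevAux.D θ y y - RevAux.D θ (P *ᵥ y) y) := by
      intro t
      have := hbound (x0 + t • y) (by rw [RevAux.D_add, RevAux.D_smul, hx00, hy0]; ring)
      simp only [Matrix.mulVec_add, Matrix.mulVec_smul, RevAux.D_add, RevAux.D_add',
        RevAux.D_smul, RevAux.D_smul', hlam, hx01] at this
      rw [RevAux.D_symm hrev y x0, RevAux.D_comm y (P *ᵥ x0), RevAux.D_comm y x0] at this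
      rw [hyy] at *
      linarith
    obtain ⟨C, hCe⟩ : ∃ C, C = lam2 * RevAux.D θ y y - RevAux.D θ (P *ᵥ y) y := ⟨_, rfl⟩
    rw [← hCe] at hall
    have hC0 : 0 ≤ C := by linarith
    have h1 := hall (1 / (C + 1))
    have hN : RevAux.D θ y y = 0 := by
      by_contra hne
      have hpos := lt_of_le_of_ne hNN (Ne.symm hne)
      have h1 := hall (RevAux.D θ y y / (C + 1))
      have hC1 : 0 < C + 1 := by linarith
      obtain ⟨t, ht⟩ : ∃ t, t = RevAux.D θ y y / (C + 1) := ⟨_, rfl⟩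
      have htp : 0 < t := by rw [ht]; positivity
      have e : RevAux.D θ y y = t * (C + 1) := by rw [ht]; field_simp
      rw [← ht, e] at h1
      nlinarith [mul_pos htp htp, mul_nonneg (mul_pos htp htp).le hC0]
    have := RevAux.D_eq_zero hθ hN
    rw [hy] at this
    exact sub_eq_zero.mp this
  have hd : 0 < 1 - lam2 := by linarith
  have hatt : ∃ f g : Fin (n + 2) → ℝ, RevAux.D θ f 1 = 0 ∧
      RevAux.D θ f f = 1 ∧ ((1 : Matrix (Fin (n + 2)) (Fin (n + 2)) ℝ) - P) *ᵥ g = f ∧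
      2 * RevAux.D θ g f - 1 = (1 + lam2) / (1 - lam2) := by
    refine ⟨x0, (1 - lam2)⁻¹ • x0, hx00, hx01, ?_, ?_⟩
    · rw [Matrix.mulVec_smul, Matrix.sub_mulVec, Matrix.one_mulVec, heig]
      funext i
      simp only [Pi.smul_apply, Pi.sub_apply, smul_eq_mul]
      field_simp
    · rw [RevAux.D_smul, hx01]
      field_simp
      ring
  refine ⟨hlt, IsGreatest.csSup_eq ⟨?_, ?_⟩, hatt⟩
  · obtain ⟨f, g, a, b, c, d⟩ := hatt
    exact ⟨f, g, a, b, c, d.symm⟩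
  · rintro v ⟨f, g, hf0, hf1, hg, rfl⟩
    obtain ⟨h, hh⟩ : ∃ h, h = g - (RevAux.D θ g 1) • (1 : Fin (n + 2) → ℝ) := ⟨_, rfl⟩
    have hh0 : RevAux.D θ h 1 = 0 := by
      rw [hh, RevAux.D_sub, RevAux.D_smul, hsum']; ring
    have hhf : RevAux.D θ h f = RevAux.D θ g f := by
      rw [hh, RevAux.D_sub, RevAux.D_smul, RevAux.D_comm 1 f, hf0]; ring
    have hfe : f = h - P *ᵥ h := by
      rw [← hg, hh, Matrix.sub_mulVec, Matrix.one_mulVec, Matrix.mulVec_sub, Matrix.mulVec_smul,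
        hP1]
      abel
    have hb := hbound h hh0
    have ht : RevAux.D θ h f = RevAux.D θ h h - RevAux.D θ (P *ᵥ h) h := by
      conv_lhs => rw [hfe, RevAux.D_sub', RevAux.D_comm h (P *ᵥ h)]
    have hsq := RevAux.D_nonneg hθ (f - (1 - lam2) • h)
    simp only [RevAux.D_sub, RevAux.D_sub', RevAux.D_smul, RevAux.D_smul', hf1] at hsq
    rw [RevAux.D_comm f h] at hsq
    rw [← hhf, le_div_iff₀ hd]
    have hk : (1 - lam2) * ((1 - lam2) * RevAux.D θ h h) ≤ (1 - lam2) * RevAux.D θ h f :=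
      mul_le_mul_of_nonneg_left (by linarith) hd.le
    linarith
end

section
/- Let P ∈ ℝ^{n×n} be an irreducible row-stochastic matrix reversible with respect to θ. Then there exist a θ-mean-zero f ∈ ℝⁿ with ‖f‖_θ = 1 and g ∈ ℝⁿ with (I − P)g = f such that ν(f, P) = 2⟨g, f⟩_θ − 1 ≥ 1 − 2θ₁; i.e., the worst-case asymptotic variance satisfies sup_f ν(f, P) ≥ 1 − 2θ₁. Moreover, if ν(f, P) ≤ 1 − 2θ₁ for every θ-mean-zero f with ‖f‖_θ = 1 (so the lower bound is attained), then the second largest eigenvalue λ₂ = sup{ ⟨Px, x⟩_θ : ⟨x, 𝟙⟩_θ = 0, ‖x‖_θ = 1 } equals −θ₁/(1−θ₁). -/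
open Matrix

section Helpers

variable {N : ℕ} (θ : Fin N → ℝ) (P : Matrix (Fin N) (Fin N) ℝ)

lemma aux_ker (h0 : 0 < N) (hnonneg : ∀ i j, 0 ≤ P i j) (hrow : ∀ i, ∑ j, P i j = 1)
    (hirr : ∀ i j, ∃ m : ℕ, 1 ≤ m ∧ 0 < (P ^ m) i j) (v : Fin N → ℝ)
    (hv : P.mulVec v = v) : ∃ c, ∀ i, v i = c := by
  haveI : Nonempty (Fin N) := ⟨⟨0, h0⟩⟩
  obtain ⟨i, hi⟩ := Finite.exists_max v
  have h1 : ∀ m : ℕ, (P ^ m).mulVec v = v ∧ (P ^ m).mulVec (fun _ => (1 : ℝ)) = (fun _ => 1) ∧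
      ∀ a b, 0 ≤ (P ^ m) a b := by
    intro m
    induction m with
    | zero =>
      refine ⟨by simp, by simp, fun a b => ?_⟩
      rw [pow_zero, Matrix.one_apply]; split_ifs <;> norm_num
    | succ k ih =>
      obtain ⟨ha, hb, hc⟩ := ih
      refine ⟨?_, ?_, fun a b => ?_⟩
      · rw [pow_succ, ← Matrix.mulVec_mulVec, hv, ha]
      · rw [pow_succ, ← Matrix.mulVec_mulVec]
        have : P.mulVec (fun _ => (1 : ℝ)) = fun _ => 1 := by
          ext a; simp [Matrix.mulVec, dotProduct, hrow]
        rw [this, hb]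
      · rw [pow_succ, Matrix.mul_apply]
        exact Finset.sum_nonneg fun c _ => mul_nonneg (hc _ _) (hnonneg _ _)
  refine ⟨v i, fun j => ?_⟩
  obtain ⟨m, _, hm⟩ := hirr i j
  obtain ⟨ha, hb, hc⟩ := h1 m
  have ha' := congrFun ha i
  have hb' := congrFun hb i
  simp only [Matrix.mulVec, dotProduct, mul_one] at ha' hb'
  have hz : ∑ k, (P ^ m) i k * (v i - v k) = 0 := by
    simp only [mul_sub, Finset.sum_sub_distrib, ← Finset.sum_mul]
    rw [ha', hb']; ring
  have := (Finset.sum_eq_zero_iff_of_nonneg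
    (fun k _ => mul_nonneg (hc i k) (sub_nonneg.2 (hi k)))).1 hz j (Finset.mem_univ j)
  rcases mul_eq_zero.1 this with h | h <;> linarith

/-- symmetry -/
lemma aux_symm (hrev : ∀ i j, θ i * P i j = θ j * P j i) (x y : Fin N → ℝ) :
    ∑ i, P.mulVec x i * y i * θ i = ∑ i, P.mulVec y i * x i * θ i := by
  simp only [Matrix.mulVec, dotProduct, Finset.sum_mul]
  rw [Finset.sum_comm]
  refine Finset.sum_congr rfl fun i _ => Finset.sum_congr rfl fun j _ => ?_
  linear_combination (x i * y j) * hrev j i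

lemma aux_mean (hrow : ∀ i, ∑ j, P i j = 1) (hrev : ∀ i j, θ i * P i j = θ j * P j i)
    (x : Fin N → ℝ) : ∑ i, P.mulVec x i * θ i = ∑ i, x i * θ i := by
  have := aux_symm θ P hrev x (fun _ => 1)
  have h1 : P.mulVec (fun _ => (1 : ℝ)) = fun _ => 1 := by
    ext a; simp [Matrix.mulVec, dotProduct, hrow]
  rw [h1] at this
  simpa using this

lemma aux_nonneg (hθ : ∀ i, 0 < θ i) (hnonneg : ∀ i j, 0 ≤ P i j) (hrow : ∀ i, ∑ j, P i j = 1)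
    (hrev : ∀ i j, θ i * P i j = θ j * P j i) (x : Fin N → ℝ) :
    ∑ i, P.mulVec x i * x i * θ i ≤ ∑ i, x i * x i * θ i := by
  have h1 := aux_mean θ P hrow hrev (fun i => x i * x i)
  have h2 : 0 ≤ ∑ i, ∑ j, θ i * P i j * (x i - x j) ^ 2 :=
    Finset.sum_nonneg fun i _ => Finset.sum_nonneg fun j _ =>
      mul_nonneg (mul_nonneg (hθ i).le (hnonneg i j)) (sq_nonneg _)
  have h3 : ∑ i, ∑ j, θ i * P i j * (x i - x j) ^ 2 =
      ∑ i, x i * x i * θ i + ∑ i, P.mulVec (fun i => x i * x i) i * θ i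
        - 2 * ∑ i, P.mulVec x i * x i * θ i := by
    rw [Finset.mul_sum, ← Finset.sum_add_distrib, ← Finset.sum_sub_distrib]
    refine Finset.sum_congr rfl fun i _ => ?_
    have : x i * x i * θ i = ∑ j, P i j * (x i * x i * θ i) := by
      rw [← Finset.sum_mul, hrow, one_mul]
    rw [this]
    simp only [Matrix.mulVec, dotProduct, Finset.sum_mul, Finset.mul_sum]
    rw [← Finset.sum_add_distrib, ← Finset.sum_sub_distrib]
    refine Finset.sum_congr rfl fun j _ => ?_
    ring
  linarith

lemma aux_solve (h0 : 0 < N) (hsum : ∑ i, θ i = 1)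
    (hnonneg : ∀ i j, 0 ≤ P i j) (hrow : ∀ i, ∑ j, P i j = 1)
    (hrev : ∀ i j, θ i * P i j = θ j * P j i)
    (hirr : ∀ i j, ∃ m : ℕ, 1 ≤ m ∧ 0 < (P ^ m) i j) (x : Fin N → ℝ)
    (hx : ∑ i, x i * θ i = 0) :
    ∃ y, ((1 : Matrix (Fin N) (Fin N) ℝ) - P).mulVec y = x := by
  let T : (Fin N → ℝ) →ₗ[ℝ] (Fin N → ℝ) :=
    (1 - P + Matrix.of fun _ j => θ j).mulVecLin
  have hT : ∀ v i, T v i = v i - P.mulVec v i + ∑ j, v j * θ j := by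
    intro v i
    simp only [T, Matrix.mulVecLin_apply, Matrix.add_mulVec, Matrix.sub_mulVec, Matrix.one_mulVec,
      Pi.add_apply, Pi.sub_apply]
    congr 1
    simp [Matrix.mulVec, dotProduct, mul_comm]
  have hTm : ∀ v, ∑ i, T v i * θ i = ∑ j, v j * θ j := by
    intro v
    simp only [hT, add_mul, sub_mul, Finset.sum_add_distrib, Finset.sum_sub_distrib]
    rw [aux_mean θ P hrow hrev, ← Finset.mul_sum, hsum]; ring
  have hinj : Function.Injective T := by
    rw [← LinearMap.ker_eq_bot, LinearMap.ker_eq_bot']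
    intro v hv
    have hm : ∑ j, v j * θ j = 0 := by rw [← hTm, hv]; simp
    have hPv : P.mulVec v = v := by
      ext i
      have := hT v i
      rw [hv, hm] at this
      simp at this
      linarith
    obtain ⟨c, hc⟩ := aux_ker P h0 hnonneg hrow hirr v hPv
    simp only [hc, ← Finset.mul_sum, hsum, mul_one] at hm
    ext i; rw [hc, hm]; rfl
  obtain ⟨y, hy⟩ := LinearMap.injective_iff_surjective.1 hinj x
  refine ⟨y, ?_⟩
  have hm : ∑ j, y j * θ j = 0 := by rw [← hTm, hy, hx]
  ext i
  have := hT y i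
  rw [hy, hm] at this
  rw [this, Matrix.sub_mulVec, Matrix.one_mulVec]; simp

lemma aux_cs_s11 (hθ : ∀ i, 0 < θ i) (hnonneg : ∀ i j, 0 ≤ P i j) (hrow : ∀ i, ∑ j, P i j = 1)
    (hrev : ∀ i j, θ i * P i j = θ j * P j i) (x y : Fin N → ℝ)
    (hx : ∑ i, x i * x i * θ i = 1)
    (hy : ((1 : Matrix (Fin N) (Fin N) ℝ) - P).mulVec y = x) :
    1 ≤ (∑ i, y i * x i * θ i) * (1 - ∑ i, P.mulVec x i * x i * θ i) := by
  have hPy : P.mulVec y = y - x := by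
    rw [← hy, Matrix.sub_mulVec, Matrix.one_mulVec]; simp
  have hs := aux_symm θ P hrev x y
  have key : ∀ t : ℝ, 0 ≤ (∑ i, y i * x i * θ i) * (t * t) + (-2) * t +
      (1 - ∑ i, P.mulVec x i * x i * θ i) := by
    intro t
    have h := aux_nonneg θ P hθ hnonneg hrow hrev (x - t • y)
    rw [Matrix.mulVec_sub, Matrix.mulVec_smul, hPy] at h
    rw [hPy] at hs
    have e1 : ∑ i, (P.mulVec x - t • (y - x)) i * (x - t • y) i * θ i =
        ∑ i, P.mulVec x i * x i * θ i - t * ∑ i, P.mulVec x i * y i * θ i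
        - t * ∑ i, (y - x) i * x i * θ i
        + t ^ 2 * (∑ i, y i * y i * θ i - ∑ i, y i * x i * θ i) := by
      simp only [mul_sub, Finset.mul_sum, ← Finset.sum_add_distrib, ← Finset.sum_sub_distrib]
      refine Finset.sum_congr rfl fun i _ => ?_
      simp only [Pi.sub_apply, Pi.smul_apply, smul_eq_mul]; ring
    have e2 : ∑ i, (x - t • y) i * (x - t • y) i * θ i = ∑ i, x i * x i * θ i
        - 2 * t * ∑ i, y i * x i * θ i + t ^ 2 * ∑ i, y i * y i * θ i := by
      simp only [Finset.mul_sum, ← Finset.sum_add_distrib, ← Finset.sum_sub_distrib]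
      refine Finset.sum_congr rfl fun i _ => ?_
      simp only [Pi.sub_apply, Pi.smul_apply, smul_eq_mul]; ring
    have e3 : ∑ i, (y - x) i * x i * θ i = ∑ i, y i * x i * θ i - ∑ i, x i * x i * θ i := by
      rw [← Finset.sum_sub_distrib]
      refine Finset.sum_congr rfl fun i _ => ?_
      simp only [Pi.sub_apply]; ring
    rw [e1, e2, hs, e3, hx] at h
    nlinarith [h]
  have := discrim_le_zero key
  unfold discrim at this
  linarith

lemma aux_test_s11 (k : Fin N) (hk : 0 < θ k) (hk1 : θ k < 1) (hsum : ∑ i, θ i = 1)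
    (hnonneg : ∀ i j, 0 ≤ P i j) (hrow : ∀ i, ∑ j, P i j = 1)
    (hrev : ∀ i j, θ i * P i j = θ j * P j i) :
    ∃ x : Fin N → ℝ, (∑ i, x i * θ i) = 0 ∧ (∑ i, x i * x i * θ i) = 1 ∧
      -(θ k / (1 - θ k)) ≤ ∑ i, P.mulVec x i * x i * θ i := by
  let u : Fin N → ℝ := fun i => (if i = k then (1 : ℝ) else 0) - θ k
  have hu1 : ∑ i, u i * θ i = 0 := by
    simp [u, sub_mul, Finset.sum_sub_distrib, ← Finset.mul_sum, hsum]
  have hkey : ∀ w : Fin N → ℝ, ∑ i, w i * u i * θ i = w k * θ k - θ k * ∑ i, w i * θ i := by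
    intro w
    have : ∀ i, w i * u i * θ i = (if i = k then (1 : ℝ) else 0) * (w i * θ i) - θ k * (w i * θ i) := by
      intro i; simp only [u]; ring
    simp only [this, Finset.sum_sub_distrib, ← Finset.mul_sum]
    simp
  have hu2 : ∑ i, u i * u i * θ i = θ k * (1 - θ k) := by
    rw [hkey, hu1]; simp [u]; ring
  have hPu : P.mulVec u k = P k k - θ k := by
    simp [u, Matrix.mulVec, dotProduct, mul_sub, Finset.sum_sub_distrib, ← Finset.sum_mul, hrow,
      mul_ite]
  have hu3 : ∑ i, P.mulVec u i * u i * θ i = (P k k - θ k) * θ k := by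
    rw [hkey, aux_mean θ P hrow hrev, hu1, hPu]; ring
  have hpos : 0 < θ k * (1 - θ k) := mul_pos hk (by linarith)
  obtain ⟨c, hc⟩ : ∃ c : ℝ, c * c = (θ k * (1 - θ k))⁻¹ :=
    ⟨√((θ k * (1 - θ k))⁻¹), Real.mul_self_sqrt (inv_pos.2 hpos).le⟩
  refine ⟨c • u, ?_, ?_, ?_⟩
  · simp only [Pi.smul_apply, smul_eq_mul, mul_assoc, ← Finset.mul_sum, hu1, mul_zero]
  · have : ∀ i, (c • u) i * (c • u) i * θ i = (c * c) * (u i * u i * θ i) := by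
      intro i; simp only [Pi.smul_apply, smul_eq_mul]; ring
    simp only [this, ← Finset.mul_sum]
    rw [hu2, hc, inv_mul_cancel₀ hpos.ne']
  · have : ∀ i, P.mulVec (c • u) i * (c • u) i * θ i = (c * c) * (P.mulVec u i * u i * θ i) := by
      intro i; simp only [Matrix.mulVec_smul, Pi.smul_apply, smul_eq_mul]; ring
    simp only [this, ← Finset.mul_sum]
    rw [hu3, hc]
    have h1 : 0 < 1 - θ k := by linarith
    have : (θ k * (1 - θ k))⁻¹ * ((P k k - θ k) * θ k) = P k k / (1 - θ k) - θ k / (1 - θ k) := by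
      field_simp
    rw [this]
    have := div_nonneg (hnonneg k k) h1.le
    linarith

end Helpers

/-- **Lower bound `1 − 2θ₁` on the worst-case asymptotic variance of reversible chains.**
Let `θ` be a probability vector on `n + 2 ≥ 2` states (positive, nondecreasing) and let
`P` be an irreducible row-stochastic matrix reversible w.r.t. `θ`. Then there exist a
`θ`-mean-zero `f` with `‖f‖_θ = 1` and `g` with `(I − P) g = f` such that
`ν(f, P) = 2⟨g, f⟩_θ − 1 ≥ 1 − 2θ₁`. Moreover, if `ν(f, P) ≤ 1 − 2θ₁` for every such
normalized mean-zero `f` (so the lower bound is attained), then the second largest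
eigenvalue `λ₂ = sup { ⟨Px, x⟩_θ : ⟨x,𝟙⟩_θ = 0, ‖x‖_θ = 1 }` equals `−θ₁/(1−θ₁)`. -/
theorem reversible_asymptotic_variance_lower_bound
    (n : ℕ) (θ : Fin (n + 2) → ℝ)
    (hθ1 : 0 < θ 0) (hmono : Monotone θ) (hsum : ∑ i, θ i = 1)
    (P : Matrix (Fin (n + 2)) (Fin (n + 2)) ℝ)
    (hnonneg : ∀ i j, 0 ≤ P i j) (hrow : ∀ i, ∑ j, P i j = 1)
    (hrev : ∀ i j, θ i * P i j = θ j * P j i)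
    (hirr : ∀ i j, ∃ m : ℕ, 1 ≤ m ∧ 0 < (P ^ m) i j) :
    (∃ f g : Fin (n + 2) → ℝ,
      (∑ i, f i * θ i) = 0 ∧ (∑ i, f i * f i * θ i) = 1 ∧
      ((1 : Matrix (Fin (n + 2)) (Fin (n + 2)) ℝ) - P).mulVec g = f ∧
      1 - 2 * θ 0 ≤ 2 * (∑ i, g i * f i * θ i) - 1) ∧
    ((∀ f g : Fin (n + 2) → ℝ,
        (∑ i, f i * θ i) = 0 → (∑ i, f i * f i * θ i) = 1 →
        ((1 : Matrix (Fin (n + 2)) (Fin (n + 2)) ℝ) - P).mulVec g = f →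
        2 * (∑ i, g i * f i * θ i) - 1 ≤ 1 - 2 * θ 0) →
      sSup {r : ℝ | ∃ x : Fin (n + 2) → ℝ,
        (∑ i, x i * θ i) = 0 ∧ (∑ i, x i * x i * θ i) = 1 ∧
        r = ∑ i, P.mulVec x i * x i * θ i} = -(θ 0 / (1 - θ 0))) := by
  have hθ : ∀ i, 0 < θ i := fun i => lt_of_lt_of_le hθ1 (hmono (Fin.zero_le i))
  have hlt : θ 0 < 1 := by
    rw [← hsum, Fin.sum_univ_succ]
    have : 0 < ∑ i : Fin (n + 1), θ i.succ :=
      Finset.sum_pos (fun i _ => hθ _) Finset.univ_nonempty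
    linarith
  have h1 : 0 < 1 - θ 0 := by linarith
  have hq : 1 + θ 0 / (1 - θ 0) = 1 / (1 - θ 0) := by field_simp; ring
  obtain ⟨x, hx0, hx1, hxP⟩ := aux_test_s11 θ P 0 hθ1 hlt hsum hnonneg hrow hrev
  have hsolve := aux_solve θ P (Nat.succ_pos _) hsum hnonneg hrow hrev hirr
  constructor
  · obtain ⟨y, hy⟩ := hsolve x hx0
    refine ⟨x, y, hx0, hx1, hy, ?_⟩
    have hcs := aux_cs_s11 θ P hθ hnonneg hrow hrev x y hx1 hy
    have hE := aux_nonneg θ P hθ hnonneg hrow hrev x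
    rw [hx1] at hE
    set E := 1 - ∑ i, P.mulVec x i * x i * θ i with hEd
    set S := ∑ i, y i * x i * θ i
    have hE0 : 0 ≤ E := by linarith
    have hE1 : E ≤ 1 / (1 - θ 0) := by linarith
    rw [le_div_iff₀ h1] at hE1
    have hS : 0 ≤ S := by
      by_contra hneg
      nlinarith [mul_nonneg (neg_nonneg.2 (not_le.1 hneg).le) hE0]
    nlinarith [mul_le_mul_of_nonneg_left hE1 hS]
  · intro H
    have hub : ∀ r ∈ {r : ℝ | ∃ x : Fin (n + 2) → ℝ,
        (∑ i, x i * θ i) = 0 ∧ (∑ i, x i * x i * θ i) = 1 ∧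
        r = ∑ i, P.mulVec x i * x i * θ i}, r ≤ -(θ 0 / (1 - θ 0)) := by
      rintro r ⟨z, hz0, hz1, rfl⟩
      obtain ⟨y, hy⟩ := hsolve z hz0
      have hcs := aux_cs_s11 θ P hθ hnonneg hrow hrev z y hz1 hy
      have hE := aux_nonneg θ P hθ hnonneg hrow hrev z
      have hH := H z y hz0 hz1 hy
      rw [hz1] at hE
      have : 1 / (1 - θ 0) ≤ 1 - ∑ i, P.mulVec z i * z i * θ i := by
        rw [div_le_iff₀ h1]
        nlinarith
      linarith
    apply le_antisymm
    · exact csSup_le ⟨_, x, hx0, hx1, rfl⟩ hub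
    · exact hxP.trans (le_csSup ⟨_, hub⟩ ⟨x, hx0, hx1, rfl⟩)
end

section
/- Let P ∈ ℝ^{n×n} be an irreducible row-stochastic matrix (not necessarily reversible) with invariant distribution θ. Then there exist a θ-mean-zero f ∈ ℝⁿ with ‖f‖_θ = 1 and g ∈ ℝⁿ with (I − P)g = f such that ⟨g, f⟩_θ ≥ θ_n/(θ₁ + θ_n). Equivalently, the worst-case quantity v(P) = sup{ ⟨g, f⟩_θ : f θ-mean-zero, ‖f‖_θ = 1, (I − P)g = f } satisfies v(P) ≥ θ_n/(θ₁ + θ_n). -/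
open Matrix

lemma aux_min {N : ℕ} (P : Matrix (Fin (N+1)) (Fin (N+1)) ℝ)
    (hnonneg : ∀ i j, 0 ≤ P i j) (hrow : ∀ i, ∑ j, P i j = 1)
    (hirr : ∀ i j, ∃ m : ℕ, 1 ≤ m ∧ 0 < (P ^ m) i j)
    (g : Fin (N+1) → ℝ) (t : Fin (N+1))
    (hg : ∀ x, x ≠ t → ∑ j, P x j * g j ≤ g x) (x : Fin (N+1)) : g t ≤ g x := by
  obtain ⟨x0, hx0⟩ := Finite.exists_min g
  by_contra hcon
  have hlt : g x0 < g t := lt_of_le_of_lt (hx0 x) (not_le.mp hcon)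
  have hpn : ∀ m : ℕ, ∀ i j, 0 ≤ (P ^ m) i j := by
    intro m
    induction m with
    | zero => intro i j; rw [pow_zero, Matrix.one_apply]; split_ifs <;> norm_num
    | succ m ih =>
      intro i j
      rw [pow_succ, Matrix.mul_apply]
      exact Finset.sum_nonneg fun k _ => mul_nonneg (ih i k) (hnonneg k j)
  have key : ∀ m : ℕ, ∀ j, 0 < (P ^ m) x0 j → g j = g x0 := by
    intro m
    induction m with
    | zero =>
      intro j hj
      rw [pow_zero, Matrix.one_apply] at hj
      split_ifs at hj with h
      · rw [h]
      · exact absurd hj (lt_irrefl _)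
    | succ m ih =>
      intro j hj
      rw [pow_succ, Matrix.mul_apply] at hj
      obtain ⟨k, -, hk⟩ := Finset.exists_lt_of_sum_lt (s := Finset.univ)
        (f := fun _ => (0:ℝ)) (g := fun k => (P ^ m) x0 k * P k j) (by simpa using hj)
      have h1 : 0 < (P ^ m) x0 k := by
        rcases (hpn m x0 k).lt_or_eq with h | h
        · exact h
        · rw [← h] at hk; simp at hk
      have h2 : 0 < P k j := by
        rcases (hnonneg k j).lt_or_eq with h | h
        · exact h
        · rw [← h] at hk; simp at hk
      have hgk := ih k h1
      have hkt : k ≠ t := by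
        rintro rfl
        linarith
      have h3 := hg k hkt
      have hs : ∑ j, P k j * (g j - g x0) ≤ 0 := by
        simp only [mul_sub, Finset.sum_sub_distrib, ← Finset.sum_mul, hrow]
        linarith
      have hnn : ∀ i ∈ Finset.univ, 0 ≤ P k i * (g i - g x0) := fun i _ =>
        mul_nonneg (hnonneg k i) (by linarith [hx0 i])
      have h4 := (Finset.sum_eq_zero_iff_of_nonneg hnn).1
        (le_antisymm hs (Finset.sum_nonneg hnn)) j (Finset.mem_univ j)
      rcases mul_eq_zero.1 h4 with h | h
      · linarith
      · linarith
  obtain ⟨m, -, hm⟩ := hirr x0 t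
  have := key m t hm
  linarith

lemma aux_G {N : ℕ} (θ : Fin (N+1) → ℝ) (hsum : ∑ i, θ i = 1)
    (P : Matrix (Fin (N+1)) (Fin (N+1)) ℝ)
    (hrow : ∀ i, ∑ j, P i j = 1)
    (hinv : ∀ j, ∑ i, θ i * P i j = θ j)
    (hker : ∀ g : Fin (N+1) → ℝ, ((1 : Matrix (Fin (N+1)) (Fin (N+1)) ℝ) - P).mulVec g = 0 →
      ∀ i j, g i = g j) :
    ∃ G : (Fin (N+1) → ℝ) →ₗ[ℝ] (Fin (N+1) → ℝ), ∀ f, ∑ i, f i * θ i = 0 →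
      ((1 : Matrix (Fin (N+1)) (Fin (N+1)) ℝ) - P).mulVec (G f) = f := by
  set L := (1 : Matrix (Fin (N+1)) (Fin (N+1)) ℝ) - P with hL
  have hφ : ∀ g, ∑ i, (L.mulVec g) i * θ i = 0 := by
    intro g
    have : ∑ i, (P.mulVec g) i * θ i = ∑ i, g i * θ i := by
      simp only [Matrix.mulVec, dotProduct, Finset.sum_mul]
      rw [Finset.sum_comm]
      refine Finset.sum_congr rfl fun j _ => ?_
      rw [← hinv j, Finset.mul_sum]
      exact Finset.sum_congr rfl fun i _ => by ring
    rw [hL, Matrix.sub_mulVec, Matrix.one_mulVec]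
    simp only [Pi.sub_apply, sub_mul, Finset.sum_sub_distrib]
    linarith
  let T : (Fin (N+1) → ℝ) →ₗ[ℝ] (Fin (N+1) → ℝ) :=
    { toFun := fun g => L.mulVec g + fun _ => ∑ i, g i * θ i
      map_add' := by
        intro a b
        ext k
        simp [Matrix.mulVec_add, add_mul, Finset.sum_add_distrib]
        ring
      map_smul' := by
        intro c a
        ext k
        simp [Matrix.mulVec_smul, mul_assoc, ← Finset.mul_sum, mul_add] }
  have hT : ∀ g, T g = L.mulVec g + fun _ => ∑ i, g i * θ i := fun g => rfl
  have hφT : ∀ g, ∑ i, T g i * θ i = ∑ i, g i * θ i := by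
    intro g
    simp only [hT, Pi.add_apply, add_mul, Finset.sum_add_distrib, ← Finset.mul_sum, hsum, hφ]
    ring
  have hT0 : ∀ g, ∑ i, g i * θ i = 0 → T g = L.mulVec g := by
    intro g hg
    rw [hT]; ext k; simp [hg]
  have hinj : Function.Injective T := by
    rw [← LinearMap.ker_eq_bot, LinearMap.ker_eq_bot']
    intro g hg
    have h1 : ∑ i, g i * θ i = 0 := by rw [← hφT, hg]; simp
    have h2 := hker g (by rw [← hT0 g h1, hg])
    ext k
    have : ∑ i, g i * θ i = g k := by
      rw [← mul_one (g k), ← hsum, Finset.mul_sum]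
      exact Finset.sum_congr rfl fun i _ => by rw [h2 i k]
    rw [← this, h1]; rfl
  let e := LinearEquiv.ofInjectiveEndo T hinj
  have he : ∀ f, T (e.symm f) = f := fun f => e.apply_symm_apply f
  refine ⟨e.symm.toLinearMap, fun f hf => ?_⟩
  have h1 : ∑ i, (e.symm f) i * θ i = 0 := by rw [← hφT, he, hf]
  have := hT0 _ h1
  rw [he] at this
  exact this.symm

/-- **Lower bound `θ_n/(θ₁ + θ_n)` for irreducible (not necessarily reversible) chains.**
Let `θ` be a probability vector on `n + 2 ≥ 2` states (positive, nondecreasing) and let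
`P` be an irreducible row-stochastic matrix with invariant distribution `θ`. Then there
exist a `θ`-mean-zero `f` with `‖f‖_θ = 1` and `g` with `(I − P) g = f` such that
`⟨g, f⟩_θ ≥ θ_n/(θ₁ + θ_n)`; equivalently
`v(P) = sup { ⟨g, f⟩_θ : f mean-zero, ‖f‖_θ = 1, (I − P) g = f } ≥ θ_n/(θ₁ + θ_n)`. -/
theorem irreducible_fundamental_form_lower_bound
    (n : ℕ) (θ : Fin (n + 2) → ℝ)
    (hθ1 : 0 < θ 0) (hmono : Monotone θ) (hsum : ∑ i, θ i = 1)
    (P : Matrix (Fin (n + 2)) (Fin (n + 2)) ℝ)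
    (hnonneg : ∀ i j, 0 ≤ P i j) (hrow : ∀ i, ∑ j, P i j = 1)
    (hinv : ∀ j, ∑ i, θ i * P i j = θ j)
    (hirr : ∀ i j, ∃ m : ℕ, 1 ≤ m ∧ 0 < (P ^ m) i j) :
    (∃ f g : Fin (n + 2) → ℝ,
      (∑ i, f i * θ i) = 0 ∧ (∑ i, f i * f i * θ i) = 1 ∧
      ((1 : Matrix (Fin (n + 2)) (Fin (n + 2)) ℝ) - P).mulVec g = f ∧
      θ (Fin.last (n + 1)) / (θ 0 + θ (Fin.last (n + 1))) ≤ ∑ i, g i * f i * θ i) ∧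
    θ (Fin.last (n + 1)) / (θ 0 + θ (Fin.last (n + 1))) ≤
      sSup {r : ℝ | ∃ f g : Fin (n + 2) → ℝ,
        (∑ i, f i * θ i) = 0 ∧ (∑ i, f i * f i * θ i) = 1 ∧
        ((1 : Matrix (Fin (n + 2)) (Fin (n + 2)) ℝ) - P).mulVec g = f ∧
        r = ∑ i, g i * f i * θ i} := by
  have happ : ∀ g x, (((1 : Matrix (Fin (n + 2)) (Fin (n + 2)) ℝ) - P).mulVec g) x
      = g x - ∑ j, P x j * g j := by
    intro g x
    rw [Matrix.sub_mulVec, Matrix.one_mulVec]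
    rfl
  have hker : ∀ g : Fin (n + 2) → ℝ,
      ((1 : Matrix (Fin (n + 2)) (Fin (n + 2)) ℝ) - P).mulVec g = 0 → ∀ i j, g i = g j := by
    intro g hg
    have h : ∀ t x, g t ≤ g x := fun t x => aux_min P hnonneg hrow hirr g t (fun y _ => by
      have := happ g y
      rw [hg, Pi.zero_apply] at this
      linarith) x
    exact fun i j => le_antisymm (h i j) (h j i)
  obtain ⟨G, hG⟩ := aux_G θ hsum P hrow hinv hker
  have hpos : ∀ i, 0 < θ i := fun i => lt_of_lt_of_le hθ1 (hmono (Fin.zero_le i))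
  have hne : (0 : Fin (n+2)) ≠ Fin.last (n+1) := (Fin.last_pos).ne
  set l := Fin.last (n+1) with hl
  have hlpos := hpos l
  have hA : ∃ f g : Fin (n + 2) → ℝ,
      (∑ i, f i * θ i) = 0 ∧ (∑ i, f i * f i * θ i) = 1 ∧
      ((1 : Matrix (Fin (n + 2)) (Fin (n + 2)) ℝ) - P).mulVec g = f ∧
      θ l / (θ 0 + θ l) ≤ ∑ i, g i * f i * θ i := by
    let f0 : Fin (n+2) → ℝ := fun i => (if i = 0 then 1 / θ 0 else 0) - (if i = l then 1 / θ l else 0)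
    have hf0 : ∀ h : Fin (n+2) → ℝ, ∑ i, h i * f0 i * θ i = h 0 - h l := by
      intro h
      simp only [f0, mul_sub, sub_mul, Finset.sum_sub_distrib, mul_ite, ite_mul, mul_zero, zero_mul,
        Finset.sum_ite_eq', Finset.mem_univ, if_true]
      field_simp
    have hf00 : f0 0 = 1 / θ 0 := by simp [f0, hne]
    have hf0l : f0 l = - (1 / θ l) := by simp [f0, hne.symm]
    have hmz : ∑ i, f0 i * θ i = 0 := by simpa using hf0 (fun _ => 1)
    have hg := hG f0 hmz
    set g := G f0
    have hmin : ∀ x, g l ≤ g x := aux_min P hnonneg hrow hirr g l (fun x hx => by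
      have h1 := happ g x
      rw [hg] at h1
      have h2 : 0 ≤ f0 x := by
        simp only [f0, hx, if_false, sub_zero]
        split_ifs
        · positivity
        · exact le_rfl
      linarith)
    have hdiff : 1 / θ 0 ≤ g 0 - g l := by
      have h1 := happ g 0
      rw [hg, hf00] at h1
      have h2 : g l ≤ ∑ j, P 0 j * g j := by
        calc g l = ∑ j, P 0 j * g l := by rw [← Finset.sum_mul, hrow, one_mul]
          _ ≤ _ := Finset.sum_le_sum fun j _ => mul_le_mul_of_nonneg_left (hmin j) (hnonneg 0 j)
      linarith
    set s : ℝ := 1 / θ 0 + 1 / θ l with hs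
    have hspos : 0 < s := by positivity
    set a : ℝ := 1 / √s with ha
    have haa : a * a = 1 / s := by
      rw [ha, div_mul_div_comm, Real.mul_self_sqrt hspos.le, one_mul]
    refine ⟨a • f0, a • g, ?_, ?_, ?_, ?_⟩
    · simp only [Pi.smul_apply, smul_eq_mul, mul_assoc, ← Finset.mul_sum, hmz, mul_zero]
    · have : ∑ i, (a • f0) i * (a • f0) i * θ i = (a * a) * ∑ i, f0 i * f0 i * θ i := by
        rw [Finset.mul_sum]
        exact Finset.sum_congr rfl fun i _ => by simp only [Pi.smul_apply, smul_eq_mul]; ring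
      rw [this, hf0, hf00, hf0l, haa, sub_neg_eq_add, ← hs]
      field_simp
    · rw [Matrix.mulVec_smul, hg]
    · have : ∑ i, (a • g) i * (a • f0) i * θ i = (a * a) * ∑ i, g i * f0 i * θ i := by
        rw [Finset.mul_sum]
        exact Finset.sum_congr rfl fun i _ => by simp only [Pi.smul_apply, smul_eq_mul]; ring
      rw [this, hf0, haa]
      calc θ l / (θ 0 + θ l) = 1 / s * (1 / θ 0) := by
            rw [hs]; field_simp; ring
        _ ≤ _ := mul_le_mul_of_nonneg_left hdiff (by positivity)
  refine ⟨hA, ?_⟩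
  obtain ⟨f, g, h1, h2, h3, h4⟩ := hA
  refine h4.trans (le_csSup ?_ ⟨f, g, h1, h2, h3, rfl⟩)
  have hcont : Continuous (fun f : Fin (n+2) → ℝ => ∑ i, G f i * f i * θ i) := by
    have hGc : Continuous G := LinearMap.continuous_of_finiteDimensional G
    fun_prop
  have hcomp : IsCompact (Set.Icc (fun _ => -(1 + 1 / θ 0)) (fun _ => 1 + 1 / θ 0) :
    Set (Fin (n+2) → ℝ)) := isCompact_Icc
  refine (hcomp.bddAbove_image hcont.continuousOn).mono ?_
  rintro r ⟨f, g, h1, h2, h3, rfl⟩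
  have hb : ∀ i, |f i| ≤ 1 + 1 / θ 0 := by
    intro i
    have h5 : f i * f i * θ i ≤ 1 := by
      rw [← h2]
      exact Finset.single_le_sum (f := fun i => f i * f i * θ i)
        (fun j _ => mul_nonneg (mul_self_nonneg _) (hpos j).le) (Finset.mem_univ i)
    have h6 : f i * f i * θ 0 ≤ 1 :=
      (mul_le_mul_of_nonneg_left (hmono (Fin.zero_le i)) (mul_self_nonneg _)).trans h5
    have h7 : f i * f i ≤ 1 / θ 0 := by rwa [le_div_iff₀ hθ1]
    have h8 : 0 < 1 / θ 0 := by positivity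
    refine abs_le_of_sq_le_sq ?_ (by positivity)
    nlinarith
  refine ⟨f, ⟨fun i => (abs_le.1 (hb i)).1, fun i => (abs_le.1 (hb i)).2⟩, ?_⟩
  have h5 := hG f h1
  have h6 := hker (g - G f) (by rw [Matrix.mulVec_sub, h3, h5, sub_self])
  have h7 : ∑ i, (g - G f) i * f i * θ i = 0 := by
    have : ∀ i, (g - G f) i * f i * θ i = (g - G f) 0 * (f i * θ i) := fun i => by
      rw [h6 i 0]; ring
    rw [Finset.sum_congr rfl fun i _ => this i, ← Finset.mul_sum, h1, mul_zero]
  simp only [Pi.sub_apply, sub_mul, Finset.sum_sub_distrib] at h7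
  show ∑ i, G f i * f i * θ i = _
  linarith
end

section
/- Let P be the explicit irreversible transition matrix defined from θ. Then: (1) P is irreducible; (2) all entries of P are nonnegative (so, since each row sums to 1 by construction of the last column, P is row-stochastic); (3) θ is an invariant distribution of P, i.e. ∑_{i=1}^n θ_i P_{ij} = θ_j for every j (θ is the leading left eigenvector of P). -/
/-- Off-last-column entries of the explicit irreversible transition matrix built from a
positive nondecreasing vector `θ` on states `1, …, n` (empty products are `1`):
`P_{ij} = 0` for `j < i < n`; `P_{ii} = (θ i − θ 1)/(θ i + θ n)` for `i < n`;
`P_{nj} = (θ j (θ 1 + θ n))/(θ n (θ j + θ n)) ∏_{k=1}^{j−1} (θ n − θ k)/(θ k + θ n)` for `j < n`;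
`P_{ij} = (2 θ j (θ 1 + θ n))/((θ i + θ n)(θ j + θ n)) ∏_{k=i+1}^{j−1} (θ n − θ k)/(θ k + θ n)`
for `i < j < n`. -/
noncomputable def explicitAux (n : ℕ) (θ : ℕ → ℝ) (i j : ℕ) : ℝ :=
  if i = n then
    (θ j * (θ 1 + θ n)) / (θ n * (θ j + θ n)) *
      ∏ k ∈ Finset.Icc 1 (j - 1), (θ n - θ k) / (θ k + θ n)
  else if j < i then 0
  else if j = i then (θ i - θ 1) / (θ i + θ n)
  else (2 * θ j * (θ 1 + θ n)) / ((θ i + θ n) * (θ j + θ n)) *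
      ∏ k ∈ Finset.Icc (i + 1) (j - 1), (θ n - θ k) / (θ k + θ n)

/-- The explicit irreversible transition matrix: the last column is
`P_{in} = 1 − ∑_{k=1}^{n−1} P_{ik}` and the other entries are `explicitAux`. -/
noncomputable def explicitP (n : ℕ) (θ : ℕ → ℝ) (i j : ℕ) : ℝ :=
  if j = n then 1 - ∑ k ∈ Finset.Icc 1 (n - 1), explicitAux n θ i k
  else explicitAux n θ i j

/-- `m`-th power of a matrix indexed by the states `1, …, n`. -/
noncomputable def matPowIcc (n : ℕ) (P : ℕ → ℕ → ℝ) : ℕ → ℕ → ℕ → ℝ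
  | 0, i, j => if i = j then 1 else 0
  | m + 1, i, j => ∑ k ∈ Finset.Icc 1 n, matPowIcc n P m i k * P k j

lemma aux_tele_row (r : ℕ → ℝ) (i m : ℕ) (h : i ≤ m) :
    ∑ j ∈ Finset.Icc (i+1) m, (1 - r j) * ∏ k ∈ Finset.Icc (i+1) (j-1), r k
      = 1 - ∏ k ∈ Finset.Icc (i+1) m, r k := by
  induction m, h using Nat.le_induction with
  | base => simp
  | succ m hm ih =>
    rw [Finset.sum_Icc_succ_top (by omega), Finset.prod_Icc_succ_top (by omega), ih,
      Nat.add_sub_cancel]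
    ring

lemma aux_tele_col (r : ℕ → ℝ) (m : ℕ) :
    ∑ i ∈ Finset.Icc 1 m, (1 - r i) * ∏ k ∈ Finset.Icc (i+1) m, r k
      = 1 - ∏ k ∈ Finset.Icc 1 m, r k := by
  induction m with
  | zero => simp
  | succ m ih =>
    rw [Finset.sum_Icc_succ_top (by omega),
      Finset.prod_Icc_succ_top (a := 1) (b := m) (by omega)]
    have : ∑ i ∈ Finset.Icc 1 m, (1 - r i) * ∏ k ∈ Finset.Icc (i+1) (m+1), r k
        = (∑ i ∈ Finset.Icc 1 m, (1 - r i) * ∏ k ∈ Finset.Icc (i+1) m, r k) * r (m+1) := by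
      rw [Finset.sum_mul]
      refine Finset.sum_congr rfl fun i hi => ?_
      rw [Finset.mem_Icc] at hi
      rw [Finset.prod_Icc_succ_top (by omega)]
      ring
    rw [this, ih]
    simp
    ring

section


/-- ratio -/
noncomputable def rr (n : ℕ) (θ : ℕ → ℝ) (k : ℕ) : ℝ := (θ n - θ k) / (θ k + θ n)

lemma one_sub_rr {n : ℕ} {θ : ℕ → ℝ} {k : ℕ} (h : 0 < θ k + θ n) :
    1 - rr n θ k = 2 * θ k / (θ k + θ n) := by
  unfold rr; field_simp; ring

lemma rr_nonneg {n : ℕ} {θ : ℕ → ℝ} (hpos : ∀ i, 1 ≤ i → i ≤ n → 0 < θ i)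
    (hmono : ∀ i j, 1 ≤ i → i ≤ j → j ≤ n → θ i ≤ θ j) {k : ℕ} (h1 : 1 ≤ k) (h2 : k ≤ n) :
    0 ≤ rr n θ k := by
  have := hpos k h1 h2
  have := hpos n (by omega) le_rfl
  have := hmono k n h1 h2 le_rfl
  exact div_nonneg (by linarith) (by linarith)

lemma prod_rr {n : ℕ} {θ : ℕ → ℝ} (hpos : ∀ i, 1 ≤ i → i ≤ n → 0 < θ i)
    (hmono : ∀ i j, 1 ≤ i → i ≤ j → j ≤ n → θ i ≤ θ j) {a b : ℕ} (h1 : 1 ≤ a) (h2 : b ≤ n) :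
    0 ≤ ∏ k ∈ Finset.Icc a b, rr n θ k := by
  refine Finset.prod_nonneg fun k hk => ?_
  rw [Finset.mem_Icc] at hk
  exact rr_nonneg hpos hmono (by omega) (by omega)

lemma aux_last {n : ℕ} {θ : ℕ → ℝ} (hpos : ∀ i, 1 ≤ i → i ≤ n → 0 < θ i) {j : ℕ}
    (h1 : 1 ≤ j) (h2 : j ≤ n) :
    explicitAux n θ n j = (θ 1 + θ n) / (2 * θ n) *
      ((1 - rr n θ j) * ∏ k ∈ Finset.Icc 1 (j-1), rr n θ k) := by
  have := hpos j h1 h2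
  have := hpos n (by omega) le_rfl
  rw [one_sub_rr (by linarith)]
  simp only [explicitAux, rr, if_true]
  rw [← mul_assoc]
  congr 1
  field_simp

lemma aux_upper {n : ℕ} {θ : ℕ → ℝ} (hpos : ∀ i, 1 ≤ i → i ≤ n → 0 < θ i) {i j : ℕ}
    (h0 : 1 ≤ i) (h1 : i < j) (h2 : j ≤ n) :
    explicitAux n θ i j = (θ 1 + θ n) / (θ i + θ n) *
      ((1 - rr n θ j) * ∏ k ∈ Finset.Icc (i+1) (j-1), rr n θ k) := by
  have := hpos j (by omega) h2
  have := hpos i (by omega) (by omega)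
  have := hpos n (by omega) le_rfl
  rw [one_sub_rr (by linarith)]
  rw [explicitAux, if_neg (by omega), if_neg (by omega), if_neg (by omega)]
  simp only [rr]
  rw [← mul_assoc]
  congr 1
  field_simp

lemma aux_diag {n : ℕ} {θ : ℕ → ℝ} {i : ℕ} (h : i < n) :
    explicitAux n θ i i = (θ i - θ 1) / (θ i + θ n) := by
  rw [explicitAux, if_neg (by omega), if_neg (by omega), if_pos rfl]

lemma aux_lower {n : ℕ} {θ : ℕ → ℝ} {i j : ℕ} (h : i < n) (hj : j < i) :
    explicitAux n θ i j = 0 := by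
  rw [explicitAux, if_neg (by omega), if_pos hj]

lemma row_sum {n : ℕ} {θ : ℕ → ℝ} (hpos : ∀ i, 1 ≤ i → i ≤ n → 0 < θ i) {i m : ℕ}
    (h0 : 1 ≤ i) (h1 : i ≤ m) (h2 : m < n) :
    ∑ k ∈ Finset.Icc 1 m, explicitAux n θ i k = (θ i - θ 1) / (θ i + θ n) +
      (θ 1 + θ n) / (θ i + θ n) * (1 - ∏ k ∈ Finset.Icc (i+1) m, rr n θ k) := by
  induction m, h1 using Nat.le_induction with
  | base =>
    obtain ⟨i, rfl⟩ : ∃ i', i = i' + 1 := ⟨i - 1, by omega⟩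
    rw [Finset.sum_Icc_succ_top (by omega), aux_diag h2, Finset.sum_eq_zero]
    · simp
    · intro k hk
      rw [Finset.mem_Icc] at hk
      exact aux_lower h2 (by omega)
  | succ m hm ih =>
    rw [Finset.sum_Icc_succ_top (by omega), ih (by omega), aux_upper hpos h0 (by omega) (by omega),
      Finset.prod_Icc_succ_top (by omega), Nat.add_sub_cancel]
    ring

lemma row_sum_last {n : ℕ} {θ : ℕ → ℝ} (hpos : ∀ i, 1 ≤ i → i ≤ n → 0 < θ i) :
    ∑ k ∈ Finset.Icc 1 (n-1), explicitAux n θ n k =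
      (θ 1 + θ n) / (2 * θ n) * (1 - ∏ k ∈ Finset.Icc 1 (n-1), rr n θ k) := by
  rw [← aux_tele_row (rr n θ) 0 (n-1) (by omega), Finset.mul_sum]
  refine Finset.sum_congr rfl fun k hk => ?_
  rw [Finset.mem_Icc] at hk
  exact aux_last hpos (by omega) (by omega)

lemma P_last {n : ℕ} {θ : ℕ → ℝ} (hpos : ∀ i, 1 ≤ i → i ≤ n → 0 < θ i) {i : ℕ}
    (h0 : 1 ≤ i) (h1 : i < n) :
    explicitP n θ i n = (θ 1 + θ n) / (θ i + θ n) * ∏ k ∈ Finset.Icc (i+1) (n-1), rr n θ k := by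
  have := hpos i (by omega) (by omega)
  have := hpos n (by omega) le_rfl
  rw [explicitP, if_pos rfl, row_sum hpos h0 (by omega) (by omega)]
  have : (θ i - θ 1) / (θ i + θ n) = 1 - (θ 1 + θ n) / (θ i + θ n) := by
    field_simp; ring
  rw [this]; ring

lemma P_nonneg {n : ℕ} {θ : ℕ → ℝ} (hpos : ∀ i, 1 ≤ i → i ≤ n → 0 < θ i)
    (hmono : ∀ i j, 1 ≤ i → i ≤ j → j ≤ n → θ i ≤ θ j) {i j : ℕ}
    (hi : 1 ≤ i) (hi' : i ≤ n) (hj : 1 ≤ j) (hj' : j ≤ n) : 0 ≤ explicitP n θ i j := by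
  have p1 := hpos 1 (by omega) (by omega)
  have pi := hpos i (by omega) (by omega)
  have pj := hpos j (by omega) (by omega)
  have pn := hpos n (by omega) le_rfl
  have hr : 0 ≤ 1 - rr n θ j := by rw [one_sub_rr (by linarith)]; positivity
  by_cases hjn : j = n
  · subst hjn
    rcases hi'.lt_or_eq with h | h
    · rw [P_last hpos hi h]
      exact mul_nonneg (by positivity) (prod_rr hpos hmono (by omega) (by omega))
    · subst h
      rw [explicitP, if_pos rfl, row_sum_last hpos]
      have h1 : (θ 1 + θ i) / (2 * θ i) ≤ 1 := by
        rw [div_le_one (by positivity)]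
        linarith [hmono 1 i le_rfl hi le_rfl]
      have h2 : (0:ℝ) ≤ (θ 1 + θ i) / (2 * θ i) := by positivity
      have h3 := prod_rr hpos hmono (a := 1) (b := i - 1) le_rfl (by omega)
      nlinarith [mul_nonneg h2 h3]
  · rw [explicitP, if_neg hjn]
    rcases hi'.lt_or_eq with h | h
    · rcases lt_trichotomy i j with g | g | g
      · rw [aux_upper hpos hi g hj']
        exact mul_nonneg (by positivity) (mul_nonneg hr (prod_rr hpos hmono (by omega) (by omega)))
      · subst g
        rw [aux_diag h]
        exact div_nonneg (by linarith [hmono 1 i le_rfl hi hi']) (by positivity)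
      · rw [aux_lower h g]
    · subst h
      rw [aux_last hpos hj hj']
      exact mul_nonneg (by positivity) (mul_nonneg hr (prod_rr hpos hmono (by omega) (by omega)))

lemma P_succ_pos {n : ℕ} {θ : ℕ → ℝ} (hpos : ∀ i, 1 ≤ i → i ≤ n → 0 < θ i) {i : ℕ}
    (hi : 1 ≤ i) (hi' : i < n) : 0 < explicitP n θ i (i+1) := by
  have p1 := hpos 1 (by omega) (by omega)
  have pi := hpos i (by omega) (by omega)
  have pj := hpos (i+1) (by omega) (by omega)
  have pn := hpos n (by omega) le_rfl
  by_cases h : i + 1 = n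
  · have := P_last hpos hi hi'
    rw [h, this, Finset.Icc_eq_empty (by omega)]
    simp; positivity
  · rw [explicitP, if_neg h, aux_upper hpos hi (by omega) (by omega), one_sub_rr (by linarith),
      Finset.Icc_eq_empty (by omega)]
    simp; positivity

lemma P_n_one_pos {n : ℕ} (hn : 2 ≤ n) {θ : ℕ → ℝ} (hpos : ∀ i, 1 ≤ i → i ≤ n → 0 < θ i) :
    0 < explicitP n θ n 1 := by
  have p1 := hpos 1 (by omega) (by omega)
  have pn := hpos n (by omega) le_rfl
  rw [explicitP, if_neg (by omega), aux_last hpos le_rfl (by omega), one_sub_rr (by linarith)]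
  simp; positivity

lemma row_one {n : ℕ} (hn : 2 ≤ n) (θ : ℕ → ℝ) (i : ℕ) :
    ∑ j ∈ Finset.Icc 1 n, explicitP n θ i j = 1 := by
  obtain ⟨n, rfl⟩ : ∃ i', n = i' + 1 := ⟨n - 1, by omega⟩
  rw [Finset.sum_Icc_succ_top (by omega)]
  have : ∑ j ∈ Finset.Icc 1 n, explicitP (n+1) θ i j
      = ∑ j ∈ Finset.Icc 1 n, explicitAux (n+1) θ i j := by
    refine Finset.sum_congr rfl fun k hk => ?_
    rw [Finset.mem_Icc] at hk
    rw [explicitP, if_neg (by omega)]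
  rw [this, explicitP, if_pos rfl, Nat.add_sub_cancel]
  ring

lemma col_partial {n : ℕ} {θ : ℕ → ℝ} (hpos : ∀ i, 1 ≤ i → i ≤ n → 0 < θ i) {j m : ℕ}
    (h0 : 1 ≤ j) (h1 : j ≤ m) (h2 : m < n) :
    ∑ i ∈ Finset.Icc 1 m, θ i * explicitAux n θ i j = θ j * ((θ j - θ 1) / (θ j + θ n)) +
      θ j * (θ 1 + θ n) / (θ j + θ n) * (1 - ∏ k ∈ Finset.Icc 1 (j-1), rr n θ k) := by
  induction m, h1 using Nat.le_induction with
  | base =>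
    obtain ⟨j, rfl⟩ : ∃ i', j = i' + 1 := ⟨j - 1, by omega⟩
    rw [Finset.sum_Icc_succ_top (by omega), aux_diag h2, Nat.add_sub_cancel,
      ← aux_tele_col, Finset.mul_sum, add_comm]
    congr 1
    refine Finset.sum_congr rfl fun i hi => ?_
    rw [Finset.mem_Icc] at hi
    have := hpos i (by omega) (by omega)
    have := hpos (j+1) (by omega) (by omega)
    have := hpos n (by omega) le_rfl
    rw [aux_upper hpos (by omega) (by omega) (by omega), one_sub_rr (by linarith),
      one_sub_rr (by linarith), Nat.add_sub_cancel]
    field_simp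
  | succ m hm ih =>
    rw [Finset.sum_Icc_succ_top (by omega), ih (by omega), aux_lower (by omega) (by omega)]
    ring

lemma col_inv {n : ℕ} {θ : ℕ → ℝ} (hpos : ∀ i, 1 ≤ i → i ≤ n → 0 < θ i) {j : ℕ}
    (h0 : 1 ≤ j) (h1 : j < n) :
    ∑ i ∈ Finset.Icc 1 n, θ i * explicitP n θ i j = θ j := by
  have := hpos j (by omega) (by omega)
  have pn := hpos n (by omega) le_rfl
  simp only [explicitP, if_neg (show j ≠ n by omega)]
  obtain ⟨m, rfl⟩ : ∃ i', n = i' + 1 := ⟨n - 1, by omega⟩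
  rw [Finset.sum_Icc_succ_top (by omega), col_partial hpos h0 (by omega) (by omega),
    aux_last hpos h0 (by omega), one_sub_rr (by linarith)]
  field_simp
  ring

lemma col_inv_last {n : ℕ} (hn : 2 ≤ n) {θ : ℕ → ℝ} (hpos : ∀ i, 1 ≤ i → i ≤ n → 0 < θ i) :
    ∑ i ∈ Finset.Icc 1 n, θ i * explicitP n θ i n = θ n := by
  have h : ∑ j ∈ Finset.Icc 1 n, ∑ i ∈ Finset.Icc 1 n, θ i * explicitP n θ i j
      = ∑ j ∈ Finset.Icc 1 n, θ j := by
    rw [Finset.sum_comm]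
    refine Finset.sum_congr rfl fun i _ => ?_
    rw [← Finset.mul_sum, row_one hn, mul_one]
  obtain ⟨m, rfl⟩ : ∃ i', n = i' + 1 := ⟨n - 1, by omega⟩
  rw [Finset.sum_Icc_succ_top (by omega), Finset.sum_Icc_succ_top (f := θ) (by omega)] at h
  have h2 : ∑ j ∈ Finset.Icc 1 m, ∑ i ∈ Finset.Icc 1 (m+1), θ i * explicitP (m+1) θ i j
      = ∑ j ∈ Finset.Icc 1 m, θ j := by
    refine Finset.sum_congr rfl fun j hj => ?_
    rw [Finset.mem_Icc] at hj
    exact col_inv hpos (by omega) (by omega)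
  rw [h2] at h
  exact add_left_cancel h

end

lemma pow_nonneg' {n : ℕ} {P : ℕ → ℕ → ℝ}
    (hP : ∀ i j, 1 ≤ i → i ≤ n → 1 ≤ j → j ≤ n → 0 ≤ P i j) (m i j : ℕ)
    (hj : 1 ≤ j) (hj' : j ≤ n) : 0 ≤ matPowIcc n P m i j := by
  induction m generalizing j with
  | zero => simp only [matPowIcc]; split_ifs <;> norm_num
  | succ m ih =>
    rw [matPowIcc]
    refine Finset.sum_nonneg fun k hk => ?_
    rw [Finset.mem_Icc] at hk
    exact mul_nonneg (ih k hk.1 hk.2) (hP k j hk.1 hk.2 hj hj')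

lemma pow_step {n : ℕ} {P : ℕ → ℕ → ℝ}
    (hP : ∀ i j, 1 ≤ i → i ≤ n → 1 ≤ j → j ≤ n → 0 ≤ P i j) {m i k j : ℕ}
    (hk : 1 ≤ k) (hk' : k ≤ n) (hj : 1 ≤ j) (hj' : j ≤ n)
    (h1 : 0 < matPowIcc n P m i k) (h2 : 0 < P k j) : 0 < matPowIcc n P (m+1) i j := by
  rw [matPowIcc]
  refine Finset.sum_pos' (fun l hl => ?_) ⟨k, Finset.mem_Icc.2 ⟨hk, hk'⟩, mul_pos h1 h2⟩
  rw [Finset.mem_Icc] at hl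
  exact mul_nonneg (pow_nonneg' hP m i l hl.1 hl.2) (hP l j hl.1 hl.2 hj hj')

lemma pow_walk {n : ℕ} {P : ℕ → ℕ → ℝ}
    (hP : ∀ i j, 1 ≤ i → i ≤ n → 1 ≤ j → j ≤ n → 0 ≤ P i j)
    (hs : ∀ i, 1 ≤ i → i < n → 0 < P i (i+1)) {m i a b : ℕ}
    (ha : 1 ≤ a) (hab : a ≤ b) (hb : b ≤ n) (h : 0 < matPowIcc n P m i a) :
    ∃ m', m ≤ m' ∧ 0 < matPowIcc n P m' i b := by
  induction b, hab using Nat.le_induction with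
  | base => exact ⟨m, le_rfl, h⟩
  | succ b hab ih =>
    obtain ⟨m', h1, h2⟩ := ih (by omega)
    exact ⟨m'+1, by omega, pow_step hP (by omega) (by omega) (by omega) hb h2
      (hs b (by omega) (by omega))⟩

/-- **The explicit irreversible transition matrix is an irreducible stochastic matrix
with invariant distribution `θ`.** For a probability vector `θ` on states `1, …, n`
(`n ≥ 2`, positive, nondecreasing): (1) `explicitP n θ` is irreducible; (2) all its
entries are nonnegative and each row sums to `1` (row-stochastic); (3) `θ` is an
invariant distribution, i.e. `∑_i θ i P_{ij} = θ j` for every `j`. -/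
theorem explicitP_irreducible_stochastic_invariant
    (n : ℕ) (hn : 2 ≤ n) (θ : ℕ → ℝ)
    (hpos : ∀ i, 1 ≤ i → i ≤ n → 0 < θ i)
    (hmono : ∀ i j, 1 ≤ i → i ≤ j → j ≤ n → θ i ≤ θ j)
    (hsum : ∑ i ∈ Finset.Icc 1 n, θ i = 1) :
    (∀ i j, 1 ≤ i → i ≤ n → 1 ≤ j → j ≤ n →
      ∃ m : ℕ, 1 ≤ m ∧ 0 < matPowIcc n (explicitP n θ) m i j) ∧
    (∀ i j, 1 ≤ i → i ≤ n → 1 ≤ j → j ≤ n → 0 ≤ explicitP n θ i j) ∧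
    (∀ i, 1 ≤ i → i ≤ n → ∑ j ∈ Finset.Icc 1 n, explicitP n θ i j = 1) ∧
    (∀ j, 1 ≤ j → j ≤ n → ∑ i ∈ Finset.Icc 1 n, θ i * explicitP n θ i j = θ j) := by
  have hP : ∀ i j, 1 ≤ i → i ≤ n → 1 ≤ j → j ≤ n → 0 ≤ explicitP n θ i j :=
    fun i j h1 h2 h3 h4 => P_nonneg hpos hmono h1 h2 h3 h4
  have hs : ∀ i, 1 ≤ i → i < n → 0 < explicitP n θ i (i+1) :=
    fun i h1 h2 => P_succ_pos hpos h1 h2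
  refine ⟨?_, hP, fun i _ _ => row_one hn θ i, ?_⟩
  · intro i j hi hi' hj hj'
    have h0 : 0 < matPowIcc n (explicitP n θ) 0 i i := by simp [matPowIcc]
    obtain ⟨m, -, h1⟩ := pow_walk hP hs hi hi' le_rfl h0
    have h2 := pow_step hP (by omega) le_rfl le_rfl (by omega) h1 (P_n_one_pos hn hpos)
    obtain ⟨m', hm', h3⟩ := pow_walk hP hs le_rfl hj hj' h2
    exact ⟨m', by omega, h3⟩
  · intro j hj hj'
    rcases hj'.lt_or_eq with h | h
    · exact col_inv hpos hj h
    · subst h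
      exact col_inv_last hn hpos
end

section
/- Let P be the explicit irreversible transition matrix defined from θ. Then for all indices 1 ≤ i ≤ j < n: 1 − ∑_{k=1}^{j} P_{ik} = ((θ_1 + θ_n)/(θ_i + θ_n)) · ∏_{k=i+1}^{j} (θ_n − θ_k)/(θ_n + θ_k). In particular, 1 − P_{ii} = (θ_1 + θ_n)/(θ_i + θ_n) for every i < n. -/
/-- **Partial row sums of the explicit irreversible transition matrix.**
For all `1 ≤ i ≤ j < n`,
`1 − ∑_{k=1}^{j} P_{ik} = ((θ 1 + θ n)/(θ i + θ n)) ∏_{k=i+1}^{j} (θ n − θ k)/(θ n + θ k)`;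
in particular `1 − P_{ii} = (θ 1 + θ n)/(θ i + θ n)` for every `i < n`. -/
theorem explicitP_partial_row_sums
    (n : ℕ) (hn : 2 ≤ n) (θ : ℕ → ℝ)
    (hpos : ∀ i, 1 ≤ i → i ≤ n → 0 < θ i)
    (hmono : ∀ i j, 1 ≤ i → i ≤ j → j ≤ n → θ i ≤ θ j)
    (hsum : ∑ i ∈ Finset.Icc 1 n, θ i = 1) :
    (∀ i j, 1 ≤ i → i ≤ j → j < n →
      1 - ∑ k ∈ Finset.Icc 1 j, explicitP n θ i k =
        ((θ 1 + θ n) / (θ i + θ n)) *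
          ∏ k ∈ Finset.Icc (i + 1) j, (θ n - θ k) / (θ n + θ k)) ∧
    (∀ i, 1 ≤ i → i < n →
      1 - explicitP n θ i i = (θ 1 + θ n) / (θ i + θ n)) := by
  have diag : ∀ i, 1 ≤ i → i < n →
      1 - explicitP n θ i i = (θ 1 + θ n) / (θ i + θ n) := by
    intro i hi hin
    have h1 := hpos i hi hin.le
    have h2 := hpos n (by omega) le_rfl
    have h3 : θ i + θ n ≠ 0 := by positivity
    simp only [explicitP, explicitAux, hin.ne, if_false, lt_irrefl, if_true]
    field_simp
    ring
  refine ⟨?_, diag⟩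
  intro i j hi hij
  induction j, hij using Nat.le_induction with
  | base =>
    intro hin
    have hz : ∑ k ∈ Finset.Icc 1 i, explicitP n θ i k = explicitP n θ i i := by
      apply Finset.sum_eq_single_of_mem i (Finset.mem_Icc.2 ⟨hi, le_rfl⟩)
      intro b hb hne
      have hb' := Finset.mem_Icc.1 hb
      have hlt : b < i := by omega
      have hbn : b ≠ n := by omega
      simp only [explicitP, explicitAux, hin.ne, hbn, hlt, if_false, if_true]
    rw [hz, diag i hi hin]
    simp
  | succ j hij ih =>
    intro hjn
    have ih' := ih (by omega)
    rw [Finset.sum_Icc_succ_top (by omega), Finset.prod_Icc_succ_top (by omega), ← sub_sub, ih']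
    have h1 := hpos i hi (by omega)
    have h2 := hpos n (by omega) le_rfl
    have h4 := hpos (j+1) (by omega) hjn.le
    have h3 : θ i + θ n ≠ 0 := by positivity
    have h5 : θ (j+1) + θ n ≠ 0 := by positivity
    have a1 : i ≠ n := by omega
    have a2 : ¬ (j + 1 < i) := by omega
    have a3 : j + 1 ≠ i := by omega
    simp only [explicitP, explicitAux, hjn.ne, a1, a2, a3, if_false, Nat.add_sub_cancel]
    simp only [add_comm (θ n)]
    generalize ∏ k ∈ Finset.Icc (i + 1) j, (θ n - θ k) / (θ k + θ n) = Q
    field_simp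
    ring
end

section
/- Let P be the explicit irreversible transition matrix defined from θ. Then for all indices 1 ≤ i < j < n: θ_n P_{nj} + ∑_{k=1}^{i} θ_k P_{kj} = (θ_j (θ_1 + θ_n)/(θ_j + θ_n)) · ∏_{k=i+1}^{j−1} (θ_n − θ_k)/(θ_n + θ_k). -/
/-- **Partial column sums of the explicit irreversible transition matrix.**
For all `1 ≤ i < j < n`,
`θ n P_{nj} + ∑_{k=1}^{i} θ k P_{kj}
  = (θ j (θ 1 + θ n)/(θ j + θ n)) ∏_{k=i+1}^{j−1} (θ n − θ k)/(θ n + θ k)`. -/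
theorem explicitP_partial_column_sums
    (n : ℕ) (hn : 2 ≤ n) (θ : ℕ → ℝ)
    (hpos : ∀ i, 1 ≤ i → i ≤ n → 0 < θ i)
    (hmono : ∀ i j, 1 ≤ i → i ≤ j → j ≤ n → θ i ≤ θ j)
    (hsum : ∑ i ∈ Finset.Icc 1 n, θ i = 1) :
    ∀ i j, 1 ≤ i → i < j → j < n →
      θ n * explicitP n θ n j + ∑ k ∈ Finset.Icc 1 i, θ k * explicitP n θ k j =
        (θ j * (θ 1 + θ n) / (θ j + θ n)) *
          ∏ k ∈ Finset.Icc (i + 1) (j - 1), (θ n - θ k) / (θ n + θ k) := by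
  have key : ∀ j, 1 ≤ j → j < n → ∀ i, i < j →
      θ n * explicitP n θ n j + ∑ k ∈ Finset.Icc 1 i, θ k * explicitP n θ k j =
        (θ j * (θ 1 + θ n) / (θ j + θ n)) *
          ∏ k ∈ Finset.Icc (i + 1) (j - 1), (θ n - θ k) / (θ k + θ n) := by
    intro j hj hjn i
    have hθn := hpos n (by omega) le_rfl
    have hθj := hpos j hj hjn.le
    induction i with
    | zero =>
      intro _
      have hne : j ≠ n := by omega
      simp only [explicitP, explicitAux, if_neg hne, if_true]
      simp only [zero_add, Finset.Icc_eq_empty (show ¬ (1 : ℕ) ≤ 0 by omega),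
        Finset.sum_empty, add_zero]
      rw [← mul_assoc]
      congr 1
      field_simp
    | succ i ih =>
      intro hij
      have hθi := hpos (i + 1) (by omega) (by omega)
      rw [Finset.sum_Icc_succ_top (by omega), ← add_assoc, ih (by omega)]
      have h1 : Finset.Icc (i + 1) (j - 1) = insert (i + 1) (Finset.Icc (i + 1 + 1) (j - 1)) := by
        ext x
        simp only [Finset.mem_insert, Finset.mem_Icc]
        omega
      rw [h1, Finset.prod_insert (by simp)]
      have a1 : j ≠ n := by omega
      have a2 : i + 1 ≠ n := by omega
      have a3 : ¬ j < i + 1 := by omega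
      have a4 : j ≠ i + 1 := by omega
      simp only [explicitP, explicitAux, if_neg a1, if_neg a2, if_neg a3, if_neg a4]
      generalize ∏ k ∈ Finset.Icc (i + 1 + 1) (j - 1), (θ n - θ k) / (θ k + θ n) = Q
      field_simp
      ring
  intro i j hi hij hjn
  rw [key j (by omega) hjn i hij]
  congr 1
  refine Finset.prod_congr rfl fun k _ => ?_
  rw [add_comm (θ k)]
end

section
/- Let P be the explicit irreversible transition matrix defined from θ. Then for every θ-mean-zero f ∈ ℝⁿ and every g ∈ ℝⁿ with (I − P)g = f, one has ⟨g, f⟩_θ = (θ_n/(θ_1 + θ_n)) · ⟨f, f⟩_θ. -/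
noncomputable def auxS (m : ℕ) (θ h : ℕ → ℝ) (i : ℕ) : ℝ :=
  ∑ j ∈ Finset.Ico (i + 1) (m + 1), (θ j * (θ 1 + θ (m + 1)) * h j / (θ j + θ (m + 1))) *
    ∏ k ∈ Finset.Ico (i + 1) j, (θ (m + 1) - θ k) / (θ k + θ (m + 1))

theorem auxS_last (m : ℕ) (θ h : ℕ → ℝ) : auxS m θ h m = 0 := by
  simp [auxS]

theorem auxS_step (m : ℕ) (θ h : ℕ → ℝ) (i : ℕ) (hi : i < m) :
    auxS m θ h i = θ (i + 1) * (θ 1 + θ (m + 1)) * h (i + 1) / (θ (i + 1) + θ (m + 1)) +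
      (θ (m + 1) - θ (i + 1)) / (θ (i + 1) + θ (m + 1)) * auxS m θ h (i + 1) := by
  unfold auxS
  rw [Finset.sum_eq_sum_Ico_succ_bot (by omega : i + 1 < m + 1)]
  rw [Finset.Ico_self, Finset.prod_empty, mul_one, Finset.mul_sum]
  congr 1
  apply Finset.sum_congr rfl
  intro j hj
  rw [Finset.mem_Ico] at hj
  rw [Finset.prod_eq_prod_Ico_succ_bot (by omega : i + 1 < j)]
  ring

theorem sum_Icc_shift (F : ℕ → ℝ) (m : ℕ) :
    ∑ i ∈ Finset.Icc 1 m, F i = ∑ i ∈ Finset.range m, F (i + 1) := by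
  induction m with
  | zero => simp
  | succ k ih => rw [Finset.sum_Icc_succ_top (by omega), Finset.sum_range_succ, ih]

theorem row_aux (m : ℕ) (θ h : ℕ → ℝ) (i : ℕ) (h1 : 1 ≤ i) (hi : i < m + 1) :
    ∑ j ∈ Finset.Icc 1 m, explicitAux (m + 1) θ i j * h j =
      (θ i - θ 1) / (θ i + θ (m + 1)) * h i + 2 / (θ i + θ (m + 1)) * auxS m θ h i := by
  have e : Finset.Icc 1 m = Finset.Ico 1 (m + 1) := by
    ext x; simp only [Finset.mem_Icc, Finset.mem_Ico]; omega
  rw [e, ← Finset.sum_Ico_consecutive _ h1 hi.le, Finset.sum_eq_sum_Ico_succ_bot hi]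
  have z : ∑ j ∈ Finset.Ico 1 i, explicitAux (m + 1) θ i j * h j = 0 := by
    apply Finset.sum_eq_zero
    intro j hj
    rw [Finset.mem_Ico] at hj
    simp [explicitAux, hi.ne, hj.2]
  rw [z, zero_add]
  congr 1
  · simp [explicitAux, hi.ne]
  · unfold auxS
    rw [Finset.mul_sum]
    apply Finset.sum_congr rfl
    intro j hj
    rw [Finset.mem_Ico] at hj
    have e2 : Finset.Icc (i + 1) (j - 1) = Finset.Ico (i + 1) j := by
      ext x; simp only [Finset.mem_Icc, Finset.mem_Ico]; omega
    rw [explicitAux, if_neg hi.ne, if_neg (by omega), if_neg (by omega), e2]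
    simp only [div_eq_mul_inv, mul_inv]
    ring

/-- **The fundamental quadratic form of the explicit matrix on mean-zero vectors.**
Let `P = explicitP n θ`. For every `θ`-mean-zero `f` and every `g` with
`(I − P) g = f` (on the states `1, …, n`), one has
`⟨g, f⟩_θ = (θ n/(θ 1 + θ n)) ⟨f, f⟩_θ`, where `⟨x, y⟩_θ = ∑_{i=1}^n x i * y i * θ i`. -/
theorem explicitP_fundamental_form_eq
    (n : ℕ) (hn : 2 ≤ n) (θ : ℕ → ℝ)
    (hpos : ∀ i, 1 ≤ i → i ≤ n → 0 < θ i)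
    (hmono : ∀ i j, 1 ≤ i → i ≤ j → j ≤ n → θ i ≤ θ j)
    (hsum : ∑ i ∈ Finset.Icc 1 n, θ i = 1) :
    ∀ f g : ℕ → ℝ,
      (∑ i ∈ Finset.Icc 1 n, f i * θ i) = 0 →
      (∀ i, 1 ≤ i → i ≤ n →
        g i - ∑ j ∈ Finset.Icc 1 n, explicitP n θ i j * g j = f i) →
      ∑ i ∈ Finset.Icc 1 n, g i * f i * θ i =
        (θ n / (θ 1 + θ n)) * ∑ i ∈ Finset.Icc 1 n, f i * f i * θ i := by
  intro f g hf hg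
  obtain ⟨m, rfl⟩ : ∃ m, n = m + 1 := ⟨n - 1, by omega⟩
  set h : ℕ → ℝ := fun i => g i - g (m + 1) with hh
  have ht := hpos (m + 1) (by omega) le_rfl
  have hs : 0 < θ 1 + θ (m + 1) := add_pos (hpos 1 le_rfl (by omega)) ht
  have row : ∀ i, i < m → (θ 1 + θ (m + 1)) * h (i + 1) =
      (θ (i + 1) + θ (m + 1)) * f (i + 1) + 2 * auxS m θ h (i + 1) := by
    intro i hi
    have r := hg (i + 1) (by omega) (by omega)
    rw [Finset.sum_Icc_succ_top (by omega)] at r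
    have e1 : ∑ j ∈ Finset.Icc 1 m, explicitP (m + 1) θ (i + 1) j * g j =
        ∑ j ∈ Finset.Icc 1 m, explicitAux (m + 1) θ (i + 1) j * g j := by
      apply Finset.sum_congr rfl
      intro j hj
      rw [Finset.mem_Icc] at hj
      rw [explicitP, if_neg (by omega)]
    have e2 := row_aux m θ h (i + 1) (by omega) (by omega)
    have e3 : ∑ j ∈ Finset.Icc 1 m, explicitAux (m + 1) θ (i + 1) j * h j =
        ∑ j ∈ Finset.Icc 1 m, explicitAux (m + 1) θ (i + 1) j * g j -
        (∑ j ∈ Finset.Icc 1 m, explicitAux (m + 1) θ (i + 1) j) * g (m + 1) := by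
      rw [Finset.sum_mul, ← Finset.sum_sub_distrib]
      apply Finset.sum_congr rfl
      intro j _
      simp only [hh]; ring
    have e4 : explicitP (m + 1) θ (i + 1) (m + 1) =
        1 - ∑ j ∈ Finset.Icc 1 m, explicitAux (m + 1) θ (i + 1) j := by
      rw [explicitP, if_pos rfl, Nat.add_sub_cancel]
    rw [e1, e4] at r
    have hi0 : h (i + 1) = g (i + 1) - g (m + 1) := rfl
    have e5 : h (i + 1) - ((θ (i + 1) - θ 1) / (θ (i + 1) + θ (m + 1)) * h (i + 1) +
        2 / (θ (i + 1) + θ (m + 1)) * auxS m θ h (i + 1)) = f (i + 1) := by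
      rw [← e2, e3, hi0]; linarith
    have hd : θ (i + 1) + θ (m + 1) ≠ 0 :=
      (add_pos (hpos (i + 1) (by omega) (by omega)) ht).ne'
    rw [← e5]
    field_simp
    ring
  have stp : ∀ i, i < m → auxS m θ h i = θ (i + 1) * f (i + 1) + auxS m θ h (i + 1) := by
    intro i hi
    have hd : θ (i + 1) + θ (m + 1) ≠ 0 :=
      (add_pos (hpos (i + 1) (by omega) (by omega)) ht).ne'
    rw [auxS_step m θ h i hi, mul_assoc, row i hi]
    field_simp
    ring
  have s0 : ∑ i ∈ Finset.range m, f (i + 1) * θ (i + 1) = auxS m θ h 0 := by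
    rw [← sub_zero (auxS m θ h 0), ← auxS_last m θ h, ← Finset.sum_range_sub']
    apply Finset.sum_congr rfl
    intro i hi
    rw [stp i (Finset.mem_range.1 hi)]; ring
  have s1 : ∑ i ∈ Finset.range m, (θ 1 + θ (m + 1)) * (h (i + 1) * f (i + 1) * θ (i + 1)) =
      θ (m + 1) * ∑ i ∈ Finset.range m, f (i + 1) * f (i + 1) * θ (i + 1) + auxS m θ h 0 ^ 2 := by
    have : auxS m θ h 0 ^ 2 =
        ∑ i ∈ Finset.range m, (auxS m θ h i ^ 2 - auxS m θ h (i + 1) ^ 2) := by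
      rw [Finset.sum_range_sub' (fun i => auxS m θ h i ^ 2), auxS_last]; ring
    rw [this, Finset.mul_sum, ← Finset.sum_add_distrib]
    apply Finset.sum_congr rfl
    intro i hi
    have hi := Finset.mem_range.1 hi
    rw [stp i hi]
    linear_combination (f (i + 1) * θ (i + 1)) * row i hi
  have s2 : ∑ i ∈ Finset.Icc 1 (m + 1), g i * f i * θ i =
      ∑ i ∈ Finset.range m, h (i + 1) * f (i + 1) * θ (i + 1) := by
    have : ∑ i ∈ Finset.Icc 1 (m + 1), g i * f i * θ i =
        ∑ i ∈ Finset.Icc 1 (m + 1), h i * f i * θ i +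
          g (m + 1) * ∑ i ∈ Finset.Icc 1 (m + 1), f i * θ i := by
      rw [Finset.mul_sum, ← Finset.sum_add_distrib]
      apply Finset.sum_congr rfl
      intro i _
      simp only [hh]; ring
    rw [this, hf, sum_Icc_shift, Finset.sum_range_succ]
    simp [hh]
  rw [sum_Icc_shift, Finset.sum_range_succ, s0] at hf
  rw [← Finset.mul_sum] at s1
  rw [s2, sum_Icc_shift, Finset.sum_range_succ, div_mul_eq_mul_div, eq_div_iff hs.ne']
  have hS : auxS m θ h 0 = - (f (m + 1) * θ (m + 1)) := by linarith
  rw [hS] at s1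
  linear_combination s1
end

section
/- Let n ≥ 3, let P be the explicit irreversible transition matrix defined from θ ∈ ℝⁿ, and fix k with 1 < k < n. Let θ' ∈ ℝ^{n−1} be the vector obtained from θ by deleting its k-th coordinate (θ' is still positive and nondecreasing; the defining formula of the explicit matrix is homogeneous of degree 0 in θ, so it applies to θ' without renormalization). Define the matrix Q with rows and columns indexed by {1, …, n} \ {k} by Q_{ij} = P_{ij} + P_{ik} P_{kj} / (1 − P_{kk}) (note that P_{kk} < 1). Then Q coincides with the explicit irreversible transition matrix defined from θ'; that is, the chain obtained by ignoring state k has a transition matrix of the same explicit form. -/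
theorem xIcc (a j : ℕ) (hj : 1 ≤ j) : Finset.Icc a (j - 1) = Finset.Ico a j := by
  ext x; simp only [Finset.mem_Icc, Finset.mem_Ico]; omega

theorem xsplit {M : Type*} [CommMonoid M] (f : ℕ → M) (a k m : ℕ) (h1 : a ≤ k) (h2 : k ≤ m) :
    ∏ x ∈ Finset.Ico a m, (if x < k then f x else f (x + 1)) =
      (∏ x ∈ Finset.Ico a k, f x) * ∏ x ∈ Finset.Ico (k + 1) (m + 1), f x := by
  rw [← Finset.prod_Ico_consecutive _ h1 h2, ← Finset.prod_Ico_add' f k m 1]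
  congr 1
  · apply Finset.prod_congr rfl
    intro x hx
    rw [if_pos (Finset.mem_Ico.1 hx).2]
  · apply Finset.prod_congr rfl
    intro x hx
    rw [if_neg (by have := (Finset.mem_Ico.1 hx).1; omega)]

theorem xsplit' {M : Type*} [CommMonoid M] (f : ℕ → M) (a k m : ℕ) (h1 : a ≤ k) (h2 : k < m) :
    ∏ x ∈ Finset.Ico a m, f x =
      (∏ x ∈ Finset.Ico a k, f x) * (f k * ∏ x ∈ Finset.Ico (k + 1) m, f x) := by
  rw [← Finset.prod_Ico_consecutive _ h1 h2.le, Finset.prod_eq_prod_Ico_succ_bot h2]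

theorem xsum (f : ℕ → ℝ) (a k m : ℕ) (h1 : a ≤ k) (h2 : k ≤ m) :
    ∑ x ∈ Finset.Ico a (m + 1), f x =
      f k + ∑ x ∈ Finset.Ico a m, f (if x < k then x else x + 1) := by
  have e : ∑ x ∈ Finset.Ico a m, f (if x < k then x else x + 1) =
      ∑ x ∈ Finset.Ico a k, f x + ∑ x ∈ Finset.Ico (k + 1) (m + 1), f x := by
    have := xsplit (M := Multiplicative ℝ) (fun x => Multiplicative.ofAdd (f x)) a k m h1 h2
    simp only [← apply_ite f, ← apply_ite (fun x => Multiplicative.ofAdd (f x))] at this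
    exact this
  rw [e, ← Finset.sum_Ico_consecutive f h1 (show k ≤ m + 1 by omega),
    Finset.sum_eq_sum_Ico_succ_bot (show k < m + 1 by omega)]
  ring

theorem xaux (n : ℕ) (θ : ℕ → ℝ)
    (hpos : ∀ i, 1 ≤ i → i ≤ n → 0 < θ i)
    (k : ℕ) (hk1 : 1 < k) (hkn : k < n) (i j : ℕ) (hi : 1 ≤ i) (hi' : i ≤ n - 1)
    (hj : 1 ≤ j) (hj' : j < n - 1) :
    explicitAux n θ (if i < k then i else i + 1) (if j < k then j else j + 1) +
        explicitAux n θ (if i < k then i else i + 1) k *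
          explicitAux n θ k (if j < k then j else j + 1) / (1 - explicitAux n θ k k) =
      explicitAux (n - 1) (fun m => if m < k then θ m else θ (m + 1)) i j := by
  obtain ⟨N, rfl⟩ : ∃ N, n = N + 1 := ⟨n - 1, by omega⟩
  simp only [Nat.add_sub_cancel] at *
  have pn := hpos (N + 1) (by omega) le_rfl
  have p1 := hpos 1 le_rfl (by omega)
  have pk := hpos k (by omega) (by omega)
  have hkk : 1 - explicitAux (N + 1) θ k k = (θ 1 + θ (N + 1)) / (θ k + θ (N + 1)) := by
    unfold explicitAux
    rw [if_neg (by omega), if_neg (by omega), if_pos rfl]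
    field_simp; ring
  rw [hkk]
  set f : ℕ → ℝ := fun x => (θ (N + 1) - θ x) / (θ x + θ (N + 1)) with hf
  have hf' : ∀ x, (θ (N + 1) - (if x < k then θ x else θ (x + 1))) /
      ((if x < k then θ x else θ (x + 1)) + θ (N + 1)) = if x < k then f x else f (x + 1) := by
    intro x; simp only [hf]; split_ifs <;> rfl
  have hfk : f k = (θ (N + 1) - θ k) / (θ k + θ (N + 1)) := rfl
  have hNk : ¬ N < k := by omega
  by_cases hjk : j < k
  · have hz : explicitAux (N + 1) θ k j = 0 := by
      unfold explicitAux
      rw [if_neg (by omega), if_pos hjk]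
    have pr : ∀ a, ∏ x ∈ Finset.Icc a (j - 1), (if x < k then f x else f (x + 1)) =
        ∏ x ∈ Finset.Icc a (j - 1), f x := by
      intro a
      apply Finset.prod_congr rfl
      intro x hx
      rw [if_pos (by have := (Finset.mem_Icc.1 hx).2; omega)]
    simp only [hjk, if_true, hz, mul_zero, zero_div, add_zero]
    unfold explicitAux
    simp only [hjk, if_true, hk1, hNk, if_false, hf', pr]
    by_cases hik : i < k
    · have a1 : i ≠ N + 1 := by omega
      have a2 : i ≠ N := by omega
      simp only [hik, if_true, a1, a2, if_false]
      rfl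
    · by_cases hiN : i = N
      · subst hiN
        simp only [hNk, if_false, if_true]
        rfl
      · have a1 : i + 1 ≠ N + 1 := by omega
        have a3 : j < i + 1 := by omega
        have a4 : j < i := by omega
        simp only [hik, if_false, a1, hiN, a3, a4, if_true]
  · have pj := hpos (j + 1) (by omega) (by omega)
    have hkj : explicitAux (N + 1) θ k (j + 1) =
        (2 * θ (j + 1) * (θ 1 + θ (N + 1))) / ((θ k + θ (N + 1)) * (θ (j + 1) + θ (N + 1))) *
        ∏ x ∈ Finset.Ico (k + 1) (j + 1), f x := by
      unfold explicitAux
      rw [if_neg (by omega), if_neg (by omega), if_neg (by omega), xIcc _ _ (by omega)]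
    simp only [hjk, if_false, hkj]
    by_cases hik : i < k
    · have pi := hpos i (by omega) (by omega)
      have a1 : i ≠ N + 1 := by omega
      have a2 : i ≠ N := by omega
      have a3 : ¬ j + 1 < i := by omega
      have a4 : j + 1 ≠ i := by omega
      have a5 : ¬ k < i := by omega
      have a6 : k ≠ i := by omega
      have a7 : ¬ j < i := by omega
      have a8 : j ≠ i := by omega
      unfold explicitAux
      simp only [hik, if_true, a1, a2, a3, a4, a5, a6, a7, a8, if_false, hjk, hk1, hNk, hf']
      rw [xIcc _ _ hj, xIcc _ (j + 1) (by omega), xIcc _ k (by omega),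
        xsplit f _ k j (by omega) (by omega), xsplit' f _ k (j + 1) (by omega) (by omega), hfk]
      generalize ∏ x ∈ Finset.Ico (k + 1) (j + 1), f x = B
      change _ + _ * (∏ x ∈ Finset.Ico (i + 1) k, f x) * _ / _ = _
      generalize ∏ x ∈ Finset.Ico (i + 1) k, f x = A
      field_simp
      ring
    · by_cases hiN : i = N
      · subst hiN
        unfold explicitAux
        simp only [if_true, if_false, hjk, hk1, hNk, hf']
        rw [xIcc _ _ hj, xIcc _ (j + 1) (by omega), xIcc _ k (by omega),
          xsplit f _ k j (by omega) (by omega), xsplit' f _ k (j + 1) (by omega) (by omega), hfk]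
        generalize ∏ x ∈ Finset.Ico (k + 1) (j + 1), f x = B
        change _ + _ * (∏ x ∈ Finset.Ico 1 k, f x) * _ / _ = _
        generalize ∏ x ∈ Finset.Ico 1 k, f x = A
        field_simp
        ring
      · have hz : explicitAux (N + 1) θ (i + 1) k = 0 := by
          unfold explicitAux
          rw [if_neg (by omega), if_pos (by omega)]
        simp only [hik, if_false, hz, zero_mul, zero_div, add_zero]
        unfold explicitAux
        have a1 : i + 1 ≠ N + 1 := by omega
        have pr : ∏ x ∈ Finset.Ico (i + 1) j, (if x < k then f x else f (x + 1)) =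
            ∏ x ∈ Finset.Ico (i + 1 + 1) (j + 1), f x := by
          rw [← Finset.prod_Ico_add' f (i + 1) j 1]
          apply Finset.prod_congr rfl
          intro x hx
          rw [if_neg (by have := (Finset.mem_Ico.1 hx).1; omega)]
        simp only [a1, hiN, hik, hjk, hk1, hNk, if_true, if_false, hf', xIcc _ _ hj, pr,
          xIcc _ (j + 1) (Nat.succ_le_succ (Nat.zero_le j)), Nat.add_lt_add_iff_right,
          Nat.add_right_cancel_iff]
        rfl

/-- **Ignoring a state of the explicit irreversible chain gives the explicit chain of
the reduced score vector.** Let `n ≥ 3`, let `P = explicitP n θ` be the explicit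
irreversible transition matrix built from the probability vector `θ` on states
`1, …, n`, and fix `1 < k < n`. Let `θ'` be obtained from `θ` by deleting the `k`-th
coordinate, i.e. `θ' i = θ i` for `i < k` and `θ' i = θ (i+1)` for `i ≥ k` (the
explicit-matrix formula is homogeneous of degree 0 in `θ`, so it applies to `θ'`
without renormalization). Then `P_{kk} < 1`, and the transition matrix
`Q_{ij} = P_{ij} + P_{ik} P_{kj} / (1 − P_{kk})` of the chain obtained by ignoring
state `k` (indices identified via `ι m = m` for `m < k` and `ι m = m + 1` for
`m ≥ k`) coincides with `explicitP (n−1) θ'`. -/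
theorem explicitP_ignoring_state
    (n : ℕ) (hn : 3 ≤ n) (θ : ℕ → ℝ)
    (hpos : ∀ i, 1 ≤ i → i ≤ n → 0 < θ i)
    (hmono : ∀ i j, 1 ≤ i → i ≤ j → j ≤ n → θ i ≤ θ j)
    (hsum : ∑ i ∈ Finset.Icc 1 n, θ i = 1)
    (k : ℕ) (hk1 : 1 < k) (hkn : k < n) :
    explicitP n θ k k < 1 ∧
    (∀ i j, 1 ≤ i → i ≤ n - 1 → 1 ≤ j → j ≤ n - 1 →
      explicitP n θ (if i < k then i else i + 1) (if j < k then j else j + 1) +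
        explicitP n θ (if i < k then i else i + 1) k *
          explicitP n θ k (if j < k then j else j + 1) / (1 - explicitP n θ k k) =
      explicitP (n - 1) (fun m => if m < k then θ m else θ (m + 1)) i j) := by
  have A := xaux n θ hpos k hk1 hkn
  obtain ⟨N, rfl⟩ : ∃ N, n = N + 1 := ⟨n - 1, by omega⟩
  simp only [Nat.add_sub_cancel] at *
  have pn := hpos (N + 1) (by omega) le_rfl
  have p1 := hpos 1 le_rfl (by omega)
  have pk := hpos k (by omega) (by omega)
  have hkk : explicitAux (N + 1) θ k k < 1 := by
    unfold explicitAux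
    rw [if_neg (by omega), if_neg (by omega), if_pos rfl, div_lt_one (by linarith)]
    linarith
  have ek : ∀ i, explicitP (N + 1) θ i k = explicitAux (N + 1) θ i k := by
    intro i; unfold explicitP; rw [if_neg (by omega)]
  refine ⟨by rw [ek]; exact hkk, ?_⟩
  intro i j hi hi' hj hj'
  rw [ek, ek]
  by_cases hjN : j = N
  · subst hjN
    have hne : ¬ j < k := by omega
    have S : ∀ r, explicitP (j + 1) θ r (j + 1) = 1 - (explicitAux (j + 1) θ r k +
        ∑ x ∈ Finset.Ico 1 j, explicitAux (j + 1) θ r (if x < k then x else x + 1)) := by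
      intro r
      unfold explicitP
      rw [if_pos rfl, xIcc _ _ (by omega)]
      congr 1
      obtain ⟨M, rfl⟩ : ∃ M, j = M + 1 := ⟨j - 1, by omega⟩
      exact xsum _ 1 k (M + 1) (by omega) (by omega)
    simp only [hne, if_false]
    rw [S, S]
    unfold explicitP
    rw [if_pos rfl, xIcc _ _ hj]
    have T : ∑ x ∈ Finset.Ico 1 j,
        explicitAux j (fun m => if m < k then θ m else θ (m + 1)) i x =
        ∑ x ∈ Finset.Ico 1 j, explicitAux (j + 1) θ (if i < k then i else i + 1)
          (if x < k then x else x + 1) +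
        explicitAux (j + 1) θ (if i < k then i else i + 1) k *
          (∑ x ∈ Finset.Ico 1 j, explicitAux (j + 1) θ k (if x < k then x else x + 1)) /
          (1 - explicitAux (j + 1) θ k k) := by
      rw [Finset.mul_sum, Finset.sum_div, ← Finset.sum_add_distrib]
      apply Finset.sum_congr rfl
      intro x hx
      rw [Finset.mem_Ico] at hx
      exact (A i x hi hi' hx.1 hx.2).symm
    rw [T]
    have h0 : 1 - explicitAux (j + 1) θ k k ≠ 0 := by linarith
    field_simp
    ring
  · have e1 : ∀ r, explicitP (N + 1) θ r (if j < k then j else j + 1) =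
        explicitAux (N + 1) θ r (if j < k then j else j + 1) := by
      intro r; unfold explicitP; rw [if_neg (by split_ifs <;> omega)]
    rw [e1, e1, A i j hi hi' hj (by omega)]
    unfold explicitP
    rw [if_neg hjN]
end
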